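/- Let K be a number field and fix α > 1. Then for x ≥ 2, Σ_{p prime ideal of O_K, N(p) ≥ x} N(p)^{−α} = 1/((α−1) x^{α−1} log x) + O(1/(x^{α−1}(log x)²)), where the implied constant depends only on α and K. -/

import Mathlib

open Filter Topology
open scoped BigOperators

noncomputable section

section Lat1
namespace PIT
open MeasureTheory Module

lemma measurable_floor {E ι : Type*} [NormedAddCommGroup E] [NormedSpace ℝ E] [FiniteDimensional ℝ E]
    [MeasurableSpace E] [BorelSpace E] [Fintype ι] (b : Basis ι ℝ E) :
    Measurable (fun m : E => ((ZSpan.floor b m : Submodule.span ℤ (Set.range b)) : E)) := by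
  have h : (fun m : E => ((ZSpan.floor b m : Submodule.span ℤ (Set.range b)) : E))
      = fun m => ∑ i, (⌊b.repr m i⌋ : ℝ) • b i := by
    funext m
    apply b.repr.injective
    ext i
    rw [ZSpan.repr_floor_apply]
    exact (congrFun (b.repr_sum_self fun i => (⌊b.repr m i⌋ : ℝ)) i).symm
  rw [h]
  refine Finset.measurable_sum _ fun i _ => ?_
  have h1 : Measurable (fun m : E => b.repr m i) := by
    have : Continuous (b.coord i) := LinearMap.continuous_of_finiteDimensional _
    exact this.measurable
  have h2 : Measurable (fun m : E => (⌊b.repr m i⌋ : ℝ)) :=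
    (measurable_from_top (f := fun z : ℤ => (z : ℝ))).comp h1.floor
  exact h2.smul_const (b i)

/-- Lattice sum of a Lipschitz compactly supported function. -/
theorem lattice_sum {E ι : Type*} [NormedAddCommGroup E] [NormedSpace ℝ E] [FiniteDimensional ℝ E]
    [MeasurableSpace E] [BorelSpace E] [Fintype ι] (μ : Measure E) [μ.IsAddHaarMeasure]
    (b : Basis ι ℝ E) (f : E → ℝ) (C R : ℝ)
    (hf : ∀ x y, |f x - f y| ≤ C * ‖x - y‖) (hR : ∀ x, R < ‖x‖ → f x = 0) :
    ∃ C' : ℝ, ∀ t : ℝ, 1 ≤ t →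
      |∑' a : Submodule.span ℤ (Set.range b), f (t⁻¹ • (a : E)) -
        t ^ finrank ℝ E * ((∫ x, f x ∂μ) / μ.real (ZSpan.fundamentalDomain b))|
        ≤ C' * (t ^ finrank ℝ E / t) := by
  classical
  have hC : ∀ x y, |f x - f y| ≤ |C| * ‖x - y‖ := fun x y =>
    (hf x y).trans (by gcongr; exact le_abs_self C)
  have hcont : Continuous f := by
    have : LipschitzWith (Real.toNNReal |C|) f := by
      refine LipschitzWith.of_dist_le_mul fun x y => ?_
      rw [Real.dist_eq, dist_eq_norm, Real.coe_toNNReal _ (abs_nonneg C)]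
      exact hC x y
    exact this.continuous
  set B : ℝ := ∑ i, ‖b i‖ with hB
  have hB0 : 0 ≤ B := Finset.sum_nonneg fun _ _ => norm_nonneg _
  set V : ℝ := μ.real (ZSpan.fundamentalDomain b) with hV
  have hVpos : 0 < V := by
    rw [hV, measureReal_def]
    refine ENNReal.toReal_pos (ZSpan.measure_fundamentalDomain_ne_zero b) ?_
    exact (ZSpan.fundamentalDomain_isBounded b).measure_lt_top.ne
  set R' : ℝ := |R| + B + 1 with hR'
  refine ⟨|C| * B * μ.real (Metric.closedBall (0:E) R') / V, fun t ht => ?_⟩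
  have ht0 : 0 < t := by linarith
  set φ : E → ℝ := fun y => f (t⁻¹ • ((ZSpan.floor b y : Submodule.span ℤ (Set.range b)) : E)) with hφ
  set g : E → ℝ := fun y => f (t⁻¹ • y) with hg
  have hfl : ∀ y : E, ‖y - ((ZSpan.floor b y : Submodule.span ℤ (Set.range b)) : E)‖ ≤ B := fun y => by
    have := ZSpan.norm_fract_le b y
    rwa [ZSpan.fract_apply] at this
  -- supports
  have hsup : ∀ y : E, y ∉ Metric.closedBall (0:E) (R' * t) → φ y = 0 ∧ g y = 0 := by
    intro y hy
    have hy' : R' * t < ‖y‖ := by simpa using hy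
    have h1 : R * t ≤ |R| * t := by gcongr; exact le_abs_self R
    have e1 : R' * t = |R| * t + B * t + t := by rw [hR']; ring
    have hBt : B ≤ B * t := le_mul_of_one_le_right hB0 ht
    have hn : ∀ z : E, R * t < ‖z‖ → f (t⁻¹ • z) = 0 := by
      intro z hz
      apply hR
      rw [norm_smul, norm_inv, Real.norm_of_nonneg ht0.le, inv_mul_eq_div, lt_div_iff₀ ht0]
      exact hz
    constructor
    · apply hn
      have := norm_sub_norm_le y ((ZSpan.floor b y : Submodule.span ℤ (Set.range b)) : E)
      have := hfl y
      linarith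
    · apply hn
      nlinarith
  have hdiff : ∀ y : E, |φ y - g y| ≤ (Metric.closedBall (0:E) (R' * t)).indicator (fun _ => |C| * B / t) y := by
    intro y
    by_cases hy : y ∈ Metric.closedBall (0:E) (R' * t)
    · rw [Set.indicator_of_mem hy]
      refine (hC _ _).trans ?_
      rw [← smul_sub, norm_smul, norm_inv, Real.norm_of_nonneg ht0.le, norm_sub_rev, mul_div_assoc]
      gcongr
      rw [inv_mul_eq_div]
      gcongr
      exact hfl y
    · rw [Set.indicator_of_notMem hy, (hsup y hy).1, (hsup y hy).2]; simp
  have hφm : AEStronglyMeasurable φ μ := by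
    have : Measurable φ := hcont.measurable.comp ((measurable_floor b).const_smul t⁻¹)
    exact this.aestronglyMeasurable
  have hgc : Continuous g := hcont.comp (continuous_const_smul _)
  have hgi : Integrable g μ := by
    refine hgc.integrable_of_hasCompactSupport ?_
    refine HasCompactSupport.intro (isCompact_closedBall (0:E) (R' * t)) fun y hy => (hsup y hy).2
  have hballfin : μ (Metric.closedBall (0:E) (R' * t)) ≠ ⊤ := measure_closedBall_lt_top.ne
  have hindi : Integrable ((Metric.closedBall (0:E) (R' * t)).indicator (fun _ => |C| * B / t)) μ := by
    rw [integrable_indicator_iff Metric.isClosed_closedBall.measurableSet]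
    exact integrableOn_const hballfin
  have hdi : Integrable (fun y => φ y - g y) μ := by
    refine hindi.mono' (hφm.sub hgi.aestronglyMeasurable) (Eventually.of_forall fun y => ?_)
    rw [Real.norm_eq_abs]; exact hdiff y
  have hφi : Integrable φ μ := by
    have := hdi.add hgi
    refine this.congr (Eventually.of_forall fun y => ?_)
    simp
  have hIntg : ∫ y, φ y ∂μ = V * ∑' a : Submodule.span ℤ (Set.range b), f (t⁻¹ • (a : E)) := by
    have : VAddInvariantMeasure (Submodule.span ℤ (Set.range b)) E μ :=
      ⟨fun c s _ => measure_preimage_add μ (c : E) s⟩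
    have hF := (ZSpan.isAddFundamentalDomain b μ)
    rw [hF.integral_eq_tsum'' φ hφi, ← tsum_mul_left]
    refine tsum_congr fun a => ?_
    have : ∀ x ∈ ZSpan.fundamentalDomain b, φ (a +ᵥ x) = f (t⁻¹ • (a:E)) := by
      intro x hx
      have hxx : ZSpan.fract b x = x := ZSpan.fract_eq_self.mpr hx
      have h2 : ZSpan.fract b ((a:E) + x) = ZSpan.fract b x := ZSpan.fract_zSpan_add b x a.2
      have h3 : (a:E) + x - ((ZSpan.floor b ((a:E) + x) : Submodule.span ℤ (Set.range b)) : E) = x := by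
        rw [← ZSpan.fract_apply, h2, hxx]
      have h4 : ((ZSpan.floor b ((a:E) + x) : Submodule.span ℤ (Set.range b)) : E) = a := by
        have h5 := sub_eq_iff_eq_add.mp h3
        rw [add_comm x] at h5
        exact (add_right_cancel h5).symm
      simp only [hφ]
      congr 2
    rw [setIntegral_congr_fun (ZSpan.fundamentalDomain_measurableSet b) this]
    simp [hV]
  have hgint : ∫ y, g y ∂μ = t ^ finrank ℝ E * ∫ x, f x ∂μ := by
    rw [hg, Measure.integral_comp_inv_smul, smul_eq_mul, abs_of_pos (by positivity)]
  have hball : μ.real (Metric.closedBall (0:E) (R' * t)) = t ^ finrank ℝ E * μ.real (Metric.closedBall (0:E) R') := by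
    rw [measureReal_def, measureReal_def, mul_comm R' t]
    rw [Measure.addHaar_closedBall_mul μ (0:E) ht0.le (by positivity : 0 ≤ R')]
    rw [ENNReal.toReal_mul, ENNReal.toReal_ofReal (by positivity)]
  have key : |V * ∑' a : Submodule.span ℤ (Set.range b), f (t⁻¹ • (a : E)) - t ^ finrank ℝ E * ∫ x, f x ∂μ|
      ≤ |C| * B / t * (t ^ finrank ℝ E * μ.real (Metric.closedBall (0:E) R')) := by
    rw [← hIntg, ← hgint, ← integral_sub hφi hgi]
    refine (abs_integral_le_integral_abs).trans ?_
    refine (integral_mono hdi.abs hindi hdiff).trans ?_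
    rw [integral_indicator Metric.isClosed_closedBall.measurableSet, setIntegral_const, smul_eq_mul, hball,
      mul_comm]
  have e : ∑' a : Submodule.span ℤ (Set.range b), f (t⁻¹ • (a : E)) -
        t ^ finrank ℝ E * ((∫ x, f x ∂μ) / V) = (V * ∑' a : Submodule.span ℤ (Set.range b), f (t⁻¹ • (a : E)) - t ^ finrank ℝ E * ∫ x, f x ∂μ) / V := by
    field_simp
  rw [e, abs_div, abs_of_pos hVpos, div_le_iff₀ hVpos]
  refine key.trans (le_of_eq ?_)
  field_simp

end PIT
end Lat1

section Lat2
open scoped BigOperators Classical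
namespace PIT
open MeasureTheory Module NumberField NumberField.mixedEmbedding NumberField.Units
  NumberField.Units.dirichletUnitTheorem NumberField.InfinitePlace

def tent (z : ℝ) : ℝ := max 0 (1 - |z|)

lemma tent_nonneg (z : ℝ) : 0 ≤ tent z := le_max_left _ _
lemma tent_le_one (z : ℝ) : tent z ≤ 1 := max_le zero_le_one (by linarith [abs_nonneg z])
lemma tent_lip (z w : ℝ) : |tent z - tent w| ≤ |z - w| := by
  unfold tent
  refine (abs_max_sub_max_le_max _ _ _ _).trans ?_
  rw [sub_self, abs_zero]
  refine max_le (abs_nonneg _) ?_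
  have : 1 - |z| - (1 - |w|) = |w| - |z| := by ring
  rw [this, abs_sub_comm z w]
  exact abs_abs_sub_abs_le _ _
lemma tent_ne_zero {z : ℝ} (h : tent z ≠ 0) : |z| ≤ 1 := by
  by_contra hz
  push Not at hz
  exact h (max_eq_left (by linarith))

lemma prod_diff_le {ι : Type*} (s : Finset ι) (f g : ι → ℝ) (hf : ∀ i, 0 ≤ f i ∧ f i ≤ 1)
    (hg : ∀ i, 0 ≤ g i ∧ g i ≤ 1) :
    |∏ i ∈ s, f i - ∏ i ∈ s, g i| ≤ ∑ i ∈ s, |f i - g i| := by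
  classical
  induction s using Finset.induction_on with
  | empty => simp
  | insert a s ha ih =>
    rw [Finset.prod_insert ha, Finset.prod_insert ha, Finset.sum_insert ha]
    have e : f a * ∏ i ∈ s, f i - g a * ∏ i ∈ s, g i
      = (f a - g a) * ∏ i ∈ s, f i + g a * (∏ i ∈ s, f i - ∏ i ∈ s, g i) := by ring
    rw [e]
    refine (abs_add_le _ _).trans ?_
    rw [abs_mul, abs_mul]
    have h1 : |∏ i ∈ s, f i| ≤ 1 := by
      rw [Finset.abs_prod]
      exact Finset.prod_le_one (fun _ _ => abs_nonneg _) fun i _ => by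
        rw [abs_of_nonneg (hf i).1]; exact (hf i).2
    have h2 : |g a| ≤ 1 := by rw [abs_of_nonneg (hg a).1]; exact (hg a).2
    have h3 := mul_le_mul_of_nonneg_left h1 (abs_nonneg (f a - g a))
    have h4 := mul_le_mul_of_nonneg_right h2 (abs_nonneg (∏ i ∈ s, f i - ∏ i ∈ s, g i))
    linarith

/-- cut-off in the norm variable -/
def qf (a : ℝ) : ℝ := a * max 0 (1 - a)

lemma qf_nonneg {a : ℝ} (ha : 0 ≤ a) : 0 ≤ qf a := mul_nonneg ha (le_max_left _ _)
lemma qf_le {a : ℝ} (ha : 0 ≤ a) : qf a ≤ a := by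
  unfold qf
  exact mul_le_of_le_one_right ha (max_le zero_le_one (by linarith))
lemma qf_ne_zero {a : ℝ} (h : qf a ≠ 0) : a ≠ 0 ∧ a ≤ 1 := by
  unfold qf at h
  refine ⟨left_ne_zero_of_mul h, ?_⟩
  by_contra h1
  push Not at h1
  exact (right_ne_zero_of_mul h) (max_eq_left (by linarith))
lemma qf_lip {a b : ℝ} (ha : 0 ≤ a) (hb : 0 ≤ b) : |qf a - qf b| ≤ |a - b| := by
  unfold qf
  rcases le_total a 1 with h1 | h1 <;> rcases le_total b 1 with h2 | h2
  · rw [max_eq_right (by linarith), max_eq_right (by linarith)]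
    have : a * (1 - a) - b * (1 - b) = (a - b) * (1 - a - b) := by ring
    rw [this, abs_mul]
    refine mul_le_of_le_one_right (abs_nonneg _) ?_
    rw [abs_le]; constructor <;> linarith
  · rw [max_eq_right (by linarith), max_eq_left (by linarith), abs_le]
    rw [abs_sub_comm, abs_of_nonneg (by linarith : 0 ≤ b - a)]
    constructor <;> nlinarith
  · rw [max_eq_left (by linarith), max_eq_right (by linarith), abs_le]
    rw [abs_of_nonneg (by linarith : 0 ≤ a - b)]
    constructor <;> nlinarith
  · rw [max_eq_left (by linarith), max_eq_left (by linarith)]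
    simp

variable (K : Type*) [Field K] [NumberField K]

def uBasis : Basis (Fin (rank K)) ℝ (logSpace K) :=
  (basisUnitLattice K).ofZLatticeBasis ℝ (unitLattice K)

variable {K}

def psi (h : logSpace K) : ℝ := ∏ i, tent ((uBasis K).repr h i)

lemma psi_nonneg (h : logSpace K) : 0 ≤ psi h := Finset.prod_nonneg fun _ _ => tent_nonneg _
lemma psi_le_one (h : logSpace K) : psi h ≤ 1 :=
  Finset.prod_le_one (fun _ _ => tent_nonneg _) fun _ _ => tent_le_one _

lemma psi_lip : ∃ A : ℝ, 0 ≤ A ∧ ∀ h h' : logSpace K, |psi h - psi h'| ≤ A * ‖h - h'‖ := by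
  refine ⟨∑ i, ‖LinearMap.toContinuousLinearMap ((uBasis K).coord i)‖,
    Finset.sum_nonneg fun _ _ => norm_nonneg _, fun h h' => ?_⟩
  refine (prod_diff_le _ _ _ (fun i => ⟨tent_nonneg _, tent_le_one _⟩)
    (fun i => ⟨tent_nonneg _, tent_le_one _⟩)).trans ?_
  rw [Finset.sum_mul]
  refine Finset.sum_le_sum fun i _ => (tent_lip _ _).trans ?_
  have := (LinearMap.toContinuousLinearMap ((uBasis K).coord i)).le_opNorm (h - h')
  simpa using this

lemma psi_supp : ∃ A : ℝ, 0 ≤ A ∧ ∀ h : logSpace K, psi h ≠ 0 → ‖h‖ ≤ A := by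
  refine ⟨∑ i, ‖uBasis K i‖, Finset.sum_nonneg fun _ _ => norm_nonneg _, fun h hh => ?_⟩
  have h1 : ∀ i, |(uBasis K).repr h i| ≤ 1 := fun i =>
    tent_ne_zero (Finset.prod_ne_zero_iff.mp hh i (Finset.mem_univ i))
  rw [← (uBasis K).sum_repr h]
  refine (norm_sum_le _ _).trans (Finset.sum_le_sum fun i _ => ?_)
  rw [_root_.norm_smul, Real.norm_eq_abs]
  exact mul_le_of_le_one_left (norm_nonneg _) (h1 i)

def ff (x : mixedSpace K) : ℝ := psi (logMap x) * qf (mixedEmbedding.norm x)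

lemma ff_nonneg (x : mixedSpace K) : 0 ≤ ff x :=
  mul_nonneg (psi_nonneg _) (qf_nonneg (mixedEmbedding.norm_nonneg x))

lemma ff_le (x : mixedSpace K) : ff x ≤ mixedEmbedding.norm x :=
  (mul_le_of_le_one_left (qf_nonneg (mixedEmbedding.norm_nonneg x)) (psi_le_one _)).trans
    (qf_le (mixedEmbedding.norm_nonneg x))

lemma normAtPlace_sub_le (w : InfinitePlace K) (x y : mixedSpace K) :
    |normAtPlace w x - normAtPlace w y| ≤ ‖x - y‖ := by
  have hle : ∀ z : mixedSpace K, normAtPlace w z ≤ ‖z‖ := fun z => by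
    rw [norm_eq_sup'_normAtPlace]
    exact Finset.le_sup' (fun w => normAtPlace w z) (Finset.mem_univ w)
  rw [abs_le]
  constructor
  · have h1 := normAtPlace_add_le w x (-(x - y))
    rw [normAtPlace_neg] at h1
    have e : x + -(x - y) = y := by abel
    rw [e] at h1
    linarith [hle (x - y)]
  · have h1 := normAtPlace_add_le w y (x - y)
    have e : y + (x - y) = x := by abel
    rw [e] at h1
    linarith [hle (x - y)]

lemma log_norm_eq {x : mixedSpace K} (hx : mixedEmbedding.norm x ≠ 0) :
    Real.log (mixedEmbedding.norm x) = ∑ w, (mult w : ℝ) * Real.log (normAtPlace w x) := by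
  rw [mixedEmbedding.norm_apply, Real.log_prod]
  · simp
  · intro w _
    exact pow_ne_zero _ (mixedEmbedding.norm_ne_zero_iff.mp hx w)

lemma mult_sum : ∑ w : InfinitePlace K, (mult w : ℝ) = finrank ℚ K := by
  rw [← Nat.cast_sum, sum_mult_eq]

/-- On the support of `psi ∘ logMap`, all the absolute values are comparable. -/
lemma log_comparable : ∃ A : ℝ, 0 ≤ A ∧ ∀ x : mixedSpace K, mixedEmbedding.norm x ≠ 0 →
    psi (logMap x) ≠ 0 → ∀ w, |Real.log (normAtPlace w x) -
      Real.log (mixedEmbedding.norm x) * (finrank ℚ K : ℝ)⁻¹| ≤ A := by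
  classical
  obtain ⟨A, hA0, hA⟩ := psi_supp (K := K)
  refine ⟨A + Fintype.card (InfinitePlace K) * A, by positivity, fun x hx hpsi w => ?_⟩
  have hl := hA _ hpsi
  set d : InfinitePlace K → ℝ := fun w => Real.log (normAtPlace w x) -
      Real.log (mixedEmbedding.norm x) * (finrank ℚ K : ℝ)⁻¹ with hd
  have hmult : ∀ w : InfinitePlace K, (1:ℝ) ≤ mult w := fun w => by exact_mod_cast mult_pos
  have hw : ∀ w, w ≠ w₀ → |mult w * d w| ≤ A := by
    intro w hw
    have := (norm_le_pi_norm (logMap x) ⟨w, hw⟩).trans hl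
    rwa [logMap_apply, Real.norm_eq_abs] at this
  have hdw : ∀ w, |d w| ≤ |mult w * d w| := fun w => by
    rw [abs_mul]
    refine le_mul_of_one_le_left (abs_nonneg _) ?_
    rw [abs_of_nonneg (by positivity)]; exact hmult w
  have hcA : 0 ≤ (Fintype.card (InfinitePlace K) : ℝ) * A := by positivity
  by_cases h : w = w₀
  · have hsum : ∑ w, (mult w : ℝ) * d w = 0 := by
      simp only [hd, mul_sub, Finset.sum_sub_distrib, ← Finset.sum_mul]
      rw [← log_norm_eq hx, mult_sum]
      have : (finrank ℚ K : ℝ) ≠ 0 := Nat.cast_ne_zero.mpr finrank_pos.ne'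
      field_simp
      simp
    rw [← Finset.add_sum_erase _ _ (Finset.mem_univ w)] at hsum
    have h3 : |(mult w : ℝ) * d w| ≤ Fintype.card (InfinitePlace K) * A := by
      rw [eq_neg_of_add_eq_zero_left hsum, abs_neg]
      refine (Finset.abs_sum_le_sum_abs _ _).trans ?_
      refine (Finset.sum_le_card_nsmul _ _ A fun v hv => ?_).trans ?_
      · exact hw v (by rw [← h]; exact Finset.ne_of_mem_erase hv)
      · rw [nsmul_eq_mul]
        gcongr
        exact Finset.card_le_univ _
    linarith [hdw w]
  · linarith [hdw w, hw w h]

lemma ff_ne_zero {x : mixedSpace K} (h : ff x ≠ 0) :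
    mixedEmbedding.norm x ≠ 0 ∧ mixedEmbedding.norm x ≤ 1 ∧ psi (logMap x) ≠ 0 :=
  ⟨(qf_ne_zero (right_ne_zero_of_mul h)).1, (qf_ne_zero (right_ne_zero_of_mul h)).2,
    left_ne_zero_of_mul h⟩

/-- `m = N(x)^{1/n}` version. -/
lemma comparable : ∃ c : ℝ, 0 < c ∧ c ≤ 1 ∧ ∀ x : mixedSpace K, ff x ≠ 0 → ∃ m : ℝ, 0 < m ∧ m ≤ 1 ∧
    m ^ finrank ℚ K = mixedEmbedding.norm x ∧ mixedEmbedding.norm x ≤ m ∧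
    ∀ w, c * m ≤ normAtPlace w x ∧ normAtPlace w x ≤ c⁻¹ * m := by
  obtain ⟨A, hA0, hA⟩ := log_comparable (K := K)
  refine ⟨Real.exp (-A), Real.exp_pos _, by simpa using hA0, fun x hx => ?_⟩
  obtain ⟨h1, h2, h3⟩ := ff_ne_zero hx
  have hN : 0 < mixedEmbedding.norm x := lt_of_le_of_ne (mixedEmbedding.norm_nonneg x) (Ne.symm h1)
  have hn : (finrank ℚ K : ℝ) ≠ 0 := Nat.cast_ne_zero.mpr finrank_pos.ne'
  have hn1 : 1 ≤ finrank ℚ K := finrank_pos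
  set m : ℝ := Real.exp (Real.log (mixedEmbedding.norm x) * (finrank ℚ K : ℝ)⁻¹) with hm
  have hm0 : 0 < m := Real.exp_pos _
  have hm1 : m ≤ 1 := by
    rw [hm, Real.exp_le_one_iff]
    exact mul_nonpos_of_nonpos_of_nonneg (Real.log_nonpos hN.le h2) (by positivity)
  have hmn : m ^ finrank ℚ K = mixedEmbedding.norm x := by
    rw [hm, ← Real.exp_nat_mul]
    rw [mul_comm, mul_assoc, inv_mul_cancel₀ hn, mul_one, Real.exp_log hN]
  refine ⟨m, hm0, hm1, hmn, ?_, fun w => ?_⟩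
  · rw [← hmn]
    exact pow_le_of_le_one hm0.le hm1 (by omega)
  · have hw : 0 < normAtPlace w x :=
      lt_of_le_of_ne (normAtPlace_nonneg w x) (Ne.symm (mixedEmbedding.norm_ne_zero_iff.mp h1 w))
    have := abs_le.mp (hA x h1 h3 w)
    rw [← Real.exp_neg, neg_neg, hm, ← Real.exp_add, ← Real.exp_add]
    constructor
    · rw [← Real.le_log_iff_exp_le hw]; linarith
    · rw [← Real.log_le_iff_le_exp hw]; linarith

lemma ff_support : ∃ R : ℝ, ∀ x : mixedSpace K, R < ‖x‖ → ff x = 0 := by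
  obtain ⟨c, hc0, hc1, hc⟩ := comparable (K := K)
  refine ⟨c⁻¹, fun x hx => ?_⟩
  by_contra h
  obtain ⟨m, hm0, hm1, -, -, hw⟩ := hc x h
  refine absurd hx (not_lt.mpr ?_)
  rw [norm_eq_sup'_normAtPlace]
  refine Finset.sup'_le _ _ fun w _ => (hw w).2.trans ?_
  exact mul_le_of_le_one_right (by positivity) hm1

end PIT
end Lat2

section Lat3
open scoped BigOperators Classical
namespace PIT
open MeasureTheory Module NumberField NumberField.mixedEmbedding NumberField.Units
  NumberField.Units.dirichletUnitTheorem NumberField.InfinitePlace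

lemma log_diff_le {a b r : ℝ} (hr : 0 < r) (ha : r ≤ a) (hb : r ≤ b) :
    |Real.log a - Real.log b| ≤ |a - b| / r := by
  wlog h : b ≤ a generalizing a b
  · rw [abs_sub_comm, abs_sub_comm a b]
    exact this hb ha (le_of_not_ge h)
  have hb0 : 0 < b := hr.trans_le hb
  have ha0 : 0 < a := hr.trans_le ha
  rw [abs_of_nonneg (sub_nonneg.mpr (Real.log_le_log hb0 h)), abs_of_nonneg (sub_nonneg.mpr h),
    ← Real.log_div ha0.ne' hb0.ne']
  refine (Real.log_le_sub_one_of_pos (by positivity)).trans ?_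
  have : a / b - 1 = (a - b) / b := by field_simp
  rw [this]
  exact div_le_div_of_nonneg_left (sub_nonneg.mpr h) hr hb

lemma abs_one_sub_exp_le (d : ℝ) : |1 - Real.exp d| ≤ |d| * Real.exp |d| := by
  rcases le_total 0 d with h | h
  · rw [abs_of_nonneg h, abs_sub_comm, abs_of_nonneg (by linarith [Real.one_le_exp h])]
    have := Real.add_one_le_exp (-d)
    have h2 : Real.exp d * Real.exp (-d) = 1 := by rw [← Real.exp_add]; simp
    nlinarith [Real.exp_pos d]
  · rw [abs_of_nonpos h, abs_of_nonneg (by linarith [Real.exp_le_one_iff.mpr h])]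
    have := Real.add_one_le_exp d
    have h2 := Real.one_le_exp (neg_nonneg.mpr h)
    nlinarith

variable {K : Type*} [Field K] [NumberField K]

lemma ff_lip_aux : ∃ C : ℝ, 0 ≤ C ∧ ∀ x y : mixedSpace K, ff x ≠ 0 →
    (ff y ≠ 0 → mixedEmbedding.norm y ≤ mixedEmbedding.norm x) → |ff x - ff y| ≤ C * ‖x - y‖ := by
  obtain ⟨c, hc0, hc1, hc⟩ := comparable (K := K)
  obtain ⟨A, hA0, hA⟩ := psi_lip (K := K)
  set n : ℝ := (finrank ℚ K : ℝ) with hn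
  have hn0 : 0 < n := by rw [hn]; exact_mod_cast finrank_pos
  refine ⟨2 / c + (4 * A + n * Real.exp n) * (2 / c), by positivity, fun x y hx hxy => ?_⟩
  obtain ⟨m, hm0, hm1, hmn, hNm, hw⟩ := hc x hx
  obtain ⟨hNx, hNx1, hpx⟩ := ff_ne_zero hx
  have hNx0 : 0 < mixedEmbedding.norm x :=
    lt_of_le_of_ne (mixedEmbedding.norm_nonneg x) (Ne.symm hNx)
  have hD0 := norm_nonneg (x - y)
  set D := ‖x - y‖ with hD
  rw [add_mul]
  rcases le_or_gt (c / 2 * m) D with hfar | hnear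
  · have h1 : ff y ≤ m := by
      by_cases hy : ff y = 0
      · rw [hy]; exact hm0.le
      · exact (ff_le y).trans ((hxy hy).trans hNm)
    have h2 : |ff x - ff y| ≤ m := by
      rw [abs_le]
      constructor <;> linarith [ff_nonneg x, ff_nonneg y, ff_le x]
    have h3 : m ≤ 2 / c * D := by
      have : 2 / c * (c / 2 * m) ≤ 2 / c * D := by gcongr
      have e : 2 / c * (c / 2 * m) = m := by field_simp
      linarith
    have : 0 ≤ (4 * A + n * Real.exp n) * (2 / c) * D := by positivity
    linarith
  · set e := D / (c / 2 * m) with he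
    have he0 : 0 ≤ e := by positivity
    have he1 : e ≤ 1 := by rw [he, div_le_one (by positivity)]; exact hnear.le
    have hax : ∀ w, c / 2 * m ≤ normAtPlace w x := fun w => by
      have := (hw w).1; nlinarith [mul_pos hc0 hm0]
    have hay : ∀ w, c / 2 * m ≤ normAtPlace w y := fun w => by
      have h1 := (hw w).1
      have h2 := (abs_le.mp (normAtPlace_sub_le w x y)).2
      linarith
    have hlog : ∀ w, |Real.log (normAtPlace w x) - Real.log (normAtPlace w y)| ≤ e := fun w =>
      (log_diff_le (by positivity) (hax w) (hay w)).trans (by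
        rw [he]; gcongr; exact normAtPlace_sub_le w x y)
    have hNy : mixedEmbedding.norm y ≠ 0 := by
      rw [mixedEmbedding.norm_ne_zero_iff]
      intro w h
      have := hay w
      rw [h] at this
      have : 0 < c / 2 * m := by positivity
      linarith
    have hNy0 : 0 < mixedEmbedding.norm y :=
      lt_of_le_of_ne (mixedEmbedding.norm_nonneg y) (Ne.symm hNy)
    have hlogN : |Real.log (mixedEmbedding.norm x) - Real.log (mixedEmbedding.norm y)| ≤ n * e := by
      rw [log_norm_eq hNx, log_norm_eq hNy, ← Finset.sum_sub_distrib, hn, ← mult_sum,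
        Finset.sum_mul]
      refine (Finset.abs_sum_le_sum_abs _ _).trans (Finset.sum_le_sum fun w _ => ?_)
      rw [← mul_sub, abs_mul, abs_of_nonneg (by positivity : (0:ℝ) ≤ mult w)]
      exact mul_le_mul_of_nonneg_left (hlog w) (by positivity)
    have hlm : ‖logMap x - logMap y‖ ≤ 4 * e := by
      rw [pi_norm_le_iff_of_nonneg (by positivity)]
      intro w
      rw [Pi.sub_apply, logMap_apply, logMap_apply, Real.norm_eq_abs, ← mul_sub, abs_mul,
        abs_of_nonneg (by positivity : (0:ℝ) ≤ mult w.1)]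
      have hm2 : (mult w.1 : ℝ) ≤ 2 := by
        have : mult w.1 ≤ 2 := by unfold mult; split_ifs <;> norm_num
        exact_mod_cast this
      have h1 : |Real.log (normAtPlace w.1 x) - Real.log (mixedEmbedding.norm x) * n⁻¹ -
          (Real.log (normAtPlace w.1 y) - Real.log (mixedEmbedding.norm y) * n⁻¹)| ≤ 2 * e := by
        have e1 : Real.log (normAtPlace w.1 x) - Real.log (mixedEmbedding.norm x) * n⁻¹ -
          (Real.log (normAtPlace w.1 y) - Real.log (mixedEmbedding.norm y) * n⁻¹) =
          (Real.log (normAtPlace w.1 x) - Real.log (normAtPlace w.1 y)) -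
          (Real.log (mixedEmbedding.norm x) - Real.log (mixedEmbedding.norm y)) * n⁻¹ := by ring
        rw [e1]
        refine (abs_sub _ _).trans ?_
        rw [abs_mul, abs_of_nonneg (by positivity : 0 ≤ n⁻¹)]
        have h5 : |Real.log (mixedEmbedding.norm x) - Real.log (mixedEmbedding.norm y)| * n⁻¹
            ≤ n * e * n⁻¹ := by gcongr
        have h6 : n * e * n⁻¹ = e := by field_simp
        linarith [hlog w.1]
      calc _ ≤ 2 * (2 * e) := mul_le_mul hm2 h1 (abs_nonneg _) (by norm_num)
        _ = 4 * e := by ring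
    have hNdiff : |mixedEmbedding.norm x - mixedEmbedding.norm y| ≤
        mixedEmbedding.norm x * (n * e * Real.exp n) := by
      set d := Real.log (mixedEmbedding.norm y) - Real.log (mixedEmbedding.norm x) with hd
      have h1 : mixedEmbedding.norm y = mixedEmbedding.norm x * Real.exp d := by
        rw [hd, Real.exp_sub, Real.exp_log hNy0, Real.exp_log hNx0]; field_simp
      have h2 : mixedEmbedding.norm x - mixedEmbedding.norm y =
        mixedEmbedding.norm x * (1 - Real.exp d) := by rw [h1]; ring
      rw [h2, abs_mul, abs_of_pos hNx0]
      refine mul_le_mul_of_nonneg_left ((abs_one_sub_exp_le d).trans ?_) hNx0.le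
      have h3 : |d| ≤ n * e := by rw [hd, abs_sub_comm]; exact hlogN
      have h4 : |d| ≤ n := h3.trans (mul_le_of_le_one_right hn0.le he1)
      exact mul_le_mul h3 (Real.exp_le_exp.mpr h4) (Real.exp_pos _).le (by positivity)
    have hmain : |ff x - ff y| ≤ (4 * A + n * Real.exp n) * (m * e) := by
      have e1 : ff x - ff y = (psi (logMap x) - psi (logMap y)) * qf (mixedEmbedding.norm x) +
        psi (logMap y) * (qf (mixedEmbedding.norm x) - qf (mixedEmbedding.norm y)) := by
        unfold ff; ring
      rw [e1]
      refine (abs_add_le _ _).trans ?_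
      rw [abs_mul, abs_mul, abs_of_nonneg (qf_nonneg hNx0.le), abs_of_nonneg (psi_nonneg _)]
      have h1 : |psi (logMap x) - psi (logMap y)| * qf (mixedEmbedding.norm x) ≤
          (A * (4 * e)) * m := by
        refine mul_le_mul ((hA _ _).trans ?_) ((qf_le hNx0.le).trans hNm) (qf_nonneg hNx0.le)
          (by positivity)
        gcongr
      have h2 : psi (logMap y) * |qf (mixedEmbedding.norm x) - qf (mixedEmbedding.norm y)| ≤
          1 * (m * (n * e * Real.exp n)) := by
        refine mul_le_mul (psi_le_one _) ((qf_lip hNx0.le hNy0.le).trans (hNdiff.trans ?_))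
          (abs_nonneg _) (by norm_num)
        gcongr
      nlinarith
    have h9 : m * e = 2 / c * D := by rw [he]; field_simp
    rw [h9] at hmain
    have : 0 ≤ 2 / c * D := by positivity
    linarith

lemma ff_lip : ∃ C : ℝ, 0 ≤ C ∧ ∀ x y : mixedSpace K, |ff x - ff y| ≤ C * ‖x - y‖ := by
  obtain ⟨C, hC, h⟩ := ff_lip_aux (K := K)
  refine ⟨C, hC, fun x y => ?_⟩
  by_cases hx : ff x = 0
  · by_cases hy : ff y = 0
    · rw [hx, hy, sub_self, abs_zero]; positivity
    · rw [abs_sub_comm, norm_sub_rev]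
      exact h y x hy (fun h' => absurd hx h')
  · by_cases hy : ff y = 0
    · exact h x y hx (fun h' => absurd hy h')
    · rcases le_total (mixedEmbedding.norm y) (mixedEmbedding.norm x) with h' | h'
      · exact h x y hx fun _ => h'
      · rw [abs_sub_comm, norm_sub_rev]
        exact h y x hy fun _ => h'

lemma ff_continuous : Continuous (ff (K := K)) := by
  obtain ⟨C, hC, h⟩ := ff_lip (K := K)
  refine (LipschitzWith.of_dist_le_mul (K := ⟨C, hC⟩) fun x y => ?_).continuous
  rw [Real.dist_eq, dist_eq_norm]; exact h x y

lemma ff_compact : HasCompactSupport (ff (K := K)) := by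
  obtain ⟨R, hR⟩ := ff_support (K := K)
  refine HasCompactSupport.intro (isCompact_closedBall 0 R) fun x hx => hR x ?_
  simpa using hx

lemma ff_pos : ∃ x : mixedSpace K, ff x ≠ 0 := by
  refine ⟨(1/2 : ℝ) • 1, ?_⟩
  have h1 : logMap ((1/2 : ℝ) • (1 : mixedSpace K)) = 0 := by
    rw [logMap_real_smul (by simp) (by norm_num)]
    exact logMap_one
  have h2 : mixedEmbedding.norm ((1/2 : ℝ) • (1 : mixedSpace K)) = (1/2)^(finrank ℚ K) := by
    rw [mixedEmbedding.norm_smul]; simp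
  unfold ff
  rw [h1, h2]
  have h3 : psi (0 : logSpace K) = 1 := by simp [psi, tent]
  rw [h3, one_mul]
  have h4 : (1/2 : ℝ)^(finrank ℚ K) < 1 := pow_lt_one₀ (by norm_num) (by norm_num) finrank_pos.ne'
  have h5 : (0:ℝ) < (1/2 : ℝ)^(finrank ℚ K) := by positivity
  unfold qf
  rw [max_eq_right (by linarith)]
  exact (mul_pos h5 (by linarith)).ne'

lemma ff_integral_pos : 0 < ∫ x : mixedSpace K, ff x := by
  obtain ⟨x, hx⟩ := ff_pos (K := K)
  exact ff_continuous.integral_pos_of_hasCompactSupport_nonneg_nonzero ff_compact ff_nonneg hx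

lemma ff_smul {t : ℝ} (ht : 0 < t) (x : mixedSpace K) (hx : mixedEmbedding.norm x ≠ 0) :
    ff (t⁻¹ • x) = psi (logMap x) * qf (mixedEmbedding.norm x / t ^ finrank ℚ K) := by
  unfold ff
  rw [logMap_real_smul hx (by positivity), mixedEmbedding.norm_smul, abs_of_pos (by positivity)]
  congr 2
  rw [inv_pow, div_eq_inv_mul]

end PIT
end Lat3

section Lat4
open scoped BigOperators Classical
namespace PIT
open MeasureTheory Module NumberField NumberField.mixedEmbedding NumberField.Units
  NumberField.Units.dirichletUnitTheorem NumberField.InfinitePlace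

lemma tent_partition (z : ℝ) :
    ∑ e ∈ ({-⌊z⌋, -⌊z⌋ - 1} : Finset ℤ), tent (z + e) = 1 := by
  rw [Finset.sum_pair (by omega)]
  have h1 := Int.floor_le z
  have h2 := Int.lt_floor_add_one z
  unfold tent
  push_cast
  rw [abs_of_nonneg (by linarith : 0 ≤ z + -(⌊z⌋:ℝ)),
    abs_of_nonpos (by linarith : z + (-(⌊z⌋:ℝ) - 1) ≤ 0), max_eq_right (by linarith),
    max_eq_right (by linarith)]
  ring

lemma tent_outside (z : ℝ) (e : ℤ) (he : e ∉ ({-⌊z⌋, -⌊z⌋ - 1} : Finset ℤ)) :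
    tent (z + e) = 0 := by
  have h1 := Int.floor_le z
  have h2 := Int.lt_floor_add_one z
  simp only [Finset.mem_insert, Finset.mem_singleton, not_or] at he
  unfold tent
  apply max_eq_left
  have : e ≤ -⌊z⌋ - 2 ∨ -⌊z⌋ + 1 ≤ e := by omega
  rcases this with h | h
  · have h' : (e : ℝ) ≤ -⌊z⌋ - 2 := by exact_mod_cast h
    have := neg_le_abs (z + e)
    linarith
  · have h' : (-⌊z⌋ + 1 : ℝ) ≤ e := by exact_mod_cast h
    have := le_abs_self (z + e)
    linarith

lemma tent_pi {n : ℕ} (z : Fin n → ℝ) :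
    ∑' e : Fin n → ℤ, ENNReal.ofReal (∏ i, tent (z i + e i)) = 1 := by
  rw [tsum_eq_sum (s := Fintype.piFinset fun i => ({-⌊z i⌋, -⌊z i⌋ - 1} : Finset ℤ))]
  · rw [← ENNReal.ofReal_sum_of_nonneg (fun _ _ => Finset.prod_nonneg fun _ _ => tent_nonneg _),
      ← Finset.prod_univ_sum (fun i => ({-⌊z i⌋, -⌊z i⌋ - 1} : Finset ℤ))
        (fun i e => tent (z i + e))]
    simp only [tent_partition]
    simp
  · intro e he
    simp only [Fintype.mem_piFinset, not_forall] at he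
    obtain ⟨i, hi⟩ := he
    rw [Finset.prod_eq_zero (Finset.mem_univ i) (tent_outside _ _ hi), ENNReal.ofReal_zero]

variable {K : Type*} [Field K] [NumberField K]

variable (K) in
def unitParam : (torsion K × (Fin (rank K) → ℤ)) ≃ (𝓞 K)ˣ :=
  Equiv.ofBijective (fun ζe => (ζe.1 : (𝓞 K)ˣ) * ∏ i, (fundSystem K i) ^ (ζe.2 i)) (by
    constructor
    · intro a b hab
      exact (exist_unique_eq_mul_prod K _).unique (y₁ := a) (y₂ := b) rfl hab
    · intro x
      obtain ⟨a, ha, -⟩ := exist_unique_eq_mul_prod K x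
      exact ⟨a, ha.symm⟩)

lemma log_unitParam (p : torsion K × (Fin (rank K) → ℤ)) :
    logEmbedding K (Additive.ofMul (unitParam K p)) = ∑ i, (p.2 i : ℝ) • uBasis K i := by
  have h1 : logEmbedding K (Additive.ofMul (p.1 : (𝓞 K)ˣ)) = 0 :=
    logEmbedding_eq_zero_iff.mpr p.1.2
  change logEmbedding K (Additive.ofMul ((p.1 : (𝓞 K)ˣ) * ∏ i, (fundSystem K i) ^ (p.2 i))) = _
  rw [ofMul_mul, map_add, h1, zero_add, ofMul_prod, map_sum]
  refine Finset.sum_congr rfl fun i _ => ?_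
  rw [ofMul_zpow, map_zsmul, logEmbedding_fundSystem, uBasis, Basis.ofZLatticeBasis_apply,
    Int.cast_smul_eq_zsmul]

lemma unit_sum (x : mixedSpace K) (hx : mixedEmbedding.norm x ≠ 0) :
    ∑' u : (𝓞 K)ˣ, ENNReal.ofReal (psi (logMap (u • x))) = (torsionOrder K : ENNReal) := by
  rw [← (unitParam K).tsum_eq]
  have h1 : ∀ p, psi (logMap (unitParam K p • x)) =
      ∏ i, tent ((uBasis K).repr (logMap x) i + p.2 i) := by
    intro p
    rw [logMap_unit_smul _ hx, log_unitParam, psi]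
    refine Finset.prod_congr rfl fun i _ => ?_
    congr 1
    rw [map_add, Finsupp.add_apply, add_comm, Basis.repr_sum_self]
  simp only [h1]
  rw [ENNReal.tsum_prod']
  simp only [tent_pi]
  rw [ENNReal.tsum_one, torsionOrder]
  simp [ENat.card_eq_coe_natCard]

lemma norm_coe (a : 𝓞 K) : mixedEmbedding.norm (mixedEmbedding K a) =
    (Ideal.absNorm (Ideal.span {a}) : ℝ) := by
  rw [mixedEmbedding.norm_eq_norm, Ideal.absNorm_span_singleton, Nat.cast_natAbs,
    ← Algebra.coe_norm_int]
  push_cast; rfl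

lemma fiber_sum (a₀ : 𝓞 K) (ha₀ : a₀ ≠ 0) {t : ℝ} (ht : 0 < t) :
    ∑' a : {a : 𝓞 K // Ideal.span {a} = Ideal.span {a₀}},
      ENNReal.ofReal (ff (t⁻¹ • mixedEmbedding K (a : 𝓞 K)))
      = torsionOrder K * ENNReal.ofReal
        (qf ((Ideal.absNorm (Ideal.span {a₀}) : ℝ) / t ^ finrank ℚ K)) := by
  have hN : ∀ a : 𝓞 K, a ≠ 0 → mixedEmbedding.norm (mixedEmbedding K a) ≠ 0 := fun a ha => by
    rw [norm_coe, Nat.cast_ne_zero, Ne, Ideal.absNorm_eq_zero_iff, Ideal.span_singleton_eq_bot]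
    exact ha
  let φ : (𝓞 K)ˣ → {a : 𝓞 K // Ideal.span {a} = Ideal.span {a₀}} := fun u =>
    ⟨u * a₀, by
      rw [Ideal.span_singleton_eq_span_singleton]
      exact associated_unit_mul_left _ _ u.isUnit⟩
  have hφ : Function.Bijective φ := by
    constructor
    · intro u v huv
      have := congrArg Subtype.val huv
      exact Units.ext (mul_right_cancel₀ ha₀ this)
    · rintro ⟨a, ha⟩
      rw [Ideal.span_singleton_eq_span_singleton] at ha
      obtain ⟨u, hu⟩ := ha.symm
      exact ⟨u, Subtype.ext ((mul_comm _ _).trans hu)⟩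
  rw [← (Equiv.ofBijective φ hφ).tsum_eq]
  have h1 : ∀ u : (𝓞 K)ˣ, ff (t⁻¹ • mixedEmbedding K ((φ u : 𝓞 K) : K)) =
      psi (logMap (u • mixedEmbedding K (a₀ : K))) *
      qf ((Ideal.absNorm (Ideal.span {a₀}) : ℝ) / t ^ finrank ℚ K) := by
    intro u
    have h2 : mixedEmbedding K ((φ u : 𝓞 K) : K) = u • mixedEmbedding K (a₀ : K) := by
      rw [eq_comm, unit_smul_eq_iff_mul_eq]
    rw [h2, ff_smul ht _ (by rw [norm_unit_smul]; exact hN _ ha₀), norm_unit_smul, norm_coe]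
  simp only [Equiv.ofBijective_apply, h1]
  simp only [ENNReal.ofReal_mul (psi_nonneg _)]
  rw [ENNReal.tsum_mul_right, unit_sum _ (hN _ ha₀)]

lemma mem_nzd {I : Ideal (𝓞 K)} (h : I ≠ ⊥) : I ∈ nonZeroDivisors (Ideal (𝓞 K)) :=
  mem_nonZeroDivisors_iff_ne_zero.mpr h

lemma mk0_inv_iff (J I : nonZeroDivisors (Ideal (𝓞 K))) :
    ClassGroup.mk0 I = (ClassGroup.mk0 J)⁻¹ ↔
      ∃ a : 𝓞 K, Ideal.span {a} = (J : Ideal (𝓞 K)) * (I : Ideal (𝓞 K)) := by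
  rw [eq_inv_iff_mul_eq_one, ← map_mul, mul_comm]
  have h1 : (J * I : nonZeroDivisors (Ideal (𝓞 K))) =
      ⟨(J : Ideal (𝓞 K)) * I, (J * I).2⟩ := rfl
  rw [h1, ClassGroup.mk0_eq_one_iff]
  constructor
  · rintro ⟨a, ha⟩
    exact ⟨a, ha.symm⟩
  · rintro ⟨a, ha⟩
    exact ⟨a, ha.symm⟩

lemma exists_cofactor (J : nonZeroDivisors (Ideal (𝓞 K)))
    (a : {a : 𝓞 K // a ≠ 0 ∧ a ∈ (J : Ideal (𝓞 K))}) :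
      ∃ I : {I : nonZeroDivisors (Ideal (𝓞 K)) // ClassGroup.mk0 I = (ClassGroup.mk0 J)⁻¹},
      Ideal.span {a.1} = (J : Ideal (𝓞 K)) * (I.1 : Ideal (𝓞 K)) := by
  obtain ⟨a, ha, haJ⟩ := a
  have : (J : Ideal (𝓞 K)) ∣ Ideal.span {a} := by
    rw [Ideal.dvd_span_singleton]; exact haJ
  obtain ⟨I, hI⟩ := this
  have hI0 : I ≠ ⊥ := by
    rintro rfl
    rw [Ideal.mul_bot, Ideal.span_singleton_eq_bot] at hI
    exact ha hI
  exact ⟨⟨⟨I, mem_nzd hI0⟩, (mk0_inv_iff J _).mpr ⟨a, hI⟩⟩, hI⟩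

lemma tsum_fiber {α β : Type*} (φ : α → β) (g : α → ENNReal) :
    ∑' a, g a = ∑' b, ∑' a : {a // φ a = b}, g a.1 := by
  rw [← (Equiv.sigmaFiberEquiv φ).tsum_eq, ENNReal.tsum_sigma']
  rfl

lemma cof_unique (J : nonZeroDivisors (Ideal (𝓞 K))) (I I' : {I : nonZeroDivisors (Ideal (𝓞 K)) //
      ClassGroup.mk0 I = (ClassGroup.mk0 J)⁻¹}) (h : (J : Ideal (𝓞 K)) * (I.1 : Ideal (𝓞 K)) =
      (J : Ideal (𝓞 K)) * (I'.1 : Ideal (𝓞 K))) : I = I' := by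
  apply Subtype.ext
  have : J * I.1 = J * I'.1 := Subtype.ext h
  exact mul_left_cancel this

def cofEquiv (J : nonZeroDivisors (Ideal (𝓞 K)))
    (φ : {a : 𝓞 K // a ≠ 0 ∧ a ∈ (J : Ideal (𝓞 K))} → {I : nonZeroDivisors (Ideal (𝓞 K)) //
      ClassGroup.mk0 I = (ClassGroup.mk0 J)⁻¹})
    (hφ : ∀ a, Ideal.span {a.1} = (J : Ideal (𝓞 K)) * ((φ a).1 : Ideal (𝓞 K)))
    (I : {I : nonZeroDivisors (Ideal (𝓞 K)) // ClassGroup.mk0 I = (ClassGroup.mk0 J)⁻¹})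
    (hJI : (J : Ideal (𝓞 K)) * (I.1 : Ideal (𝓞 K)) ≠ ⊥) :
    {a // φ a = I} ≃ {a : 𝓞 K // Ideal.span {a} = J * (I.1 : Ideal (𝓞 K))} where
  toFun a := ⟨a.1.1, by rw [hφ a.1, a.2]⟩
  invFun a := ⟨⟨a.1, by
        rintro h0
        have := a.2
        rw [h0, Ideal.span_singleton_eq_bot.mpr rfl] at this
        exact hJI this.symm, by
        have : a.1 ∈ Ideal.span {a.1} := Ideal.mem_span_singleton_self _
        rw [a.2] at this
        exact Ideal.mul_le_left this⟩, by
        exact cof_unique J _ _ ((hφ _).symm.trans a.2)⟩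
  left_inv a := rfl
  right_inv a := rfl

/-- Sum over an ideal class. -/
lemma class_sum (J : nonZeroDivisors (Ideal (𝓞 K))) {t : ℝ} (ht : 0 < t) :
    ∑' a : {a : 𝓞 K // a ≠ 0 ∧ a ∈ (J : Ideal (𝓞 K))},
      ENNReal.ofReal (ff (t⁻¹ • mixedEmbedding K (a : 𝓞 K)))
      = torsionOrder K * ∑' I : {I : nonZeroDivisors (Ideal (𝓞 K)) //
          ClassGroup.mk0 I = (ClassGroup.mk0 J)⁻¹}, ENNReal.ofReal
        (qf ((Ideal.absNorm (J : Ideal (𝓞 K)) * Ideal.absNorm (I.1 : Ideal (𝓞 K)) : ℝ)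
          / t ^ finrank ℚ K)) := by
  choose φ hφ using exists_cofactor J
  rw [tsum_fiber φ, ← ENNReal.tsum_mul_left]
  refine tsum_congr fun I => ?_
  obtain ⟨a₀, ha₀⟩ := (mk0_inv_iff J I.1).mp I.2
  have hJI : (J : Ideal (𝓞 K)) * (I.1 : Ideal (𝓞 K)) ≠ ⊥ :=
    nonZeroDivisors.coe_ne_zero (J * I.1)
  have ha₀0 : a₀ ≠ 0 := by
    rintro rfl
    rw [Ideal.span_singleton_eq_bot.mpr rfl] at ha₀
    exact hJI ha₀.symm
  have key := fiber_sum a₀ ha₀0 ht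
  rw [ha₀, map_mul, Nat.cast_mul] at key
  rw [← key]
  refine (cofEquiv J φ hφ I hJI).tsum_eq (fun a : {a : 𝓞 K // Ideal.span {a} =
    J * (I.1 : Ideal (𝓞 K))} => ENNReal.ofReal (ff (t⁻¹ • mixedEmbedding K (a : 𝓞 K))))

end PIT
end Lat4

section Lat5
open scoped BigOperators Classical
namespace PIT
open MeasureTheory Module NumberField NumberField.mixedEmbedding NumberField.Units
  NumberField.Units.dirichletUnitTheorem NumberField.InfinitePlace

variable {K : Type*} [Field K] [NumberField K]

lemma lattice_reindex (J : nonZeroDivisors (Ideal (𝓞 K))) (t : ℝ) :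
    ∑' a : Submodule.span ℤ (Set.range (fractionalIdealLatticeBasis K (FractionalIdeal.mk0 K J))),
      ff (t⁻¹ • (a : mixedSpace K)) =
    ∑' a : {a : 𝓞 K // a ≠ 0 ∧ a ∈ (J : Ideal (𝓞 K))}, ff (t⁻¹ • mixedEmbedding K (a : 𝓞 K)) := by
  let g : {a : 𝓞 K // a ≠ 0 ∧ a ∈ (J : Ideal (𝓞 K))} →
    Submodule.span ℤ (Set.range (fractionalIdealLatticeBasis K (FractionalIdeal.mk0 K J))) :=
    fun a => ⟨mixedEmbedding K (a.1 : K), by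
      rw [mem_span_fractionalIdealLatticeBasis]
      refine ⟨_, ?_, rfl⟩
      simp only [FractionalIdeal.coe_mk0]
      exact (FractionalIdeal.mem_coeIdeal _).mpr ⟨a.1, a.2.2, rfl⟩⟩
  have hg : Function.Injective g := by
    intro a b hab
    have h1 : mixedEmbedding K (a.1 : K) = mixedEmbedding K (b.1 : K) := congrArg Subtype.val hab
    exact Subtype.ext (RingOfIntegers.ext (mixedEmbedding_injective K h1))
  refine (hg.tsum_eq (f := fun a : Submodule.span ℤ (Set.range (fractionalIdealLatticeBasis K
    (FractionalIdeal.mk0 K J))) => ff (t⁻¹ • (a : mixedSpace K))) ?_).symm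
  rintro ⟨x, hx⟩ hfx
  rw [mem_span_fractionalIdealLatticeBasis] at hx
  obtain ⟨k, hk, rfl⟩ := hx
  simp only [FractionalIdeal.coe_mk0] at hk
  obtain ⟨a, haJ, rfl⟩ := (FractionalIdeal.mem_coeIdeal _).mp hk
  refine ⟨⟨a, ?_, haJ⟩, rfl⟩
  rintro rfl
  apply hfx
  simp [ff, qf]

lemma class_sum_real (J : nonZeroDivisors (Ideal (𝓞 K))) {t : ℝ} (ht : 0 < t) :
    ∑' a : {a : 𝓞 K // a ≠ 0 ∧ a ∈ (J : Ideal (𝓞 K))}, ff (t⁻¹ • mixedEmbedding K (a : 𝓞 K))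
      = torsionOrder K * ∑' I : {I : nonZeroDivisors (Ideal (𝓞 K)) //
          ClassGroup.mk0 I = (ClassGroup.mk0 J)⁻¹},
        (qf ((Ideal.absNorm (J : Ideal (𝓞 K)) * Ideal.absNorm (I.1 : Ideal (𝓞 K)) : ℝ)
          / t ^ finrank ℚ K)) := by
  have h := congrArg ENNReal.toReal (class_sum J ht)
  rw [ENNReal.toReal_mul, ENNReal.tsum_toReal_eq (fun _ => ENNReal.ofReal_ne_top),
    ENNReal.tsum_toReal_eq (fun _ => ENNReal.ofReal_ne_top), ENNReal.toReal_natCast] at h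
  simp only [ENNReal.toReal_ofReal (ff_nonneg _)] at h
  rw [h]
  congr 1
  refine tsum_congr fun I => ENNReal.toReal_ofReal (qf_nonneg (by positivity))

lemma class_asymp (C : ClassGroup (𝓞 K)) : ∃ c : ℝ, 0 < c ∧ ∃ A : ℝ, ∀ T : ℝ, 1 ≤ T →
    |∑' I : {I : nonZeroDivisors (Ideal (𝓞 K)) // ClassGroup.mk0 I = C},
      qf (Ideal.absNorm (I.1 : Ideal (𝓞 K)) / T) - c * T| ≤ A * T ^ (1 - (finrank ℚ K : ℝ)⁻¹) := by
  obtain ⟨J, hJ⟩ := ClassGroup.mk0_surjective C⁻¹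
  obtain ⟨C1, -, hC1⟩ := ff_lip (K := K)
  obtain ⟨R, hR⟩ := ff_support (K := K)
  obtain ⟨A, hA⟩ := lattice_sum volume (fractionalIdealLatticeBasis K (FractionalIdeal.mk0 K J))
    ff C1 R hC1 hR
  set κ : ℝ := (∫ x : mixedSpace K, ff x) / (volume : Measure (mixedSpace K)).real
    (ZSpan.fundamentalDomain (fractionalIdealLatticeBasis K (FractionalIdeal.mk0 K J))) with hκ
  have hκ0 : 0 < κ := by
    refine div_pos ff_integral_pos ?_
    rw [measureReal_def]
    exact ENNReal.toReal_pos (ZSpan.measure_fundamentalDomain_ne_zero _)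
      (ZSpan.fundamentalDomain_isBounded _).measure_lt_top.ne
  set n := finrank ℚ K with hn
  have hn0 : n ≠ 0 := finrank_pos.ne'
  have hw : (0:ℝ) < torsionOrder K := by exact_mod_cast torsionOrder_pos K
  set w : ℝ := (torsionOrder K : ℝ) with hwdef
  set M : ℝ := (Ideal.absNorm (J : Ideal (𝓞 K)) : ℝ) with hM
  have hM1 : 1 ≤ M := by
    rw [hM]
    have : Ideal.absNorm (J : Ideal (𝓞 K)) ≠ 0 := by
      rw [Ne, Ideal.absNorm_eq_zero_iff]; exact nonZeroDivisors.coe_ne_zero J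
    exact_mod_cast Nat.one_le_iff_ne_zero.mpr this
  refine ⟨M * κ / w, by positivity, A / w * M ^ (1 - (n : ℝ)⁻¹), fun T hT => ?_⟩
  have hT0 : 0 < T := by linarith
  set t : ℝ := (M * T) ^ ((n : ℝ)⁻¹) with ht
  have hMT : 1 ≤ M * T := by nlinarith
  have ht1 : 1 ≤ t := Real.one_le_rpow hMT (by positivity)
  have htn : t ^ n = M * T := by
    rw [ht]; exact Real.rpow_inv_natCast_pow (by linarith) hn0
  have key := hA t ht1
  rw [lattice_reindex, class_sum_real J (by linarith), mixedEmbedding.finrank, ← hn, htn] at key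
  have e1 : M * T / t = (M * T) ^ (1 - (n : ℝ)⁻¹) := by
    rw [ht, Real.rpow_sub (by linarith), Real.rpow_one]
  have hJC : (ClassGroup.mk0 J)⁻¹ = C := by rw [hJ, inv_inv]
  have e2 : ∑' I : {I : nonZeroDivisors (Ideal (𝓞 K)) // ClassGroup.mk0 I = (ClassGroup.mk0 J)⁻¹},
      qf (M * (Ideal.absNorm (I.1 : Ideal (𝓞 K)) : ℝ) / (M * T)) =
      ∑' I : {I : nonZeroDivisors (Ideal (𝓞 K)) // ClassGroup.mk0 I = C},
      qf (Ideal.absNorm (I.1 : Ideal (𝓞 K)) / T) := by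
    rw [hJC]
    refine tsum_congr fun I => ?_
    rw [mul_div_mul_left _ _ (by linarith : M ≠ 0)]
  rw [e1, e2, Real.mul_rpow (by linarith) hT0.le] at key
  set S := ∑' I : {I : nonZeroDivisors (Ideal (𝓞 K)) // ClassGroup.mk0 I = C},
      qf (Ideal.absNorm (I.1 : Ideal (𝓞 K)) / T)
  have e3 : S - M * κ / w * T = (w * S - M * T * κ) / w := by field_simp
  rw [e3, abs_div, abs_of_pos hw, div_le_iff₀ hw]
  refine key.trans (le_of_eq ?_)
  field_simp

lemma qf_support_finite {T : ℝ} (hT : 0 < T) :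
    (Function.support fun I : nonZeroDivisors (Ideal (𝓞 K)) =>
      qf (Ideal.absNorm (I : Ideal (𝓞 K)) / T)).Finite := by
  have hfin : {I : Ideal (𝓞 K) | Ideal.absNorm I ≤ ⌊T⌋₊}.Finite := Ideal.finite_setOfPred_absNorm_le _
  refine Set.Finite.subset (hfin.preimage (f := fun I : nonZeroDivisors (Ideal (𝓞 K)) =>
    (I : Ideal (𝓞 K))) Subtype.val_injective.injOn) fun I hI => ?_
  obtain ⟨h1, h2⟩ := qf_ne_zero hI
  change Ideal.absNorm _ ≤ _
  exact Nat.le_floor ((div_le_one hT).mp h2)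

theorem ideal_asymp : ∃ c : ℝ, 0 < c ∧ ∃ A : ℝ, ∀ T : ℝ, 1 ≤ T →
    |∑' I : nonZeroDivisors (Ideal (𝓞 K)),
      qf (Ideal.absNorm (I : Ideal (𝓞 K)) / T) - c * T| ≤ A * T ^ (1 - (finrank ℚ K : ℝ)⁻¹) := by
  choose c hc A hA using class_asymp (K := K)
  refine ⟨∑ C, c C, Finset.sum_pos (fun C _ => hc C) Finset.univ_nonempty, ∑ C, A C,
    fun T hT => ?_⟩
  have hs : Summable fun I : nonZeroDivisors (Ideal (𝓞 K)) =>
      qf (Ideal.absNorm (I : Ideal (𝓞 K)) / T) :=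
    summable_of_hasFiniteSupport (qf_support_finite (by linarith))
  have e : ∑' I : nonZeroDivisors (Ideal (𝓞 K)), qf (Ideal.absNorm (I : Ideal (𝓞 K)) / T) =
    ∑ C : ClassGroup (𝓞 K), ∑' I : {I : nonZeroDivisors (Ideal (𝓞 K)) // ClassGroup.mk0 I = C},
      qf (Ideal.absNorm (I.1 : Ideal (𝓞 K)) / T) := by
    let φ := Equiv.sigmaFiberEquiv (ClassGroup.mk0 : nonZeroDivisors (Ideal (𝓞 K)) → _)
    have h1 := Summable.tsum_sigma ((φ.summable_iff).mpr hs)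
    rw [← φ.tsum_eq]
    exact h1.trans (tsum_fintype _)
  rw [e, Finset.sum_mul, Finset.sum_mul, ← Finset.sum_sub_distrib]
  exact (Finset.abs_sum_le_sum_abs _ _).trans (Finset.sum_le_sum fun C _ => hA C T hT)

end PIT
end Lat5

section An1
namespace PIT
open MeasureTheory Set

lemma qf_eq_indicator {N : ℝ} (hN : 0 < N) (s : ℂ) {T : ℝ} (hT : 0 < T) :
    (qf (N / T) : ℂ) * (T : ℂ) ^ (-s - 1) =
    (Ioi N).indicator (fun T : ℝ => (N : ℂ) * (T : ℂ) ^ (-s - 2) - (N : ℂ) ^ 2 * (T : ℂ) ^ (-s - 3)) T := by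
  have hT' : (T : ℂ) ≠ 0 := by exact_mod_cast hT.ne'
  by_cases h : T ∈ Ioi N
  · rw [indicator_of_mem h]
    have h1 : N / T ≤ 1 := (div_le_one hT).mpr (le_of_lt h)
    unfold qf
    rw [max_eq_right (by linarith)]
    have e1 : (T : ℂ) ^ (-s - 2) = (T : ℂ) ^ (-s - 1) / T := by
      rw [show -s - 2 = (-s - 1) - 1 by ring, Complex.cpow_sub _ _ hT', Complex.cpow_one]
    have e2 : (T : ℂ) ^ (-s - 3) = (T : ℂ) ^ (-s - 1) / T / T := by
      rw [show -s - 3 = (-s - 1) - 1 - 1 by ring, Complex.cpow_sub _ _ hT',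
        Complex.cpow_sub _ _ hT', Complex.cpow_one]
    rw [e1, e2]
    push_cast
    field_simp
  · rw [indicator_of_notMem h]
    have h1 : 1 ≤ N / T := (one_le_div hT).mpr (not_lt.mp h)
    unfold qf
    rw [max_eq_left (by linarith)]
    simp

lemma qf_integrable {N : ℝ} (hN : 1 ≤ N) {s : ℂ} (hs : 0 < s.re) :
    IntegrableOn (fun T : ℝ => (qf (N / T) : ℂ) * (T : ℂ) ^ (-s - 1)) (Ioi 1) ∧
    ∫ T in Ioi (1:ℝ), (qf (N / T) : ℂ) * (T : ℂ) ^ (-s - 1) =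
      (N : ℂ) ^ (-s) * (1 / ((s + 1) * (s + 2))) := by
  have hN0 : 0 < N := by linarith
  have hNc : (N : ℂ) ≠ 0 := by exact_mod_cast hN0.ne'
  have i1 : IntegrableOn (fun T : ℝ => (N : ℂ) * (T : ℂ) ^ (-s - 2)) (Ioi N) :=
    (integrableOn_Ioi_cpow_of_lt (by simp; linarith) hN0).const_mul _
  have i2 : IntegrableOn (fun T : ℝ => (N : ℂ) ^ 2 * (T : ℂ) ^ (-s - 3)) (Ioi N) :=
    (integrableOn_Ioi_cpow_of_lt (by simp; linarith) hN0).const_mul _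
  have hsub : Ioi 1 ∩ Ioi N = Ioi N := inter_eq_right.mpr (Ioi_subset_Ioi hN)
  have hEq : EqOn (fun T : ℝ => (qf (N / T) : ℂ) * (T : ℂ) ^ (-s - 1))
    ((Ioi N).indicator (fun T : ℝ => (N : ℂ) * (T : ℂ) ^ (-s - 2) - (N : ℂ) ^ 2 * (T : ℂ) ^ (-s - 3)))
    (Ioi 1) := fun T hT => qf_eq_indicator hN0 s (by linarith [mem_Ioi.mp hT])
  constructor
  · rw [integrableOn_congr_fun hEq measurableSet_Ioi]
    exact ((integrable_indicator_iff measurableSet_Ioi).mpr (i1.sub i2)).integrableOn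
  · rw [setIntegral_congr_fun measurableSet_Ioi hEq, setIntegral_indicator measurableSet_Ioi, hsub,
      integral_sub i1 i2, integral_const_mul, integral_const_mul,
      integral_Ioi_cpow_of_lt (by simp; linarith) hN0, integral_Ioi_cpow_of_lt (by simp; linarith) hN0]
    have e1 : (N : ℂ) ^ (-s - 2 + 1) = (N : ℂ) ^ (-s) / N := by
      rw [show -s - 2 + 1 = (-s) - 1 by ring, Complex.cpow_sub _ _ hNc, Complex.cpow_one]
    have e2 : (N : ℂ) ^ (-s - 3 + 1) = (N : ℂ) ^ (-s) / N / N := by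
      rw [show -s - 3 + 1 = (-s) - 1 - 1 by ring, Complex.cpow_sub _ _ hNc,
        Complex.cpow_sub _ _ hNc, Complex.cpow_one]
    have h1 : s + 1 ≠ 0 := fun h => by have := congrArg Complex.re h; simp at this; linarith
    have h2 : s + 2 ≠ 0 := fun h => by have := congrArg Complex.re h; simp at this; linarith
    have h3 : -s - 2 + 1 ≠ 0 := fun h => h1 (by linear_combination -h)
    have h4 : -s - 3 + 1 ≠ 0 := fun h => h2 (by linear_combination -h)
    have e3 : -s - 2 + 1 = -(s + 1) := by ring
    have e4 : -s - 3 + 1 = -(s + 2) := by ring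
    rw [e1, e2, e3, e4]
    field_simp
    ring

lemma qf_integral_real {N : ℝ} (hN : 1 ≤ N) {σ : ℝ} (hs : 0 < σ) :
    IntegrableOn (fun T : ℝ => qf (N / T) * T ^ (-σ - 1)) (Ioi 1) ∧
    ∫ T in Ioi (1:ℝ), qf (N / T) * T ^ (-σ - 1) = N ^ (-σ) * (1 / ((σ + 1) * (σ + 2))) := by
  obtain ⟨h1, h2⟩ := qf_integrable hN (s := (σ : ℂ)) (by simpa using hs)
  have hEq : EqOn (fun T : ℝ => (qf (N / T) : ℂ) * (T : ℂ) ^ (-(σ:ℂ) - 1))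
    (fun T : ℝ => ((qf (N / T) * T ^ (-σ - 1) : ℝ) : ℂ)) (Ioi 1) := fun T hT => by
      have : 0 ≤ T := by linarith [mem_Ioi.mp hT]
      push_cast [Complex.ofReal_cpow this]
      rfl
  rw [integrableOn_congr_fun hEq measurableSet_Ioi] at h1
  rw [setIntegral_congr_fun measurableSet_Ioi hEq] at h2
  constructor
  · have := h1.re
    simpa [IntegrableOn] using this
  · have h3 : ((∫ T in Ioi (1:ℝ), qf (N / T) * T ^ (-σ - 1) : ℝ) : ℂ) =
      ((N ^ (-σ) * (1 / ((σ + 1) * (σ + 2))) : ℝ) : ℂ) := by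
      rw [← integral_complex_ofReal, h2]
      push_cast [Complex.ofReal_cpow (by linarith : 0 ≤ N)]
      rfl
    exact_mod_cast h3

lemma norm_cpow_T {T : ℝ} (hT : 0 < T) (s : ℂ) : ‖(T : ℂ) ^ (-s - 1)‖ = T ^ (-s.re - 1) := by
  rw [Complex.norm_cpow_eq_rpow_re_of_pos hT]; simp

/-- counting data -/
structure Cnt {ι : Type*} (N : ι → ℝ) (c A δ : ℝ) : Prop where
  one_le : ∀ i, 1 ≤ N i
  summ : ∀ T : ℝ, 0 < T → Summable fun i => qf (N i / T)
  c_pos : 0 < c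
  δ_pos : 0 < δ
  δ_le : δ ≤ 1
  asymp : ∀ T : ℝ, 1 ≤ T → |∑' i, qf (N i / T) - c * T| ≤ A * T ^ (1 - δ)

variable {ι : Type*} {N : ι → ℝ} {c A δ : ℝ}

lemma Cnt.A_nonneg (h : Cnt N c A δ) : 0 ≤ A := by
  have := (abs_nonneg _).trans (h.asymp 1 le_rfl)
  simpa using this

lemma Cnt.summable (h : Cnt N c A δ) {σ : ℝ} (hσ : 1 < σ) : Summable fun i => N i ^ (-σ) := by
  have hσ0 : 0 < σ := by linarith
  have hA := h.A_nonneg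
  set κ := 1 / ((σ + 1) * (σ + 2)) with hκ
  have hκ0 : 0 < κ := by positivity
  have hN0 : ∀ i, 0 < N i := fun i => by linarith [h.one_le i]
  have hIntg : IntegrableOn (fun T : ℝ => (c + A) * T ^ (-σ)) (Ioi 1) :=
    (integrableOn_Ioi_rpow_of_lt (by linarith) one_pos).const_mul _
  refine summable_of_sum_le (c := (∫ T in Ioi (1:ℝ), (c + A) * T ^ (-σ)) / κ)
    (fun i => (Real.rpow_pos_of_pos (hN0 i) _).le) fun S => ?_
  rw [le_div_iff₀ hκ0, Finset.sum_mul]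
  rw [Finset.sum_congr rfl fun i _ => (qf_integral_real (h.one_le i) hσ0).2.symm]
  rw [← integral_finsetSum _ fun i _ => (qf_integral_real (h.one_le i) hσ0).1]
  refine setIntegral_mono_on (integrable_finsetSum _ fun i _ =>
    (qf_integral_real (h.one_le i) hσ0).1) hIntg measurableSet_Ioi fun T hT => ?_
  have hT1 : 1 ≤ T := le_of_lt hT
  have hT0 : 0 < T := by linarith
  rw [← Finset.sum_mul]
  have h1 : ∑ i ∈ S, qf (N i / T) ≤ (c + A) * T := by
    refine ((h.summ T hT0).sum_le_tsum S fun i _ => qf_nonneg (by have := hN0 i; positivity)).trans ?_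
    have h2 := (abs_le.mp (h.asymp T hT1)).2
    have h3 : T ^ (1 - δ) ≤ T := by
      conv_rhs => rw [← Real.rpow_one T]
      exact Real.rpow_le_rpow_of_exponent_le hT1 (by linarith [h.δ_pos])
    nlinarith
  calc _ ≤ (c + A) * T * T ^ (-σ - 1) := by gcongr
    _ = _ := by
      rw [mul_assoc]; congr 1
      rw [Real.rpow_sub hT0, Real.rpow_one]; field_simp

lemma Cnt.hasSum (h : Cnt N c A δ) [Countable ι] {s : ℂ} (hs : 1 < s.re) :
    ∫ T in Ioi (1:ℝ), ((∑' i, qf (N i / T) : ℝ) : ℂ) * (T : ℂ) ^ (-s - 1) =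
      (∑' i, (N i : ℂ) ^ (-s)) * (1 / ((s + 1) * (s + 2))) := by
  have hs0 : 0 < s.re := by linarith
  have hN0 : ∀ i, 0 < N i := fun i => by linarith [h.one_le i]
  have key := hasSum_integral_of_summable_integral_norm
    (μ := volume.restrict (Ioi (1:ℝ)))
    (F := fun i (T : ℝ) => (qf (N i / T) : ℂ) * (T : ℂ) ^ (-s - 1))
    (fun i => (qf_integrable (h.one_le i) hs0).1) (by
      have : ∀ i, ∫ T in Ioi (1:ℝ), ‖(qf (N i / T) : ℂ) * (T : ℂ) ^ (-s - 1)‖ =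
          N i ^ (-s.re) * (1 / ((s.re + 1) * (s.re + 2))) := fun i => by
        rw [← (qf_integral_real (h.one_le i) hs0).2]
        refine setIntegral_congr_fun measurableSet_Ioi fun T hT => ?_
        have hT0 : 0 < T := by linarith [mem_Ioi.mp hT]
        rw [norm_mul, norm_cpow_T hT0, Complex.norm_real, Real.norm_eq_abs,
          abs_of_nonneg (qf_nonneg (by have := hN0 i; positivity))]
      simp only [this]
      exact (h.summable hs).mul_right _)
  have e : ∀ i, ∫ T in Ioi (1:ℝ), (qf (N i / T) : ℂ) * (T : ℂ) ^ (-s - 1) =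
      (N i : ℂ) ^ (-s) * (1 / ((s + 1) * (s + 2))) := fun i => (qf_integrable (h.one_le i) hs0).2
  simp only [e] at key
  rw [← tsum_mul_right, key.tsum_eq]
  refine setIntegral_congr_fun measurableSet_Ioi fun T hT => ?_
  rw [Complex.ofReal_tsum, tsum_mul_right]

end PIT
end An1

section An2
namespace PIT
open MeasureTheory Set

variable {ι : Type*} {N : ι → ℝ} {c A δ : ℝ}

def Ef (N : ι → ℝ) (c : ℝ) : ℝ → ℂ :=
  (Ioi (1:ℝ)).indicator fun T => ((∑' i, qf (N i / T) - c * T : ℝ) : ℂ)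

lemma measurable_qf : Measurable qf := by
  unfold qf; fun_prop

lemma Ef_measurable [Countable ι] : Measurable (Ef N c) := by
  refine Measurable.indicator ?_ measurableSet_Ioi
  refine Complex.measurable_ofReal.comp ?_
  refine Measurable.sub ?_ (by fun_prop)
  exact Measurable.tsum fun i => measurable_qf.comp (by fun_prop)

lemma Cnt.Ef_bound (h : Cnt N c A δ) (T : ℝ) (hT : 0 < T) : ‖Ef N c T‖ ≤ A * T ^ (1 - δ) := by
  unfold Ef
  by_cases h1 : T ∈ Ioi 1
  · rw [indicator_of_mem h1, Complex.norm_real, Real.norm_eq_abs]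
    exact h.asymp T (le_of_lt h1)
  · rw [indicator_of_notMem h1, norm_zero]
    have := h.A_nonneg
    positivity

lemma Cnt.Ef_locInt (h : Cnt N c A δ) [Countable ι] : LocallyIntegrableOn (Ef N c) (Ioi 0) := by
  have h1 : LocallyIntegrableOn (fun T : ℝ => A * T ^ (1 - δ)) (Ioi 0) := by
    refine ContinuousOn.locallyIntegrableOn ?_ measurableSet_Ioi
    refine continuousOn_const.mul (continuousOn_id.rpow_const fun x hx => Or.inl (ne_of_gt hx))
  rw [locallyIntegrableOn_iff isLocallyClosed_Ioi] at h1 ⊢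
  intro k hk hkc
  refine Integrable.mono' (h1 k hk hkc) Ef_measurable.aestronglyMeasurable ?_
  refine (ae_restrict_iff' hkc.measurableSet).mpr (ae_of_all _ fun T hT => h.Ef_bound T (hk hT))

lemma Cnt.Ef_bigO (h : Cnt N c A δ) : Ef N c =O[atTop] fun x => x ^ (-(δ - 1)) := by
  refine Asymptotics.IsBigO.of_bound A ?_
  filter_upwards [eventually_gt_atTop 0] with T hT
  refine (h.Ef_bound T hT).trans ?_
  rw [Real.norm_eq_abs, abs_of_pos (by positivity)]
  simp

lemma Ef_bigO_zero (b : ℝ) : Ef N c =O[𝓝[>] 0] fun x => x ^ (-b) := by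
  refine Asymptotics.IsBigO.of_bound 0 ?_
  have : ∀ᶠ x : ℝ in 𝓝[>] 0, x < 1 := by
    filter_upwards [Ioo_mem_nhdsGT one_pos] with x hx using hx.2
  filter_upwards [this] with T hT
  unfold Ef
  rw [indicator_of_notMem (by simpa using hT.le)]
  simp

lemma Cnt.R_diff (h : Cnt N c A δ) [Countable ι] {s : ℂ} (hs : 1 - δ < s.re) :
    DifferentiableAt ℂ (fun s => mellin (Ef N c) (-s)) s := by
  have h1 : DifferentiableAt ℂ (mellin (Ef N c)) (-s) :=
    mellin_differentiableAt_of_isBigO_rpow h.Ef_locInt h.Ef_bigO (by simp; linarith)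
      (Ef_bigO_zero (-s.re - 1)) (by simp)
  exact DifferentiableAt.comp (g := mellin (Ef N c)) (f := fun s => -s) s h1 (by fun_prop)

lemma R_eq (s : ℂ) : mellin (Ef N c) (-s) =
    ∫ T in Ioi (1:ℝ), (T : ℂ) ^ (-s - 1) * ((∑' i, qf (N i / T) - c * T : ℝ) : ℂ) := by
  unfold mellin Ef
  have : ∀ T : ℝ, (T : ℂ) ^ (-s - 1) • (Ioi (1:ℝ)).indicator
      (fun T => ((∑' i, qf (N i / T) - c * T : ℝ) : ℂ)) T = (Ioi (1:ℝ)).indicator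
      (fun T : ℝ => (T : ℂ) ^ (-s - 1) * ((∑' i, qf (N i / T) - c * T : ℝ) : ℂ)) T := by
    intro T
    by_cases h : T ∈ Ioi 1
    · rw [indicator_of_mem h, indicator_of_mem h, smul_eq_mul]
    · rw [indicator_of_notMem h, indicator_of_notMem h, smul_zero]
  simp only [this]
  rw [setIntegral_indicator measurableSet_Ioi, inter_eq_right.mpr (Ioi_subset_Ioi zero_le_one)]

lemma Cnt.bound_pt (h : Cnt N c A δ) (s : ℂ) {T : ℝ} (hT : T ∈ Ioi (1:ℝ)) :
    ‖(T : ℂ) ^ (-s - 1) * ((∑' i, qf (N i / T) - c * T : ℝ) : ℂ)‖ ≤ A * T ^ (-s.re - δ) := by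
  have hT1 : 1 < T := hT
  have hT0 : 0 < T := by linarith
  rw [norm_mul, norm_cpow_T hT0, Complex.norm_real, Real.norm_eq_abs]
  calc _ ≤ T ^ (-s.re - 1) * (A * T ^ (1 - δ)) := by gcongr; exact h.asymp T hT1.le
    _ = A * (T ^ (-s.re - 1) * T ^ (1 - δ)) := by ring
    _ = _ := by rw [← Real.rpow_add hT0]; ring_nf

lemma Cnt.R_int (h : Cnt N c A δ) [Countable ι] {s : ℂ} (hs : 1 - δ < s.re) :
    IntegrableOn (fun T : ℝ => (T : ℂ) ^ (-s - 1) * ((∑' i, qf (N i / T) - c * T : ℝ) : ℂ))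
      (Ioi 1) := by
  refine Integrable.mono' (g := fun T : ℝ => A * T ^ (-s.re - δ)) ?_ ?_ ?_
  · exact (integrableOn_Ioi_rpow_of_lt (by linarith) one_pos).const_mul _
  · refine AEStronglyMeasurable.mul ?_ ?_
    · refine ContinuousOn.aestronglyMeasurable ?_ measurableSet_Ioi
      intro T hT
      have hT1 : (1:ℝ) < T := hT
      exact (ContinuousAt.cpow (f := fun T : ℝ => (T : ℂ)) (g := fun _ => -s - 1) (by fun_prop)
        (by fun_prop) (by left; simpa using (by linarith : 0 < T))).continuousWithinAt
    · refine (Complex.measurable_ofReal.comp ?_).aestronglyMeasurable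
      refine Measurable.sub ?_ (by fun_prop)
      exact Measurable.tsum fun i => measurable_qf.comp (by fun_prop)
  · exact (ae_restrict_iff' measurableSet_Ioi).mpr (ae_of_all _ fun T hT => h.bound_pt s hT)

lemma Cnt.R_bound (h : Cnt N c A δ) {s : ℂ} (hs : 1 - δ / 2 ≤ s.re) :
    ‖mellin (Ef N c) (-s)‖ ≤ 2 * A / δ := by
  have hA := h.A_nonneg
  have hδ := h.δ_pos
  rw [R_eq]
  have i1 : IntegrableOn (fun T : ℝ => A * T ^ (-s.re - δ)) (Ioi 1) :=
    (integrableOn_Ioi_rpow_of_lt (by linarith) one_pos).const_mul _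
  refine (norm_integral_le_of_norm_le i1 ((ae_restrict_iff' measurableSet_Ioi).mpr
    (ae_of_all _ fun T hT => h.bound_pt s hT))).trans ?_
  rw [integral_const_mul, integral_Ioi_rpow_of_lt (by linarith) one_pos, Real.one_rpow,
    neg_div, ← div_neg, mul_one_div, mul_comm 2 A, ← div_div_eq_mul_div]
  exact div_le_div_of_nonneg_left hA (by positivity) (by linarith)

theorem Cnt.continuation [Countable ι] (h : Cnt N c A δ) : ∃ Z : ℂ → ℂ,
    DifferentiableOn ℂ Z {s | 1 - δ < s.re} ∧
    (∀ s : ℂ, 1 < s.re → Z s = (s - 1) * ∑' i, (N i : ℂ) ^ (-s)) ∧ Z 1 ≠ 0 ∧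
    ∃ B : ℝ, 0 < B ∧ ∀ s : ℂ, 1 - δ / 2 ≤ s.re → ‖Z s‖ ≤ B * (1 + ‖s‖) ^ 3 := by
  have hA := h.A_nonneg
  have hδ := h.δ_pos
  have hc := h.c_pos
  refine ⟨fun s => (s + 1) * (s + 2) * (c + (s - 1) * mellin (Ef N c) (-s)), ?_, ?_, ?_,
    2 * (c + 2 * A / δ), by positivity, ?_⟩
  · intro s hs
    have := h.R_diff hs
    exact (DifferentiableAt.mul (by fun_prop) (DifferentiableAt.add (by fun_prop)
      (DifferentiableAt.mul (by fun_prop) this))).differentiableWithinAt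
  · intro s hs
    have hs1 : s - 1 ≠ 0 := fun h => by
      have := congrArg Complex.re h; simp at this; linarith
    have h1 : s + 1 ≠ 0 := fun h => by have := congrArg Complex.re h; simp at this; linarith
    have h2 : s + 2 ≠ 0 := fun h => by have := congrArg Complex.re h; simp at this; linarith
    have key := h.hasSum hs
    have e : ∫ T in Ioi (1:ℝ), ((∑' i, qf (N i / T) : ℝ) : ℂ) * (T : ℂ) ^ (-s - 1) =
        mellin (Ef N c) (-s) + c * (1 / (s - 1)) := by
      have i2 : IntegrableOn (fun T : ℝ => (c : ℂ) * (T : ℂ) ^ (-s)) (Ioi 1) :=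
        (integrableOn_Ioi_cpow_of_lt (by simp; linarith) one_pos).const_mul _
      have e2 : ∫ T in Ioi (1:ℝ), (c : ℂ) * (T : ℂ) ^ (-s) = c * (1 / (s - 1)) := by
        rw [integral_const_mul, integral_Ioi_cpow_of_lt (by simp; linarith) one_pos]
        congr 1
        rw [Complex.ofReal_one, Complex.one_cpow, show -s + 1 = -(s - 1) by ring, neg_div_neg_eq]
      rw [R_eq, ← e2, ← integral_add (h.R_int (by linarith)) i2]
      refine setIntegral_congr_fun measurableSet_Ioi fun T hT => ?_
      have hT0 : (T : ℂ) ≠ 0 := by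
        have : (1:ℝ) < T := hT
        exact_mod_cast (by linarith : T ≠ 0)
      have e3 : (T : ℂ) ^ (-s - 1) = (T : ℂ) ^ (-s) / T := by
        rw [Complex.cpow_sub _ _ hT0, Complex.cpow_one]
      simp only [e3]
      push_cast
      field_simp
      ring
    rw [e] at key
    have h3 : ∑' i, (N i : ℂ) ^ (-s) = (s + 1) * (s + 2) *
        (mellin (Ef N c) (-s) + c * (1 / (s - 1))) := by
      rw [key]; field_simp
    rw [h3]
    field_simp
    ring
  · have : ((1:ℂ) + 1) * (1 + 2) * (c + (1 - 1) * mellin (Ef N c) (-1)) = 6 * c := by ring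
    simp only [this]
    have : (c : ℂ) ≠ 0 := by exact_mod_cast hc.ne'
    simpa using this
  · intro s hs
    have hR := h.R_bound hs
    have hs0 := norm_nonneg s
    have h1 : ‖s + 1‖ ≤ 1 + ‖s‖ := (norm_add_le _ _).trans (by simp [add_comm])
    have h2 : ‖s + 2‖ ≤ 2 * (1 + ‖s‖) := (norm_add_le _ _).trans (by simp; linarith)
    have h3 : ‖s - 1‖ ≤ 1 + ‖s‖ := (norm_sub_le _ _).trans (by simp [add_comm])
    have h4 : ‖(c : ℂ) + (s - 1) * mellin (Ef N c) (-s)‖ ≤ (1 + ‖s‖) * (c + 2 * A / δ) := by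
      refine (norm_add_le _ _).trans ?_
      rw [norm_mul, Complex.norm_real, Real.norm_eq_abs, abs_of_pos hc]
      have : ‖s - 1‖ * ‖mellin (Ef N c) (-s)‖ ≤ (1 + ‖s‖) * (2 * A / δ) :=
        mul_le_mul h3 hR (norm_nonneg _) (by positivity)
      nlinarith
    rw [norm_mul, norm_mul]
    calc _ ≤ (1 + ‖s‖) * (2 * (1 + ‖s‖)) * ((1 + ‖s‖) * (c + 2 * A / δ)) := by gcongr
      _ = _ := by ring

end PIT
end An2

section An3
namespace PIT

section euler
variable {M : Type*} [CommMonoidWithZero M] [UniqueFactorizationMonoid M]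
  [Subsingleton Mˣ]

open Classical in
/-- the part of `f` supported on elements prime to `S`. -/
def gS (f : M →*₀ ℂ) (S : Finset {p : M // Prime p}) (I : M) : ℂ :=
  if ∀ q ∈ S, ¬ (q : M) ∣ I then f I else 0

lemma gS_norm_le (f : M →*₀ ℂ) (S : Finset {p : M // Prime p}) (I : M) : ‖gS f S I‖ ≤ ‖f I‖ := by
  unfold gS; split_ifs <;> simp

lemma gS_summable {f : M →*₀ ℂ} (hf : Summable (fun m => ‖f m‖)) (S : Finset {p : M // Prime p}) :
    Summable (gS f S) :=
  Summable.of_norm_bounded hf (gS_norm_le f S)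

lemma gS_insert {f : M →*₀ ℂ} (hf : Summable (fun m => ‖f m‖)) (S : Finset {p : M // Prime p})
    (p : {p : M // Prime p}) (hp : p ∉ S) [DecidableEq {p : M // Prime p}] :
    ∑' I, gS f (insert p S) I = (1 - f p) * ∑' I, gS f S I := by
  classical
  have h1 : ∀ I, gS f S I - gS f (insert p S) I = if (p : M) ∣ I then gS f S I else 0 := by
    intro I
    unfold gS
    by_cases h : (p : M) ∣ I <;> simp [h]
  have hinj : Function.Injective (fun I : M => (p : M) * I) := by
    intro a b hab
    exact mul_left_cancel₀ p.2.ne_zero hab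
  have h2 : ∑' I, (if (p : M) ∣ I then gS f S I else 0) = f p * ∑' I, gS f S I := by
    rw [← hinj.tsum_eq (f := fun I => if (p : M) ∣ I then gS f S I else 0), ← tsum_mul_left]
    · apply tsum_congr
      intro I
      simp only [dvd_mul_right, if_true]
      unfold gS
      have : (∀ q ∈ S, ¬ (q : M) ∣ p * I) ↔ (∀ q ∈ S, ¬ (q : M) ∣ I) := by
        apply forall₂_congr
        intro q hq
        rw [not_iff_not]
        constructor
        · intro h
          rcases q.2.dvd_or_dvd h with h | h
          · exfalso
            have := (q.2.dvd_prime_iff_associated p.2).1 h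
            rw [associated_iff_eq] at this
            exact hp (by rwa [← Subtype.ext this])
          · exact h
        · intro h; exact h.mul_left _
      simp only [this]
      split_ifs <;> simp
    · intro I hI
      simp only [Function.mem_support, ne_eq, ite_eq_right_iff, Classical.not_imp] at hI
      obtain ⟨⟨J, hJ⟩, -⟩ := hI
      exact ⟨J, hJ.symm⟩
  have h3 := (gS_summable hf S).tsum_sub (gS_summable hf (insert p S))
  rw [tsum_congr h1, h2] at h3
  linear_combination h3

lemma gS_prod {f : M →*₀ ℂ} (hf : Summable (fun m => ‖f m‖)) (S : Finset {p : M // Prime p}) :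
    ∑' I, gS f S I = (∏ p ∈ S, (1 - f p)) * ∑' I, f I := by
  classical
  induction S using Finset.induction_on with
  | empty => simp [gS]
  | insert p S hp ih => rw [gS_insert hf S p hp, ih, Finset.prod_insert hp]; ring

lemma gS_tendsto {f : M →*₀ ℂ} (hf : Summable (fun m => ‖f m‖)) :
    Tendsto (fun S => ∑' I, gS f S I) atTop (𝓝 1) := by
  classical
  have : (1 : ℂ) = ∑' I : M, if I = 1 then 1 else 0 := by simp
  rw [this]
  refine tendsto_tsum_of_dominated_convergence hf ?_ (Eventually.of_forall fun S I => gS_norm_le f S I)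
  intro I
  apply tendsto_const_nhds.congr'
  by_cases h1 : I = 1
  · subst h1
    refine Eventually.of_forall fun S => ?_
    have : ∀ q ∈ S, ¬ (q : M) ∣ 1 := fun q _ h => q.2.not_dvd_one h
    simp only [gS, if_pos this, map_one, if_true]
  · by_cases h0 : I = 0
    · subst h0
      refine Eventually.of_forall fun S => ?_
      simp [gS, h1]
    · have hu : ¬ IsUnit I := by
        intro hu; exact h1 (by simpa using hu)
      obtain ⟨q, hq, hqI⟩ := WfDvdMonoid.exists_irreducible_factor hu h0
      have hq' : Prime q := UniqueFactorizationMonoid.irreducible_iff_prime.1 hq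
      filter_upwards [eventually_ge_atTop ({⟨q, hq'⟩} : Finset {p : M // Prime p})] with S hS
      have : ¬ (∀ q ∈ S, ¬ (q : M) ∣ I) := by
        intro h
        exact h ⟨q, hq'⟩ (hS (by simp)) hqI
      simp only [gS, this, h1, if_false]

theorem euler_exp {f : M →*₀ ℂ} (hf : Summable (fun m => ‖f m‖))
    (hp : ∀ p, Prime p → ‖f p‖ ≤ 1/2) :
    Summable (fun p : {p : M // Prime p} => -Complex.log (1 - f p)) ∧
    ∑' m, f m = Complex.exp (∑' p : {p : M // Prime p}, -Complex.log (1 - f p)) := by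
  have hs : Summable (fun p : {p : M // Prime p} => Complex.log (1 - f p)) := by
    have : Summable (fun p : {p : M // Prime p} => f p) :=
      (Summable.of_norm hf).comp_injective Subtype.val_injective
    simpa [sub_eq_add_neg] using Complex.summable_log_one_add_of_summable this.neg
  refine ⟨hs.neg, ?_⟩
  have h1 : Tendsto (fun S : Finset {p : M // Prime p} => (∏ p ∈ S, (1 - f p))) atTop
      (𝓝 (Complex.exp (∑' p : {p : M // Prime p}, Complex.log (1 - f p)))) := by
    have := (Complex.continuous_exp.tendsto _).comp hs.hasSum
    refine this.congr fun S => ?_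
    simp only [Function.comp, Complex.exp_sum]
    refine Finset.prod_congr rfl fun p _ => Complex.exp_log ?_
    intro h
    have h2 := hp p p.2
    rw [← sub_eq_zero.1 h] at h2
    norm_num at h2
  have h2 := gS_tendsto hf
  simp_rw [gS_prod hf] at h2
  have h3 := tendsto_nhds_unique h2 (h1.mul_const _)
  rw [tsum_neg, Complex.exp_neg]
  field_simp
  rw [mul_comm]
  exact h3.symm

end euler

section ideals
open NumberField

/-- the data of a Dirichlet series with an Euler product and a continuation. -/
structure Dat {P : Type} (Np : P → ℕ) (Z : ℂ → ℂ) (δ B : ℝ) : Prop where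
  two_le : ∀ p, 2 ≤ Np p
  summ : ∀ σ : ℝ, 1 < σ → Summable fun p => (Np p : ℝ) ^ (-σ)
  δ_pos : 0 < δ
  δ_le : δ ≤ 1
  diff : DifferentiableOn ℂ Z {s | 1 - δ < s.re}
  euler : ∀ s : ℂ, 1 < s.re → Z s = (s - 1) * Complex.exp (∑' p, -Complex.log (1 - (Np p : ℂ) ^ (-s)))
  Z_one : Z 1 ≠ 0
  B_pos : 0 < B
  bound : ∀ s : ℂ, 1 - δ / 2 ≤ s.re → ‖Z s‖ ≤ B * (1 + ‖s‖) ^ 3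

variable (K : Type) [Field K] [NumberField K]

/-- absolute norm as a complex power. -/
def fS (s : ℂ) (hs : s ≠ 0) : Ideal (𝓞 K) →*₀ ℂ where
  toFun I := (Ideal.absNorm I : ℂ) ^ (-s)
  map_zero' := by
    rw [map_zero]
    simp [hs]
  map_one' := by simp
  map_mul' I J := by
    rw [map_mul, Nat.cast_mul, Complex.natCast_mul_natCast_cpow]

lemma absNorm_prime_two_le (p : Ideal (𝓞 K)) (hp : Prime p) : 2 ≤ Ideal.absNorm p := by
  have h0 : Ideal.absNorm p ≠ 0 := by
    rw [Ne, Ideal.absNorm_eq_zero_iff]; exact hp.ne_zero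
  have h1 : Ideal.absNorm p ≠ 1 := by
    rw [Ne, Ideal.absNorm_eq_one_iff]
    exact (Ideal.isPrime_of_prime hp).ne_top
  omega

lemma countable_ideal : Countable (Ideal (𝓞 K)) := by
  have : (⋃ n : ℕ, {I : Ideal (𝓞 K) | Ideal.absNorm I = n}) = Set.univ := by
    ext I; simp
  rw [← Set.countable_univ_iff, ← this]
  refine Set.countable_iUnion fun n => ?_
  exact (Ideal.finite_setOf_absNorm_eq n).countable

theorem exists_dat : ∃ (Z : ℂ → ℂ) (δ B : ℝ),
    Dat (fun p : {p : Ideal (𝓞 K) // Prime p} => Ideal.absNorm p.1) Z δ B := by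
  obtain ⟨c, hc, A, hA⟩ := ideal_asymp (K := K)
  have hn : (1:ℝ) ≤ Module.finrank ℚ K := by
    exact_mod_cast Module.finrank_pos
  have hcnt : Cnt (fun I : nonZeroDivisors (Ideal (𝓞 K)) => (Ideal.absNorm (I : Ideal (𝓞 K)) : ℝ))
      c A (Module.finrank ℚ K : ℝ)⁻¹ := by
    refine ⟨?_, ?_, hc, by positivity, inv_le_one_of_one_le₀ hn, hA⟩
    · intro I
      have : Ideal.absNorm (I : Ideal (𝓞 K)) ≠ 0 := by
        rw [Ne, Ideal.absNorm_eq_zero_iff]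
        exact nonZeroDivisors.coe_ne_zero I
      exact_mod_cast Nat.one_le_iff_ne_zero.2 this
    · intro T hT
      exact summable_of_hasFiniteSupport (qf_support_finite hT)
  haveI := countable_ideal K
  obtain ⟨Z, hZ1, hZ2, hZ3, B, hB, hZ4⟩ := hcnt.continuation
  have key : ∀ σ : ℝ, 1 < σ → Summable fun I : Ideal (𝓞 K) => (Ideal.absNorm I : ℝ) ^ (-σ) := by
    intro σ hσ
    have h1 := hcnt.summable hσ
    refine (Function.Injective.summable_iff (f := fun I : Ideal (𝓞 K) => (Ideal.absNorm I : ℝ) ^ (-σ))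
      (g := fun I : nonZeroDivisors (Ideal (𝓞 K)) => (I : Ideal (𝓞 K))) Subtype.val_injective ?_).1 h1
    intro I hI
    have : I = ⊥ := by
      by_contra h
      exact hI ⟨⟨I, mem_nzd h⟩, rfl⟩
    subst this
    rw [Ideal.absNorm_bot, Nat.cast_zero, Real.zero_rpow (by linarith)]
  have key2 : ∀ s : ℂ, 1 < s.re → ∑' I : nonZeroDivisors (Ideal (𝓞 K)), (((Ideal.absNorm (I : Ideal (𝓞 K)) : ℝ)) : ℂ) ^ (-s) = ∑' I : Ideal (𝓞 K), (Ideal.absNorm I : ℂ) ^ (-s) := by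
    intro s hs
    have := Function.Injective.tsum_eq (f := fun I : Ideal (𝓞 K) => (Ideal.absNorm I : ℂ) ^ (-s))
      (g := fun I : nonZeroDivisors (Ideal (𝓞 K)) => (I : Ideal (𝓞 K))) Subtype.val_injective ?_
    · rw [← this]; simp
    · intro I hI
      refine ⟨⟨I, mem_nzd ?_⟩, rfl⟩
      rintro rfl
      apply hI
      simp only [Ideal.absNorm_bot, Nat.cast_zero]
      rw [Complex.zero_cpow]
      intro h
      have := congrArg Complex.re h
      simp at this
      linarith
  have hnorm : ∀ s : ℂ, 1 < s.re → ∀ I : Ideal (𝓞 K),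
      ‖(Ideal.absNorm I : ℂ) ^ (-s)‖ = (Ideal.absNorm I : ℝ) ^ (-s.re) := by
    intro s hs I
    rw [Complex.norm_natCast_cpow_of_re_ne_zero]
    · simp
    · simp; linarith
  refine ⟨Z, _, B, ⟨fun p => absNorm_prime_two_le K p.1 p.2, ?_, hcnt.δ_pos, hcnt.δ_le, hZ1, ?_, hZ3, hB, hZ4⟩⟩
  · intro σ hσ
    exact (key σ hσ).comp_injective Subtype.val_injective
  · intro s hs
    have hs0 : s ≠ 0 := by rintro rfl; simp at hs; linarith
    have hfs : Summable (fun I => ‖fS K s hs0 I‖) := by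
      refine (key s.re hs).congr fun I => (hnorm s hs I).symm
    have hhalf : ∀ p, Prime p → ‖fS K s hs0 p‖ ≤ 1/2 := by
      intro p hp
      have h2 : (2:ℝ) ≤ Ideal.absNorm p := by exact_mod_cast absNorm_prime_two_le K p hp
      refine (hnorm s hs p).le.trans ?_
      rw [Real.rpow_neg (by positivity), one_div]
      apply inv_anti₀ (by norm_num)
      calc (2:ℝ) = 2 ^ (1:ℝ) := by simp
        _ ≤ 2 ^ s.re := Real.rpow_le_rpow_of_exponent_le (by norm_num) hs.le
        _ ≤ _ := Real.rpow_le_rpow (by norm_num) h2 (by linarith)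
    have := (euler_exp hfs hhalf).2
    rw [hZ2 s hs, key2 s hs]
    congr 1
end ideals
end PIT
end An3

section An4
namespace PIT
open Complex Complex.HadamardThreeLines

variable {P : Type} {Np : P → ℕ} {Z : ℂ → ℂ} {δ B : ℝ}

lemma Dat.pos (h : Dat Np Z δ B) (p : P) : 0 < Np p := by have := h.two_le p; omega

lemma Dat.norm_term (h : Dat Np Z δ B) (p : P) (s : ℂ) :
    ‖(Np p : ℂ) ^ (-s)‖ = (Np p : ℝ) ^ (-s.re) := by
  rw [norm_natCast_cpow_of_pos (h.pos p)]; simp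

lemma Dat.rpow_le (h : Dat Np Z δ B) (p : P) {a b : ℝ} (hab : a ≤ b) :
    (Np p : ℝ) ^ (-b) ≤ (Np p : ℝ) ^ (-a) := by
  have : (2:ℝ) ≤ Np p := by exact_mod_cast h.two_le p
  exact Real.rpow_le_rpow_of_exponent_le (by linarith) (by linarith)

lemma Dat.norm_term_half (h : Dat Np Z δ B) (p : P) {s : ℂ} (hs : 1 ≤ s.re) :
    ‖(Np p : ℂ) ^ (-s)‖ ≤ 1 / 2 := by
  rw [h.norm_term]
  refine (h.rpow_le p hs).trans ?_
  have h2 : (2:ℝ) ≤ Np p := by exact_mod_cast h.two_le p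
  rw [Real.rpow_neg (by positivity), Real.rpow_one, one_div]
  exact inv_anti₀ (by norm_num) h2

lemma Dat.norm_log_le (h : Dat Np Z δ B) (p : P) {σ : ℝ} (hσ : 1 ≤ σ) {s : ℂ} (hs : σ ≤ s.re) :
    ‖-log (1 - (Np p : ℂ) ^ (-s))‖ ≤ 3 / 2 * (Np p : ℝ) ^ (-σ) := by
  rw [norm_neg, sub_eq_add_neg]
  refine (norm_log_one_add_half_le_self ?_).trans ?_
  · rw [norm_neg]; exact h.norm_term_half p (hσ.trans hs)
  · rw [norm_neg, h.norm_term]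
    exact mul_le_mul_of_nonneg_left (h.rpow_le p hs) (by norm_num)

lemma Dat.summable_log (h : Dat Np Z δ B) {s : ℂ} (hs : 1 < s.re) :
    Summable fun p => -log (1 - (Np p : ℂ) ^ (-s)) :=
  Summable.of_norm_bounded ((h.summ s.re hs).mul_left (3/2)) fun p => h.norm_log_le p hs.le le_rfl

lemma Dat.exp_bound (h : Dat Np Z δ B) {σ : ℝ} (hσ : 1 < σ) :
    ∃ E : ℝ, 0 < E ∧ ∀ s : ℂ, σ ≤ s.re → ‖exp (∑' p, -log (1 - (Np p : ℂ) ^ (-s)))‖ ≤ E := by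
  refine ⟨Real.exp (∑' p, 3 / 2 * (Np p : ℝ) ^ (-σ)), Real.exp_pos _, fun s hs => ?_⟩
  rw [norm_exp]
  refine Real.exp_le_exp.2 ((re_le_norm _).trans ?_)
  exact tsum_of_norm_bounded ((h.summ σ hσ).mul_left (3/2)).hasSum fun p => h.norm_log_le p hσ.le hs

lemma re_log_comb {a : ℝ} (ha₀ : 0 ≤ a) (ha₁ : a < 1) {z : ℂ} (hz : ‖z‖ = 1) :
      0 ≤ 3 * (-log (1 - a)).re + 4 * (-log (1 - a * z)).re + (-log (1 - a * z ^ 2)).re := by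
  have hac₀ : ‖(a : ℂ)‖ < 1 := by
    simp only [Complex.norm_of_nonneg ha₀, ha₁]
  have hac₁ : ‖a * z‖ < 1 := by rwa [norm_mul, hz, mul_one]
  have hac₂ : ‖a * z ^ 2‖ < 1 := by rwa [norm_mul, norm_pow, hz, one_pow, mul_one]
  rw [← ((hasSum_re <| hasSum_taylorSeries_neg_log hac₀).mul_left 3).add
    ((hasSum_re <| hasSum_taylorSeries_neg_log hac₁).mul_left 4) |>.add
    (hasSum_re <| hasSum_taylorSeries_neg_log hac₂) |>.tsum_eq]
  refine tsum_nonneg fun n ↦ ?_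
  simp only [← ofReal_pow, div_natCast_re, ofReal_re, mul_pow, mul_re, ofReal_im, zero_mul,
    sub_zero]
  rcases n.eq_zero_or_pos with rfl | hn
  · simp
  · simp only [← mul_div_assoc, ← add_div]
    refine div_nonneg ?_ n.cast_nonneg
    rw [← pow_mul, pow_mul', sq, mul_re, ← sq, ← sq, ← sq_norm_sub_sq_re, norm_pow, hz]
    convert! (show 0 ≤ 2 * a ^ n * ((z ^ n).re + 1) ^ 2 by positivity) using 1
    ring

/-- 3-4-1 inequality. -/
lemma Dat.three_four_one (h : Dat Np Z δ B) {σ : ℝ} (hσ : 1 < σ) (t : ℝ) :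
    (σ - 1) ^ 3 * |t| ^ 5 ≤ ‖Z σ‖ ^ 3 * ‖Z (σ + t * I)‖ ^ 4 * ‖Z (σ + 2 * t * I)‖ := by
  set s0 : ℂ := (σ : ℂ) with hs0
  set s1 : ℂ := σ + t * I with hs1
  set s2 : ℂ := σ + 2 * t * I with hs2
  have r0 : s0.re = σ := by simp [hs0]
  have r1 : s1.re = σ := by simp [hs1]
  have r2 : s2.re = σ := by simp [hs2]
  set L : ℂ → ℂ := fun s => ∑' p, -log (1 - (Np p : ℂ) ^ (-s)) with hL
  have hre : ∀ s : ℂ, 1 < s.re → HasSum (fun p => (-log (1 - (Np p : ℂ) ^ (-s))).re) (L s).re :=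
    fun s hs => hasSum_re (h.summable_log hs).hasSum
  have hcomb : 0 ≤ 3 * (L s0).re + 4 * (L s1).re + (L s2).re := by
    have := (((hre s0 (by rwa [r0])).mul_left 3).add ((hre s1 (by rwa [r1])).mul_left 4)).add
      (hre s2 (by rwa [r2]))
    refine this.nonneg fun p => ?_
    have hn : (Np p : ℂ) ≠ 0 := by exact_mod_cast (h.pos p).ne'
    have ha : (Np p : ℂ) ^ (-s0) = (((Np p : ℝ) ^ (-σ) : ℝ) : ℂ) := by
      rw [hs0, ofReal_cpow (by positivity)]; simp
    have hz1 : (Np p : ℂ) ^ (-s1) = (((Np p : ℝ) ^ (-σ) : ℝ) : ℂ) * (Np p : ℂ) ^ (-(t * I)) := by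
      rw [← ha, ← cpow_add _ _ hn]; congr 1; simp [hs0, hs1]; ring
    have hz2 : (Np p : ℂ) ^ (-s2) = (((Np p : ℝ) ^ (-σ) : ℝ) : ℂ) * ((Np p : ℂ) ^ (-(t * I))) ^ 2 := by
      rw [← ha, ← cpow_nat_mul, ← cpow_add _ _ hn]; congr 1; simp [hs0, hs2]; ring
    rw [ha, hz1, hz2]
    apply re_log_comb (by positivity)
    · have := h.norm_term_half p (s := s0) (by rw [r0]; exact hσ.le)
      rw [h.norm_term, r0] at this
      linarith
    · rw [norm_natCast_cpow_of_pos (h.pos p)]; simp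
  have hZ : ∀ s : ℂ, 1 < s.re → ‖Z s‖ = ‖s - 1‖ * Real.exp (L s).re := by
    intro s hs
    rw [h.euler s hs, norm_mul, norm_exp]
  rw [hZ s0 (by rwa [r0]), hZ s1 (by rwa [r1]), hZ s2 (by rwa [r2])]
  have n0 : σ - 1 ≤ ‖s0 - 1‖ := by
    have := re_le_norm (s0 - 1); simpa [r0] using this
  have n1 : |t| ≤ ‖s1 - 1‖ := by
    have := abs_im_le_norm (s1 - 1); simpa [hs1] using this
  have n2 : |t| ≤ ‖s2 - 1‖ := by
    have := abs_im_le_norm (s2 - 1)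
    simp [hs2, abs_mul] at this
    linarith [abs_nonneg t]
  calc (σ - 1) ^ 3 * |t| ^ 5 ≤ ((σ - 1) ^ 3 * |t| ^ 5) * Real.exp (3 * (L s0).re + 4 * (L s1).re + (L s2).re) := by
        apply le_mul_of_one_le_right
        · have : 0 ≤ σ - 1 := by linarith
          positivity
        · exact Real.one_le_exp hcomb
    _ = ((σ - 1) ^ 3 * |t| ^ 4 * |t|) * Real.exp (3 * (L s0).re + 4 * (L s1).re + (L s2).re) := by ring
    _ ≤ (‖s0 - 1‖ ^ 3 * ‖s1 - 1‖ ^ 4 * ‖s2 - 1‖) * Real.exp (3 * (L s0).re + 4 * (L s1).re + (L s2).re) := by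
        have : 0 ≤ σ - 1 := by linarith
        gcongr
    _ = _ := by
        rw [Real.exp_add, Real.exp_add, mul_comm 3, mul_comm 4, Real.exp_mul, Real.exp_mul]
        norm_cast
        ring

/-- Convexity bound near the line 1. -/
lemma Dat.upper (h : Dat Np Z δ B) : ∃ θ C : ℝ, 0 < θ ∧ θ < δ / 2 ∧ 0 < C ∧
    ∀ s : ℂ, |s.re - 1| ≤ θ → ‖Z s‖ ≤ C * (1 + |s.im|) ^ (1 + 1 / 16 : ℝ) := by
  have hδ := h.δ_pos
  have hδ1 := h.δ_le
  set θ := δ / 200 with hθ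
  obtain ⟨E, hE, hEb⟩ := h.exp_bound (σ := 1 + θ) (by rw [hθ]; linarith)
  set C := Real.exp 7 * max (27 * B) E with hC
  have hCpos : 0 < C := by
    have := h.B_pos
    positivity
  refine ⟨θ, C, by positivity, by rw [hθ]; linarith, hCpos, fun s0 hs0 => ?_⟩
  set t0 := s0.im with ht0
  set τ := 1 + |t0| with hτ
  have hτ1 : 1 ≤ τ := by rw [hτ]; linarith [abs_nonneg t0]
  set f : ℂ → ℂ := fun s => Z s * exp ((s - t0 * I) ^ 2) with hf
  set l := 1 - δ / 2 with hl
  set u := 1 + θ with hu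
  have hlu : l < u := by rw [hl, hu, hθ]; linarith
  have hexp : ∀ s : ℂ, l ≤ s.re → s.re ≤ u → ∀ k : ℕ, k ≤ 3 →
      (1 + |s.im - t0|) ^ k * ‖exp ((s - t0 * I) ^ 2)‖ ≤ Real.exp 7 := by
    intro s h1 h2 k hk
    set v := |s.im - t0| with hv
    have hv0 : 0 ≤ v := abs_nonneg _
    have e1 : ((s - t0 * I) ^ 2).re = s.re ^ 2 - v ^ 2 := by
      rw [hv, sq_abs]; simp [sq]
    rw [norm_exp, e1]
    have e2 : (1 + v) ^ k ≤ Real.exp (3 * v) := by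
      calc (1 + v) ^ k ≤ (1 + v) ^ 3 := pow_le_pow_right₀ (by linarith) hk
        _ ≤ (Real.exp v) ^ 3 := by
          gcongr; linarith [Real.add_one_le_exp v]
        _ = Real.exp (3 * v) := by rw [← Real.exp_nat_mul]; norm_num
    have e3 : s.re ^ 2 ≤ 4 := by nlinarith
    calc (1 + v) ^ k * Real.exp (s.re ^ 2 - v ^ 2) ≤ Real.exp (3 * v) * Real.exp (s.re ^ 2 - v ^ 2) := by gcongr
      _ = Real.exp (3 * v + (s.re ^ 2 - v ^ 2)) := (Real.exp_add _ _).symm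
      _ ≤ Real.exp 7 := Real.exp_le_exp.2 (by nlinarith [sq_nonneg (v - 3/2)])
  have him : ∀ s : ℂ, 1 + |s.im| ≤ τ * (1 + |s.im - t0|) := by
    intro s
    have : |s.im| ≤ |t0| + |s.im - t0| := by
      have := abs_add_le t0 (s.im - t0); simpa using this
    rw [hτ]
    nlinarith [abs_nonneg t0, abs_nonneg (s.im - t0), mul_nonneg (abs_nonneg t0) (abs_nonneg (s.im - t0))]
  have hall : ∀ s : ℂ, l ≤ s.re → s.re ≤ u → ‖f s‖ ≤ C * τ ^ 3 := by
    intro s h1 h2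
    have h3 : 1 + ‖s‖ ≤ 3 * (τ * (1 + |s.im - t0|)) := by
      have h4 := norm_le_abs_re_add_abs_im s
      have h5 : |s.re| ≤ 2 := abs_le.2 ⟨by linarith, by linarith⟩
      linarith [him s, abs_nonneg s.im]
    rw [hf, norm_mul]
    calc ‖Z s‖ * ‖exp ((s - t0 * I) ^ 2)‖ ≤ B * (3 * (τ * (1 + |s.im - t0|))) ^ 3 * ‖exp ((s - t0 * I) ^ 2)‖ := by
          gcongr
          refine (h.bound s h1).trans ?_
          have := h.B_pos
          gcongr
      _ = 27 * B * τ ^ 3 * ((1 + |s.im - t0|) ^ 3 * ‖exp ((s - t0 * I) ^ 2)‖) := by ring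
      _ ≤ 27 * B * τ ^ 3 * Real.exp 7 := by
          have := h.B_pos
          gcongr
          exact hexp s h1 h2 3 le_rfl
      _ ≤ max (27 * B) E * τ ^ 3 * Real.exp 7 := by
          gcongr; exact le_max_left _ _
      _ = C * τ ^ 3 := by rw [hC]; ring
  have hb : ∀ s ∈ re ⁻¹' {u}, ‖f s‖ ≤ C * τ := by
    intro s hs
    have hs : s.re = u := hs
    have hs1 : ‖Z s‖ ≤ (τ * (1 + |s.im - t0|)) * E := by
      rw [h.euler s (by rw [hs, hu, hθ]; linarith), norm_mul]
      gcongr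
      · have := norm_le_abs_re_add_abs_im (s - 1)
        have h5 : |(s - 1).re| ≤ 1 := by
          simp only [sub_re, one_re, hs, hu]
          rw [abs_le]; constructor <;> linarith
        have h6 : (s - 1).im = s.im := by simp
        rw [h6] at this
        linarith [him s]
      · exact hEb s hs.ge
    rw [hf, norm_mul]
    calc ‖Z s‖ * ‖exp ((s - t0 * I) ^ 2)‖ ≤ (τ * (1 + |s.im - t0|)) * E * ‖exp ((s - t0 * I) ^ 2)‖ := by gcongr
      _ = τ * E * ((1 + |s.im - t0|) ^ 1 * ‖exp ((s - t0 * I) ^ 2)‖) := by ring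
      _ ≤ τ * E * Real.exp 7 := by
          gcongr
          exact hexp s (by linarith) hs.le 1 (by norm_num)
      _ ≤ τ * max (27 * B) E * Real.exp 7 := by
          gcongr; exact le_max_right _ _
      _ = C * τ := by rw [hC]; ring
  have hd : DifferentiableOn ℂ f (verticalClosedStrip l u) := by
    apply DifferentiableOn.mul
    · refine h.diff.mono fun s hs => ?_
      have : l ≤ s.re := hs.1
      show 1 - δ < s.re
      linarith
    · fun_prop
  have hcl : closure (verticalStrip l u) ⊆ verticalClosedStrip l u := by
    apply closure_minimal
    · intro s hs; exact ⟨hs.1.le, hs.2.le⟩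
    · exact isClosed_Icc.preimage continuous_re
  have hs0' := abs_le.1 hs0
  have hmem : s0 ∈ verticalClosedStrip l u := ⟨by rw [hl]; linarith, by rw [hu]; linarith⟩
  have main := norm_le_interp_of_mem_verticalClosedStrip' (f := f) (z := s0) (a := C * τ ^ 3) (b := C * τ) hlu hmem
    (hd.mono hcl).diffContOnCl ?_ (fun s hs => hall s (by rw [show s.re = l from hs]) (by rw [show s.re = l from hs]; exact hlu.le)) hb
  swap
  · refine ⟨C * τ ^ 3, ?_⟩
    rintro _ ⟨s, hs, rfl⟩
    exact hall s hs.1 hs.2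
  set x := (s0.re - l) / (u - l) with hx
  have hx1 : 1 - x ≤ 1 / 32 := by
    rw [hx, sub_le_comm, le_div_iff₀ (by linarith), hl, hu, hθ]
    have := hs0'.1
    rw [hθ] at this
    linarith
  have hZf : ‖Z s0‖ ≤ ‖f s0‖ := by
    rw [hf, norm_mul]
    apply le_mul_of_one_le_right (norm_nonneg _)
    rw [norm_exp]
    apply Real.one_le_exp
    have : s0 - t0 * I = (s0.re : ℂ) := by
      apply Complex.ext <;> simp [ht0]
    rw [this, ← ofReal_pow, ofReal_re]
    positivity
  refine hZf.trans (main.trans ?_)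
  have hτ0 : 0 ≤ τ := by linarith
  rw [Real.mul_rpow hCpos.le (by positivity), Real.mul_rpow hCpos.le hτ0]
  calc C ^ (1 - x) * (τ ^ 3) ^ (1 - x) * (C ^ x * τ ^ x)
      = (C ^ (1 - x) * C ^ x) * ((τ ^ 3) ^ (1 - x) * τ ^ x) := by ring
    _ = C * τ ^ (3 * (1 - x) + x) := by
        have e1 : (τ ^ 3) ^ (1 - x) = τ ^ (3 * (1 - x)) := by
          rw [Real.rpow_mul hτ0]; norm_num
        rw [← Real.rpow_add hCpos, e1, ← Real.rpow_add (by linarith)]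
        simp
    _ ≤ C * τ ^ (1 + 1 / 16 : ℝ) := by
        refine mul_le_mul_of_nonneg_left ?_ hCpos.le
        exact Real.rpow_le_rpow_of_exponent_le hτ1 (by linarith)

lemma Dat.diffAt (h : Dat Np Z δ B) {s : ℂ} (hs : 1 - δ < s.re) : DifferentiableAt ℂ Z s :=
  h.diff.differentiableAt ((isOpen_lt continuous_const continuous_re).mem_nhds hs)

/-- the derivative is also bounded. -/
lemma Dat.upper' (h : Dat Np Z δ B) : ∃ θ C : ℝ, 0 < θ ∧ θ < δ / 2 ∧ 0 < C ∧
    ∀ s : ℂ, |s.re - 1| ≤ θ → ‖Z s‖ ≤ C * (1 + |s.im|) ^ (1 + 1 / 16 : ℝ) ∧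
      ‖deriv Z s‖ ≤ C * (1 + |s.im|) ^ (1 + 1 / 16 : ℝ) := by
  obtain ⟨θ, C, hθ, hθδ, hC, hb⟩ := h.upper
  have hδ1 := h.δ_le
  have h2pos : (0:ℝ) < 2 ^ (1 + 1/16 : ℝ) := by positivity
  set C' := C + C * 2 ^ (1 + 1/16 : ℝ) / (θ / 2) with hC'
  have hC1 : C ≤ C' := by
    have : 0 < C * 2 ^ (1 + 1/16 : ℝ) / (θ / 2) := by positivity
    linarith
  refine ⟨θ / 2, C', by positivity, by linarith, by linarith, fun s hs => ⟨?_, ?_⟩⟩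
  · refine (hb s (by linarith)).trans ?_
    gcongr
  · have := norm_deriv_le_of_forall_mem_sphere_norm_le (f := Z) (c := s) (R := θ / 2)
      (C := C * (2 * (1 + |s.im|)) ^ (1 + 1/16 : ℝ)) (by positivity) ?_ ?_
    · refine this.trans ?_
      rw [Real.mul_rpow (by norm_num) (by positivity)]
      calc C * (2 ^ (1 + 1/16 : ℝ) * (1 + |s.im|) ^ (1 + 1/16 : ℝ)) / (θ / 2)
          = (C * 2 ^ (1 + 1/16 : ℝ) / (θ / 2)) * (1 + |s.im|) ^ (1 + 1/16 : ℝ) := by ring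
        _ ≤ _ := by gcongr; linarith
    · apply DifferentiableOn.diffContOnCl
      rw [closure_ball _ (by positivity)]
      intro z hz
      refine (h.diffAt ?_).differentiableWithinAt
      have h1 := (abs_re_le_norm (z - s)).trans (by simpa [dist_eq_norm] using hz)
      simp only [sub_re] at h1
      have := abs_le.1 h1
      have := abs_le.1 hs
      linarith
    · intro z hz
      have hz' : ‖z - s‖ = θ / 2 := by simpa [dist_eq_norm] using hz
      have h1 := (abs_re_le_norm (z - s)).trans hz'.le
      have h2 := (abs_im_le_norm (z - s)).trans hz'.le
      simp only [sub_re, sub_im] at h1 h2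
      refine (hb z ?_).trans ?_
      · have := abs_add_le (z.re - s.re) (s.re - 1)
        simp only [sub_add_sub_cancel] at this
        linarith
      · gcongr
        have := abs_add_le (z.im - s.im) s.im
        simp only [sub_add_cancel] at this
        linarith [abs_nonneg s.im]
end PIT
end An4

section An5
namespace PIT
open Complex

variable {P : Type} {Np : P → ℕ} {Z : ℂ → ℂ} {δ B : ℝ}

/-- Zero-free region with a lower bound. -/
lemma Dat.lower (h : Dat Np Z δ B) : ∃ θ a c C : ℝ, 0 < θ ∧ θ < δ / 2 ∧ 0 < a ∧ a ≤ θ ∧ 0 < c ∧ 0 < C ∧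
    (∀ s : ℂ, |s.re - 1| ≤ θ → ‖deriv Z s‖ ≤ C * (1 + |s.im|) ^ (1 + 1 / 16 : ℝ)) ∧
    ∀ s : ℂ, 1 - a * (1 + |s.im|) ^ (-(5 / 16) : ℝ) ≤ s.re → s.re ≤ 1 + θ →
      c * (1 + |s.im|) ^ (3 / 4 : ℝ) ≤ ‖Z s‖ := by
  obtain ⟨θ₀, C, hθ₀, hθδ, hC, hub⟩ := h.upper'
  have hδ1 := h.δ_le
  have hδ0 := h.δ_pos
  -- near 1
  obtain ⟨ρ, hρ, hρb⟩ : ∃ ρ > 0, ∀ s : ℂ, ‖s - 1‖ ≤ ρ → ‖Z 1‖ / 2 ≤ ‖Z s‖ := by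
    have hc : ContinuousAt (fun s => ‖Z s‖) 1 :=
      (h.diffAt (by simp; exact hδ0)).continuousAt.norm
    have hZ1 : 0 < ‖Z 1‖ := norm_pos_iff.2 h.Z_one
    have := hc.eventually (lt_mem_nhds (show ‖Z 1‖ / 2 < ‖Z 1‖ by linarith))
    obtain ⟨ρ, hρ, hb⟩ := Metric.eventually_nhds_iff.1 this
    refine ⟨ρ / 2, by positivity, fun s hs => (hb ?_).le⟩
    rw [dist_eq_norm]; linarith
  set c₀ := ‖Z 1‖ / 2 with hc₀
  have hc₀pos : 0 < c₀ := by
    have hZ1 : 0 < ‖Z 1‖ := norm_pos_iff.2 h.Z_one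
    positivity
  set θ := min θ₀ (ρ / 2) with hθ
  have hθpos : 0 < θ := by positivity
  have hθ1 : θ ≤ θ₀ := min_le_left _ _
  have hθ2 : θ ≤ ρ / 2 := min_le_right _ _
  set κ := (ρ / 2) / (1 + ρ / 2) with hκ
  have hκpos : 0 < κ := by positivity
  obtain ⟨m, hm, hm4⟩ : ∃ m : ℝ, 0 < m ∧ m ^ 4 = κ ^ 5 / (4 * C ^ 4) := by
    refine ⟨(κ ^ 5 / (4 * C ^ 4)) ^ (1 / 4 : ℝ), by positivity, ?_⟩
    rw [← Real.rpow_natCast, ← Real.rpow_mul (by positivity)]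
    norm_num
  set b := min (min 1 θ) (m / (4 * C)) with hb
  have hbpos : 0 < b := by positivity
  have hb1 : b ≤ 1 := (min_le_left _ _).trans (min_le_left _ _)
  have hbθ : b ≤ θ := (min_le_left _ _).trans (min_le_right _ _)
  have hbm : b ≤ m / (4 * C) := min_le_right _ _
  have hb4 : b ^ 4 ≤ b := by
    have := pow_le_pow_of_le_one hbpos.le hb1 (show 1 ≤ 4 by norm_num)
    simpa using this
  have claim1 : ∀ σ t : ℝ, ρ / 2 ≤ |t| → b ^ 4 * (1 + |t|) ^ (-(5/16) : ℝ) ≤ σ - 1 → σ ≤ 1 + θ →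
      m * b ^ 3 * (1 + |t|) ^ (3 / 4 : ℝ) ≤ ‖Z (σ + t * I)‖ := by
    intro σ t ht h1 h2
    set τ := 1 + |t| with hτ
    have hτ1 : 1 ≤ τ := by linarith [abs_nonneg t]
    have hτ0 : 0 < τ := by linarith
    have hσ : 1 < σ := by
      have : 0 < b ^ 4 * τ ^ (-(5/16) : ℝ) := by positivity
      linarith
    have e := h.three_four_one hσ t
    have hn0 : ‖Z σ‖ ≤ C := by
      have := (hub σ (by simp; rw [abs_of_pos (by linarith)]; linarith)).1
      simpa using this
    have hn2 : ‖Z (σ + 2 * t * I)‖ ≤ C * (4 * τ ^ (17/16 : ℝ)) := by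
      have := (hub (σ + 2 * t * I) (by simp; rw [abs_of_pos (by linarith)]; linarith)).1
      refine this.trans ?_
      gcongr
      have e2 : 1 + |((σ : ℂ) + 2 * t * I).im| ≤ 2 * τ := by
        simp [abs_mul, hτ]; linarith
      calc _ ≤ (2 * τ) ^ (1 + 1 / 16 : ℝ) := by gcongr
        _ = 2 ^ (1 + 1 / 16 : ℝ) * τ ^ (1 + 1 / 16 : ℝ) := Real.mul_rpow (by norm_num) hτ0.le
        _ ≤ 2 ^ (2 : ℝ) * τ ^ (1 + 1 / 16 : ℝ) := by
            gcongr <;> norm_num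
        _ = _ := by norm_num
    have hκt : κ * τ ≤ |t| := by
      rw [hκ, div_mul_eq_mul_div, div_le_iff₀ (by positivity), hτ]
      nlinarith [abs_nonneg t]
    have e3 : (b ^ 4 * τ ^ (-(5/16) : ℝ)) ^ 3 * (κ * τ) ^ 5 ≤ C ^ 3 * ‖Z (σ + t * I)‖ ^ 4 * (C * (4 * τ ^ (17/16 : ℝ))) := by
      refine le_trans ?_ (e.trans ?_)
      · gcongr
      · gcongr
    have e4 : (m * b ^ 3 * τ ^ (3/4 : ℝ)) ^ 4 * (4 * C ^ 4 * τ ^ (17/16 : ℝ)) = (b ^ 4 * τ ^ (-(5/16) : ℝ)) ^ 3 * (κ * τ) ^ 5 := by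
      have e5 : (τ ^ (3/4 : ℝ)) ^ 4 * τ ^ (17/16 : ℝ) = (τ ^ (-(5/16) : ℝ)) ^ 3 * τ ^ 5 := by
        rw [← Real.rpow_natCast, ← Real.rpow_natCast, ← Real.rpow_natCast, ← Real.rpow_mul hτ0.le,
          ← Real.rpow_mul hτ0.le, ← Real.rpow_add hτ0, ← Real.rpow_add hτ0]
        norm_num
      calc _ = m ^ 4 * (4 * C ^ 4) * b ^ 12 * ((τ ^ (3/4 : ℝ)) ^ 4 * τ ^ (17/16 : ℝ)) := by ring
        _ = κ ^ 5 * b ^ 12 * ((τ ^ (-(5/16) : ℝ)) ^ 3 * τ ^ 5) := by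
            rw [hm4, e5]; field_simp
        _ = _ := by ring
    have e6 : (m * b ^ 3 * τ ^ (3/4 : ℝ)) ^ 4 ≤ ‖Z (σ + t * I)‖ ^ 4 := by
      have hp : 0 < 4 * C ^ 4 * τ ^ (17/16 : ℝ) := by positivity
      refine le_of_mul_le_mul_right ?_ hp
      rw [e4]
      refine e3.trans (le_of_eq ?_)
      ring
    exact le_of_pow_le_pow_left₀ (by norm_num) (norm_nonneg _) e6
  set c := min (c₀ / (1 + ρ / 2)) (m * b ^ 3 / 2) with hc
  refine ⟨θ, b ^ 4, c, C, hθpos, by linarith, by positivity, hb4.trans hbθ, by positivity, hC,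
    fun s hs => (hub s (by linarith)).2, fun s hs1 hs2 => ?_⟩
  set t := s.im with ht
  set τ := 1 + |t| with hτ
  have hτ1 : 1 ≤ τ := by linarith [abs_nonneg t]
  have hτ0 : 0 < τ := by linarith
  have hτle : b ^ 4 * τ ^ (-(5/16) : ℝ) ≤ b ^ 4 := by
    refine mul_le_of_le_one_right (by positivity) ?_
    exact Real.rpow_le_one_of_one_le_of_nonpos hτ1 (by norm_num)
  have hsabs : |s.re - 1| ≤ θ := abs_le.2 ⟨by linarith, by linarith⟩
  rcases le_total |t| (ρ / 2) with hcase | hcase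
  · have h1 : ‖s - 1‖ ≤ ρ := by
      have := norm_le_abs_re_add_abs_im (s - 1)
      simp only [sub_re, one_re, sub_im, one_im, sub_zero] at this
      linarith
    refine le_trans ?_ (hρb s h1)
    calc c * τ ^ (3/4 : ℝ) ≤ (c₀ / (1 + ρ / 2)) * τ ^ (1 : ℝ) := by
          refine mul_le_mul (min_le_left _ _) ?_ (by positivity) (by positivity)
          exact Real.rpow_le_rpow_of_exponent_le hτ1 (by norm_num)
      _ ≤ (c₀ / (1 + ρ / 2)) * (1 + ρ / 2) := by
          rw [Real.rpow_one]
          gcongr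
          linarith
      _ = c₀ := by field_simp
  · have hcm : c ≤ m * b ^ 3 / 2 := min_le_right _ _
    have hst : s = (s.re : ℂ) + t * I := by rw [ht]; exact (re_add_im s).symm
    have hτp : 0 < τ ^ (3/4 : ℝ) := by positivity
    rcases le_total (b ^ 4 * τ ^ (-(5/16) : ℝ)) (s.re - 1) with hc2 | hc2
    · have := claim1 s.re t hcase hc2 hs2
      rw [← hst] at this
      refine le_trans ?_ this
      gcongr
      have : 0 < m * b ^ 3 := by positivity
      linarith
    · set σ₀ := 1 + b ^ 4 * τ ^ (-(5/16) : ℝ) with hσ₀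
      have hz0 := claim1 σ₀ t hcase (by rw [hσ₀]; linarith) (by linarith)
      have hmv := Convex.norm_image_sub_le_of_norm_deriv_le (f := Z) (C := C * τ ^ (17/16 : ℝ))
        (s := {w : ℂ | |w.re - 1| ≤ θ ∧ w.im = t}) (x := s) (y := σ₀ + t * I) ?_ ?_ ?_ ⟨hsabs, rfl⟩ ?_
      · have hd : ‖(σ₀ + t * I : ℂ) - s‖ ≤ 2 * (b ^ 4 * τ ^ (-(5/16) : ℝ)) := by
          have : (σ₀ + t * I : ℂ) - s = ((σ₀ - s.re : ℝ) : ℂ) := by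
            rw [hst]; push_cast; simp
          rw [this, norm_real, Real.norm_eq_abs, abs_of_nonneg (by rw [hσ₀]; linarith), hσ₀]
          linarith
        have h3 : ‖Z (σ₀ + t * I) - Z s‖ ≤ 2 * b ^ 4 * C * τ ^ (3/4 : ℝ) := by
          calc _ ≤ C * τ ^ (17/16 : ℝ) * (2 * (b ^ 4 * τ ^ (-(5/16) : ℝ))) := by
                refine hmv.trans ?_
                gcongr
            _ = 2 * b ^ 4 * C * (τ ^ (17/16 : ℝ) * τ ^ (-(5/16) : ℝ)) := by ring
            _ = _ := by rw [← Real.rpow_add hτ0]; norm_num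
        have h4 : 2 * b ^ 4 * C ≤ m * b ^ 3 / 2 := by
          rw [le_div_iff₀ (by positivity)] at hbm
          nlinarith [pow_pos hbpos 3]
        have h5 : ‖Z (σ₀ + t * I)‖ - ‖Z s‖ ≤ ‖Z (σ₀ + t * I) - Z s‖ := norm_sub_norm_le _ _
        have h6 : 2 * b ^ 4 * C * τ ^ (3/4 : ℝ) ≤ m * b ^ 3 / 2 * τ ^ (3/4 : ℝ) := by gcongr
        have h7 : c * τ ^ (3/4 : ℝ) ≤ m * b ^ 3 / 2 * τ ^ (3/4 : ℝ) := by gcongr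
        linarith
      · intro w hw
        apply h.diffAt
        have := abs_le.1 hw.1
        linarith
      · intro w hw
        have := (hub w (hw.1.trans hθ1)).2
        rw [hw.2] at this
        refine this.trans (le_of_eq ?_)
        norm_num [hτ]
      · have e : {w : ℂ | |w.re - 1| ≤ θ ∧ w.im = t} = re ⁻¹' (Set.Icc (1-θ) (1+θ)) ∩ im ⁻¹' {t} := by
          ext w
          simp only [Set.mem_setOf_eq, Set.mem_inter_iff, Set.mem_preimage, Set.mem_Icc, abs_le,
            Set.mem_singleton_iff]
          constructor <;> rintro ⟨⟨_, _⟩, _⟩ <;> refine ⟨⟨?_, ?_⟩, ?_⟩ <;> first | assumption | linarith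
        rw [e]
        exact ((convex_Icc _ _).linear_preimage reLm).inter ((convex_singleton t).linear_preimage imLm)
      · refine ⟨?_, by simp⟩
        simp only [add_re, ofReal_re, mul_re, I_re, I_im, ofReal_im, mul_zero, mul_one, sub_self, add_zero]
        rw [hσ₀, add_sub_cancel_left, abs_of_nonneg (by positivity)]
        linarith
end PIT
end An5

section An6
namespace PIT
open Complex

variable {P : Type} {Np : P → ℕ} {Z : ℂ → ℂ} {δ B : ℝ}

/-- prime Dirichlet series with log weights -/
def PP (Np : P → ℕ) (s : ℂ) : ℂ := ∑' p, (Real.log (Np p) : ℂ) * (Np p : ℂ) ^ (-s)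

/-- higher prime powers -/
def GG (Np : P → ℕ) (s : ℂ) : ℂ :=
  ∑' p, (Real.log (Np p) : ℂ) * (((Np p : ℂ) ^ (-s)) ^ 2 / (1 - (Np p : ℂ) ^ (-s)))

lemma Dat.log_le (h : Dat Np Z δ B) (p : P) {ε : ℝ} (hε : 0 < ε) :
    Real.log (Np p) ≤ (Np p : ℝ) ^ ε / ε :=
  Real.log_le_rpow_div (Nat.cast_nonneg _) hε

lemma Dat.log_nonneg (h : Dat Np Z δ B) (p : P) : 0 ≤ Real.log (Np p) :=
  Real.log_natCast_nonneg _

lemma Dat.summable_logr (h : Dat Np Z δ B) {σ : ℝ} (hσ : 1 < σ) :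
    Summable fun p => Real.log (Np p) * (Np p : ℝ) ^ (-σ) := by
  set ε := (σ - 1) / 2 with hε
  have hε0 : 0 < ε := by rw [hε]; linarith
  refine Summable.of_nonneg_of_le (fun p => mul_nonneg (h.log_nonneg p) (by positivity)) (fun p => ?_)
    ((h.summ (1 + ε) (by linarith)).mul_left (1 / ε))
  have hp : (0:ℝ) < Np p := by exact_mod_cast h.pos p
  calc Real.log (Np p) * (Np p : ℝ) ^ (-σ) ≤ (Np p : ℝ) ^ ε / ε * (Np p : ℝ) ^ (-σ) := by
        gcongr; exact h.log_le p hε0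
    _ = 1 / ε * ((Np p : ℝ) ^ ε * (Np p : ℝ) ^ (-σ)) := by ring
    _ = 1 / ε * (Np p : ℝ) ^ (-(1 + ε)) := by
        rw [← Real.rpow_add hp]; congr 2; rw [hε]; ring

lemma Dat.summable_PP (h : Dat Np Z δ B) {s : ℂ} (hs : 1 < s.re) :
    Summable fun p => (Real.log (Np p) : ℂ) * (Np p : ℂ) ^ (-s) := by
  refine Summable.of_norm_bounded (h.summable_logr hs) fun p => ?_
  rw [norm_mul, h.norm_term, norm_real, Real.norm_of_nonneg (h.log_nonneg p)]

lemma Dat.one_sub_lower (h : Dat Np Z δ B) (p : P) {s : ℂ} (hs : 3 / 4 < s.re) :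
    1 - (2:ℝ) ^ (-(3/4) : ℝ) ≤ ‖1 - (Np p : ℂ) ^ (-s)‖ := by
  have h1 : ‖(Np p : ℂ) ^ (-s)‖ ≤ (2:ℝ) ^ (-(3/4) : ℝ) := by
    rw [h.norm_term]
    refine (h.rpow_le p hs.le).trans ?_
    exact Real.rpow_le_rpow_of_nonpos (by norm_num) (by exact_mod_cast h.two_le p) (by norm_num)
  have h2 := norm_sub_norm_le (1 : ℂ) ((Np p : ℂ) ^ (-s))
  rw [norm_one] at h2
  linarith

lemma kap_pos : 0 < 1 - (2:ℝ) ^ (-(3/4) : ℝ) := by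
  have := Real.rpow_lt_one_of_one_lt_of_neg (x := 2) (z := -(3/4)) (by norm_num) (by norm_num)
  linarith

lemma Dat.norm_GG_term (h : Dat Np Z δ B) (p : P) {s : ℂ} (hs : 3 / 4 < s.re) :
    ‖(Real.log (Np p) : ℂ) * (((Np p : ℂ) ^ (-s)) ^ 2 / (1 - (Np p : ℂ) ^ (-s)))‖ ≤
    Real.log (Np p) * (Np p : ℝ) ^ (-(3/2) : ℝ) * (1 - (2:ℝ) ^ (-(3/4) : ℝ))⁻¹ := by
  have hp : (0:ℝ) < Np p := by exact_mod_cast h.pos p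
  rw [norm_mul, norm_div, norm_pow, h.norm_term, norm_real, Real.norm_of_nonneg (h.log_nonneg p),
    mul_assoc, div_eq_mul_inv]
  have h1 : ((Np p : ℝ) ^ (-s.re)) ^ 2 ≤ (Np p : ℝ) ^ (-(3/2) : ℝ) := by
    rw [← Real.rpow_natCast, ← Real.rpow_mul hp.le]
    have := h.rpow_le p (a := 3/2) (b := s.re * 2) (by linarith)
    convert this using 2
    push_cast; ring
  have h2 := h.one_sub_lower p hs
  have h3 := kap_pos
  have h4 := h.log_nonneg p
  gcongr

lemma Dat.summable_GG (h : Dat Np Z δ B) {s : ℂ} (hs : 3 / 4 < s.re) :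
    Summable fun p => (Real.log (Np p) : ℂ) * (((Np p : ℂ) ^ (-s)) ^ 2 / (1 - (Np p : ℂ) ^ (-s))) :=
  Summable.of_norm_bounded ((h.summable_logr (σ := 3/2) (by norm_num)).mul_right _)
    fun p => h.norm_GG_term p hs

lemma Dat.GG_bound (h : Dat Np Z δ B) : ∃ C : ℝ, 0 ≤ C ∧ ∀ s : ℂ, 3 / 4 < s.re → ‖GG Np s‖ ≤ C := by
  refine ⟨∑' p, Real.log (Np p) * (Np p : ℝ) ^ (-(3/2) : ℝ) * (1 - (2:ℝ) ^ (-(3/4) : ℝ))⁻¹, ?_, ?_⟩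
  · have := kap_pos
    exact tsum_nonneg fun p => mul_nonneg (mul_nonneg (h.log_nonneg p) (by positivity)) (by positivity)
  · intro s hs
    exact tsum_of_norm_bounded ((h.summable_logr (σ := 3/2) (by norm_num)).mul_right _).hasSum
      fun p => h.norm_GG_term p hs

lemma Dat.hasDerivAt_term (h : Dat Np Z δ B) (p : P) (s : ℂ) :
    HasDerivAt (fun s : ℂ => (Np p : ℂ) ^ (-s)) (-((Real.log (Np p) : ℂ) * (Np p : ℂ) ^ (-s))) s := by
  have hp : (Np p : ℂ) ≠ 0 := by exact_mod_cast (h.pos p).ne'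
  have := (hasDerivAt_neg s).const_cpow (c := (Np p : ℂ)) (Or.inl hp)
  convert this using 1
  rw [natCast_log]; ring

lemma Dat.GG_diff (h : Dat Np Z δ B) : DifferentiableOn ℂ (GG Np) {s | 3 / 4 < s.re} := by
  refine differentiableOn_tsum_of_summable_norm
    ((h.summable_logr (σ := 3/2) (by norm_num)).mul_right (1 - (2:ℝ) ^ (-(3/4) : ℝ))⁻¹) ?_
    (isOpen_lt continuous_const continuous_re) (fun p s hs => h.norm_GG_term p hs)
  intro p s hs
  have hd := (h.hasDerivAt_term p s).differentiableAt
  have hne : 1 - (Np p : ℂ) ^ (-s) ≠ 0 := by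
    intro h0
    have := h.one_sub_lower p hs
    rw [h0, norm_zero] at this
    linarith [kap_pos]
  exact (((hd.pow 2).div (hd.const_sub 1) hne).const_mul _).differentiableWithinAt

lemma Dat.logDeriv (h : Dat Np Z δ B) {s : ℂ} (hs : 1 < s.re) :
    Z s ≠ 0 ∧ deriv Z s / Z s = 1 / (s - 1) - (PP Np s + GG Np s) := by
  have hs1 : s - 1 ≠ 0 := by
    intro h0
    have := congrArg re h0
    simp at this
    linarith
  obtain ⟨σ, hσ1, hσ2⟩ := exists_between hs
  have hU : IsOpen {w : ℂ | σ < w.re} := isOpen_lt continuous_const continuous_re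
  have hslit : ∀ p : P, ∀ w : ℂ, σ < w.re → 1 - (Np p : ℂ) ^ (-w) ∈ slitPlane := by
    intro p w hw
    rw [sub_eq_add_neg]
    apply mem_slitPlane_of_norm_lt_one
    rw [norm_neg]
    have := h.norm_term_half p (s := w) (by linarith)
    linarith
  have hder : ∀ p : P, ∀ w : ℂ, σ < w.re → HasDerivAt (fun w => -log (1 - (Np p : ℂ) ^ (-w)))
      (-((Real.log (Np p) : ℂ) * (Np p : ℂ) ^ (-w) / (1 - (Np p : ℂ) ^ (-w)))) w := by
    intro p w hw
    have := (((h.hasDerivAt_term p w).const_sub 1).clog (hslit p w hw)).fun_neg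
    simpa using this
  have hsum : ∀ p, ∀ w ∈ {w : ℂ | σ < w.re}, ‖-log (1 - (Np p : ℂ) ^ (-w))‖ ≤ 3 / 2 * (Np p : ℝ) ^ (-σ) :=
    fun p w hw => h.norm_log_le p hσ1.le (le_of_lt hw)
  have hdiff : ∀ p, DifferentiableOn ℂ (fun w => -log (1 - (Np p : ℂ) ^ (-w))) {w : ℂ | σ < w.re} :=
    fun p w hw => (hder p w hw).differentiableAt.differentiableWithinAt
  have hS := (h.summ σ hσ1).mul_left (3/2)
  have hL := hasSum_deriv_of_summable_norm hS hdiff hU hsum (show s ∈ _ from hσ2)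
  have hLd : DifferentiableAt ℂ (fun w => ∑' p, -log (1 - (Np p : ℂ) ^ (-w))) s :=
    (differentiableOn_tsum_of_summable_norm hS hdiff hU hsum).differentiableAt (hU.mem_nhds hσ2)
  set L : ℂ → ℂ := fun w => ∑' p, -log (1 - (Np p : ℂ) ^ (-w)) with hLdef
  have hL' : deriv L s = -(PP Np s + GG Np s) := by
    rw [← hL.tsum_eq, PP, GG, ← (h.summable_PP hs).tsum_add (h.summable_GG (by linarith)), ← tsum_neg]
    apply tsum_congr
    intro p
    rw [(hder p s hσ2).deriv]
    have := slitPlane_ne_zero (hslit p s hσ2)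
    field_simp
    ring
  have hZeq : Z =ᶠ[𝓝 s] fun w => (w - 1) * exp (L w) := by
    filter_upwards [hU.mem_nhds hσ2] with w hw
    exact h.euler w (hσ1.trans hw)
  have hZd : deriv Z s = 1 * exp (L s) + (s - 1) * (exp (L s) * deriv L s) := by
    rw [hZeq.deriv_eq]
    exact (((hasDerivAt_id s).sub_const 1).mul (hLd.hasDerivAt.cexp)).deriv
  have hZs : Z s = (s - 1) * exp (L s) := h.euler s hs
  refine ⟨by rw [hZs]; exact mul_ne_zero hs1 (exp_ne_zero _), ?_⟩
  rw [hZd, hZs, hL']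
  have := exp_ne_zero (L s)
  field_simp
  ring

/-- the continuation of `P(s)/s - 1/(s-1)` -/
def HH (Np : P → ℕ) (Z : ℂ → ℂ) (s : ℂ) : ℂ := -(1 + deriv Z s / Z s + GG Np s) / s

lemma Dat.HH_eq (h : Dat Np Z δ B) {s : ℂ} (hs : 1 < s.re) :
    HH Np Z s = PP Np s / s - 1 / (s - 1) := by
  have hs1 : s - 1 ≠ 0 := by
    intro h0
    have := congrArg re h0
    simp at this
    linarith
  have hs0 : s ≠ 0 := by
    rintro rfl
    simp at hs
    linarith
  rw [HH, (h.logDeriv hs).2]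
  field_simp
  ring

/-- H'' is bounded to the right of the line 1 -/
theorem Dat.HH_bound (h : Dat Np Z δ B) : ∃ θ M : ℝ, 0 < θ ∧ 0 < M ∧
    (∀ s : ℂ, 1 < s.re → DifferentiableAt ℂ (HH Np Z) s) ∧
    ∀ s : ℂ, 1 < s.re → s.re ≤ 1 + θ → ‖iteratedDeriv 2 (HH Np Z) s‖ ≤ M := by
  obtain ⟨θ, a, c, C, hθ, hθδ, ha, haθ, hc, hC, hd, hl⟩ := h.lower
  obtain ⟨D, hD, hG⟩ := h.GG_bound
  have hδ1 := h.δ_le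
  have hUo : IsOpen {s : ℂ | 1 - δ < s.re} := isOpen_lt continuous_const continuous_re
  have hU2 : IsOpen {s : ℂ | 3 / 4 < s.re} := isOpen_lt continuous_const continuous_re
  have hdiffAt : ∀ s : ℂ, 1 - δ < s.re → 3 / 4 < s.re → Z s ≠ 0 → DifferentiableAt ℂ (HH Np Z) s := by
    intro s h1 h2 h3
    have hs0 : s ≠ 0 := by
      rintro rfl
      simp at h2
      linarith
    have e1 : DifferentiableAt ℂ (deriv Z) s := (h.diff.deriv hUo).differentiableAt (hUo.mem_nhds h1)
    have e2 : DifferentiableAt ℂ (GG Np) s := h.GG_diff.differentiableAt (hU2.mem_nhds h2)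
    have e3 := h.diffAt h1
    unfold HH
    exact ((((differentiableAt_const 1).add (e1.div e3 h3)).add e2).neg).div differentiableAt_id hs0
  -- shrink a
  set a' := min a (1 / 5) with ha'
  have ha'0 : 0 < a' := by positivity
  have ha'a : a' ≤ a := min_le_left _ _
  have ha'5 : a' ≤ 1 / 5 := min_le_right _ _
  set E := (1 + C / c + D) * 8 with hE
  have hE0 : 0 < E := by positivity
  have hHb : ∀ s : ℂ, 1 - a' * (1 + |s.im|) ^ (-(5 / 16) : ℝ) ≤ s.re → s.re ≤ 1 + θ →
      DifferentiableAt ℂ (HH Np Z) s ∧ ‖HH Np Z s‖ ≤ E * (1 + |s.im|) ^ (-(11 / 16) : ℝ) := by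
    intro s h1 h2
    set τ := 1 + |s.im| with hτ
    have hτ1 : 1 ≤ τ := by linarith [abs_nonneg s.im]
    have hτ0 : 0 < τ := by linarith
    have hτle : τ ^ (-(5/16) : ℝ) ≤ 1 := Real.rpow_le_one_of_one_le_of_nonpos hτ1 (by norm_num)
    have hτle0 : 0 < τ ^ (-(5/16) : ℝ) := by positivity
    have h3 : 1 - a * τ ^ (-(5/16) : ℝ) ≤ s.re := by
      nlinarith
    have h4 : 1 - a ≤ s.re := by nlinarith
    have h5 : 4 / 5 ≤ s.re := by nlinarith
    have hZl := hl s h3 h2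
    have hZp : 0 < ‖Z s‖ := lt_of_lt_of_le (by positivity) hZl
    refine ⟨hdiffAt s (by linarith) (by linarith) (norm_pos_iff.1 hZp), ?_⟩
    have hsτ : τ / 4 ≤ ‖s‖ := by
      have e1 := abs_re_le_norm s
      have e2 := abs_im_le_norm s
      have e3 := le_abs_self s.re
      rw [hτ]; linarith
    have hq : ‖deriv Z s / Z s‖ ≤ C / c * τ ^ (5 / 16 : ℝ) := by
      rw [norm_div]
      have := hd s (abs_le.2 ⟨by linarith, by linarith⟩)
      calc ‖deriv Z s‖ / ‖Z s‖ ≤ (C * τ ^ (1 + 1/16 : ℝ)) / (c * τ ^ (3/4 : ℝ)) := by gcongr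
        _ = C / c * (τ ^ (1 + 1/16 : ℝ) / τ ^ (3/4 : ℝ)) := by field_simp
        _ = _ := by rw [← Real.rpow_sub hτ0]; norm_num
    have hτge : 1 ≤ τ ^ (5/16 : ℝ) := Real.one_le_rpow hτ1 (by norm_num)
    have hnum : ‖1 + deriv Z s / Z s + GG Np s‖ ≤ (1 + C / c + D) * τ ^ (5 / 16 : ℝ) := by
      have e1 := norm_add_le (1 + deriv Z s / Z s) (GG Np s)
      have e2 := norm_add_le 1 (deriv Z s / Z s)
      have e3 := hG s (by linarith)
      rw [norm_one] at e2
      nlinarith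
    rw [HH, norm_div, norm_neg]
    calc _ ≤ ((1 + C / c + D) * τ ^ (5 / 16 : ℝ)) / (τ / 4) := by gcongr
      _ = (1 + C / c + D) * 4 * (τ ^ (5 / 16 : ℝ) / τ ^ (1:ℝ)) := by rw [Real.rpow_one]; field_simp
      _ = (1 + C / c + D) * 4 * τ ^ (-(11/16) : ℝ) := by rw [← Real.rpow_sub hτ0]; norm_num
      _ ≤ _ := by
        have : 0 < (1 + C / c + D) := by positivity
        gcongr
        rw [hE]; linarith
  set r₀ := min a' θ / 2 with hr₀
  have hr₀0 : 0 < r₀ := by positivity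
  have hr₀a : r₀ ≤ a' / 2 := by rw [hr₀]; linarith [min_le_left a' θ]
  have hr₀θ : r₀ ≤ θ / 2 := by rw [hr₀]; linarith [min_le_right a' θ]
  refine ⟨θ / 2, 2 * (E * 2) / r₀ ^ 2, by positivity, by positivity, ?_, ?_⟩
  · intro s hs
    exact hdiffAt s (by linarith [h.δ_pos]) (by linarith) (h.logDeriv hs).1
  · intro s hs1 hs2
    set τ := 1 + |s.im| with hτ
    have hτ1 : 1 ≤ τ := by linarith [abs_nonneg s.im]
    have hτ0 : 0 < τ := by linarith
    have hτle : τ ^ (-(5/16) : ℝ) ≤ 1 := Real.rpow_le_one_of_one_le_of_nonpos hτ1 (by norm_num)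
    have hτle0 : 0 < τ ^ (-(5/16) : ℝ) := by positivity
    set R := r₀ * τ ^ (-(5/16) : ℝ) with hR
    have hR0 : 0 < R := by positivity
    have hR1 : R ≤ r₀ := by nlinarith
    have hz : ∀ z : ℂ, ‖z - s‖ ≤ R → DifferentiableAt ℂ (HH Np Z) z ∧ ‖HH Np Z z‖ ≤ E * 2 * τ ^ (-(11/16) : ℝ) := by
      intro z hz
      have e1 := abs_le.1 ((abs_re_le_norm (z - s)).trans hz)
      have e2 := (abs_im_le_norm (z - s)).trans hz
      simp only [sub_re, sub_im] at e1 e2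
      have e3 : 1 + |z.im| ≤ 2 * τ := by
        have := abs_add_le (z.im - s.im) s.im
        simp only [sub_add_cancel] at this
        rw [hτ]; linarith [abs_nonneg s.im]
      have e4 : τ / 2 ≤ 1 + |z.im| := by
        have := abs_sub_abs_le_abs_sub s.im z.im
        rw [abs_sub_comm] at this
        rw [hτ]; linarith [abs_nonneg s.im, abs_nonneg z.im]
      have hz0 : 0 < 1 + |z.im| := by positivity
      have e5 : τ ^ (-(5/16) : ℝ) / 2 ≤ (1 + |z.im|) ^ (-(5/16) : ℝ) := by
        calc τ ^ (-(5/16) : ℝ) / 2 = (2:ℝ) ^ (-1:ℝ) * τ ^ (-(5/16) : ℝ) := by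
              rw [Real.rpow_neg_one]; ring
          _ ≤ 2 ^ (-(5/16) : ℝ) * τ ^ (-(5/16) : ℝ) := by
              gcongr <;> norm_num
          _ = (2 * τ) ^ (-(5/16) : ℝ) := (Real.mul_rpow (by norm_num) hτ0.le).symm
          _ ≤ _ := Real.rpow_le_rpow_of_nonpos hz0 e3 (by norm_num)
      have e6 : (1 + |z.im|) ^ (-(11/16) : ℝ) ≤ 2 * τ ^ (-(11/16) : ℝ) := by
        calc (1 + |z.im|) ^ (-(11/16) : ℝ) ≤ (τ / 2) ^ (-(11/16) : ℝ) :=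
              Real.rpow_le_rpow_of_nonpos (by positivity) e4 (by norm_num)
          _ = τ ^ (-(11/16) : ℝ) * (2:ℝ) ^ (11/16 : ℝ) := by
              rw [Real.div_rpow hτ0.le (by norm_num), Real.rpow_neg (by norm_num : (0:ℝ) ≤ 2)]
              simp
          _ ≤ τ ^ (-(11/16) : ℝ) * (2:ℝ) ^ (1 : ℝ) := by
              gcongr <;> norm_num
          _ = _ := by rw [Real.rpow_one]; ring
      obtain ⟨f1, f2⟩ := hHb z (by nlinarith) (by linarith)
      refine ⟨f1, f2.trans ?_⟩
      calc E * (1 + |z.im|) ^ (-(11/16) : ℝ) ≤ E * (2 * τ ^ (-(11/16) : ℝ)) :=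
            mul_le_mul_of_nonneg_left e6 hE0.le
        _ = _ := by ring
    have main := norm_iteratedDeriv_le_of_forall_mem_sphere_norm_le (f := HH Np Z) (c := s) (R := R)
      (C := E * 2 * τ ^ (-(11/16) : ℝ)) 2 hR0 ?_ ?_
    · refine main.trans ?_
      have e : τ ^ (-(11/16) : ℝ) ≤ (τ ^ (-(5/16) : ℝ)) ^ 2 := by
        rw [← Real.rpow_natCast, ← Real.rpow_mul hτ0.le]
        exact Real.rpow_le_rpow_of_exponent_le hτ1 (by norm_num)
      rw [div_le_div_iff₀ (by positivity) (by positivity), hR]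
      simp only [Nat.factorial, Nat.cast_ofNat, Nat.succ_eq_add_one]
      norm_num
      calc 2 * (E * 2 * τ ^ (-(11/16) : ℝ)) * r₀ ^ 2 ≤ 2 * (E * 2 * (τ ^ (-(5/16) : ℝ)) ^ 2) * r₀ ^ 2 := by gcongr
        _ = _ := by ring
    · apply DifferentiableOn.diffContOnCl
      rw [closure_ball _ hR0.ne']
      intro z hz'
      exact (hz z (by simpa [dist_eq_norm] using hz')).1.differentiableWithinAt
    · intro z hz'
      exact (hz z (by simpa [dist_eq_norm] using (Metric.mem_sphere.1 hz').le)).2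
end PIT
end An6

section An7
namespace PIT
open MeasureTheory Set
open scoped FourierTransform

variable {P : Type} {Np : P → ℕ} {Z : ℂ → ℂ} {δ B : ℝ}

open Classical in
/-- Chebyshev function -/
def Th (Np : P → ℕ) (x : ℝ) : ℝ := ∑' p, if (Np p : ℝ) ≤ x then Real.log (Np p) else 0

lemma Dat.th_term_le (h : Dat Np Z δ B) (p : P) {σ : ℝ} (hσ : 0 ≤ σ) (x : ℝ) (hx : 0 ≤ x) :
    (if (Np p : ℝ) ≤ x then Real.log (Np p) else 0) ≤ Real.log (Np p) * (Np p : ℝ) ^ (-σ) * x ^ σ := by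
  have hp : (0:ℝ) < Np p := by exact_mod_cast h.pos p
  split_ifs with hc
  · have : 1 ≤ (Np p : ℝ) ^ (-σ) * x ^ σ := by
      rw [Real.rpow_neg hp.le, inv_mul_eq_div, one_le_div (by positivity)]
      exact Real.rpow_le_rpow hp.le hc hσ
    rw [mul_assoc]
    exact le_mul_of_one_le_right (h.log_nonneg p) this
  · exact mul_nonneg (mul_nonneg (h.log_nonneg p) (by positivity)) (by positivity)

lemma Dat.th_term_nonneg (h : Dat Np Z δ B) (p : P) (x : ℝ) :
    0 ≤ (if (Np p : ℝ) ≤ x then Real.log (Np p) else 0) := by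
  split_ifs
  · exact h.log_nonneg p
  · exact le_rfl

lemma Dat.th_summable (h : Dat Np Z δ B) (x : ℝ) :
    Summable fun p => if (Np p : ℝ) ≤ x then Real.log (Np p) else 0 := by
  rcases le_total 0 x with hx | hx
  · exact Summable.of_nonneg_of_le (fun p => h.th_term_nonneg p x)
      (fun p => h.th_term_le p (σ := 2) (by norm_num) x hx) ((h.summable_logr (by norm_num)).mul_right _)
  · have : ∀ p, (if (Np p : ℝ) ≤ x then Real.log (Np p) else 0) = 0 := by
      intro p
      have hp : (0:ℝ) < Np p := by exact_mod_cast h.pos p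
      rw [if_neg (by linarith)]
    simp_rw [this]
    exact summable_zero

lemma Dat.th_nonneg (h : Dat Np Z δ B) (x : ℝ) : 0 ≤ Th Np x :=
  tsum_nonneg fun p => h.th_term_nonneg p x

lemma Dat.th_mono (h : Dat Np Z δ B) : Monotone (Th Np) := by
  intro x y hxy
  refine (h.th_summable x).tsum_le_tsum (fun p => ?_) (h.th_summable y)
  by_cases h1 : (Np p : ℝ) ≤ x
  · rw [if_pos h1, if_pos (h1.trans hxy)]
  · rw [if_neg h1]; exact h.th_term_nonneg p y

lemma Dat.th_le (h : Dat Np Z δ B) {σ : ℝ} (hσ : 1 < σ) :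
    ∃ C : ℝ, 0 ≤ C ∧ ∀ x : ℝ, 0 ≤ x → Th Np x ≤ C * x ^ σ := by
  refine ⟨∑' p, Real.log (Np p) * (Np p : ℝ) ^ (-σ),
    tsum_nonneg fun p => mul_nonneg (h.log_nonneg p) (by positivity), fun x hx => ?_⟩
  rw [← tsum_mul_right]
  exact (h.th_summable x).tsum_le_tsum (fun p => h.th_term_le p (by linarith) x hx)
    ((h.summable_logr hσ).mul_right _)

lemma Dat.th_zero (h : Dat Np Z δ B) {x : ℝ} (hx : x < 2) : Th Np x = 0 := by
  have : ∀ p, (if (Np p : ℝ) ≤ x then Real.log (Np p) else 0) = 0 := by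
    intro p
    have hp : (2:ℝ) ≤ Np p := by exact_mod_cast h.two_le p
    rw [if_neg (by linarith)]
  simp [Th, this]

lemma Dat.countable (h : Dat Np Z δ B) : Countable P := by
  have := (h.summ 2 (by norm_num)).countable_support
  rw [← Set.countable_univ_iff]
  refine this.mono fun p _ => ?_
  have hp : (0:ℝ) < Np p := by exact_mod_cast h.pos p
  exact (Real.rpow_pos_of_pos hp _).ne'

/-- Mellin formula -/
lemma Dat.th_laplace (h : Dat Np Z δ B) {s : ℂ} (hs : 1 < s.re) :
    Integrable (fun u : ℝ => (Th Np (Real.exp u) : ℂ) * Complex.exp (-s * u)) ∧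
    ∫ u : ℝ, (Th Np (Real.exp u) : ℂ) * Complex.exp (-s * u) = PP Np s / s := by
  haveI := h.countable
  have hs0 : s ≠ 0 := by rintro rfl; simp at hs; linarith
  have hneg : (-s).re < 0 := by simp; linarith
  set F : P → ℝ → ℂ := fun p => (Ici (Real.log (Np p))).indicator
    (fun u : ℝ => (Real.log (Np p) : ℂ) * Complex.exp (-s * u)) with hF
  have hFint : ∀ p, Integrable (F p) := by
    intro p
    rw [hF, integrable_indicator_iff measurableSet_Ici, integrableOn_Ici_iff_integrableOn_Ioi]
    exact (integrableOn_exp_mul_complex_Ioi hneg _).const_mul _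
  have hlogexp : ∀ p, ∀ z : ℂ, Complex.exp (-z * (Real.log (Np p) : ℝ)) = (Np p : ℂ) ^ (-z) := by
    intro p z
    have hp : (Np p : ℂ) ≠ 0 := by exact_mod_cast (h.pos p).ne'
    rw [Complex.cpow_def_of_ne_zero hp, Complex.natCast_log, mul_comm]
  have hFval : ∀ p, ∫ u, F p u = (Real.log (Np p) : ℂ) * (Np p : ℂ) ^ (-s) / s := by
    intro p
    rw [hF, integral_indicator measurableSet_Ici, integral_Ici_eq_integral_Ioi, integral_const_mul,
      integral_exp_mul_complex_Ioi hneg, hlogexp]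
    field_simp
  have hnormF : ∀ p, ∀ u, ‖F p u‖ = (Ici (Real.log (Np p))).indicator
      (fun u : ℝ => Real.log (Np p) * Real.exp (-s.re * u)) u := by
    intro p u
    rw [hF]
    simp only [norm_indicator_eq_indicator_norm]
    congr 1
    ext v
    rw [norm_mul, Complex.norm_real, Real.norm_of_nonneg (h.log_nonneg p), Complex.norm_exp]
    congr 2
    simp
  have hFnorm : ∀ p, ∫ u, ‖F p u‖ = Real.log (Np p) * (Np p : ℝ) ^ (-s.re) / s.re := by
    intro p
    have hp : (0:ℝ) < Np p := by exact_mod_cast h.pos p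
    simp_rw [hnormF]
    rw [integral_indicator measurableSet_Ici, integral_Ici_eq_integral_Ioi, integral_const_mul,
      integral_exp_mul_Ioi (by linarith), Real.rpow_def_of_pos hp, mul_comm (Real.log _) (-s.re)]
    field_simp
  have hsum : Summable fun p => ∫ u, ‖F p u‖ := by
    simp_rw [hFnorm]
    exact (h.summable_logr hs).div_const _
  have hFsum : ∀ u : ℝ, ∑' p, F p u = (Th Np (Real.exp u) : ℂ) * Complex.exp (-s * u) := by
    intro u
    rw [Th, Complex.ofReal_tsum, ← tsum_mul_right]
    apply tsum_congr
    intro p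
    have hp : (0:ℝ) < Np p := by exact_mod_cast h.pos p
    rw [hF]
    simp only [indicator_apply, mem_Ici, Real.log_le_iff_le_exp hp]
    split_ifs <;> simp
  constructor
  · have := MeasureTheory.hasSum_integral_of_summable_integral_norm hFint hsum
    have hmeas : AEStronglyMeasurable (fun u : ℝ => (Th Np (Real.exp u) : ℂ) * Complex.exp (-s * u)) volume := by
      have h1 : Measurable (fun u : ℝ => Th Np (Real.exp u)) := (h.th_mono.comp Real.exp_monotone).measurable
      exact ((Complex.measurable_ofReal.comp h1).mul (by fun_prop)).aestronglyMeasurable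
    obtain ⟨C, hC, hCb⟩ := h.th_le (σ := (1 + s.re) / 2) (by linarith)
    have hI : Integrable ((Ici (0:ℝ)).indicator (fun u : ℝ => C * Real.exp (-((s.re - 1) / 2) * u))) := by
      rw [integrable_indicator_iff measurableSet_Ici, integrableOn_Ici_iff_integrableOn_Ioi]
      exact (integrableOn_exp_mul_Ioi (by linarith) _).const_mul _
    refine hI.mono' hmeas (Eventually.of_forall fun u => ?_)
    rw [norm_mul, Complex.norm_real, Real.norm_of_nonneg (h.th_nonneg _), Complex.norm_exp]
    by_cases hu : 0 ≤ u
    · rw [indicator_of_mem (show u ∈ Ici 0 from hu)]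
      calc Th Np (Real.exp u) * Real.exp (-s * u : ℂ).re ≤ (C * (Real.exp u) ^ ((1 + s.re) / 2)) * Real.exp (-s * u : ℂ).re := by
            gcongr; exact hCb _ (Real.exp_pos u).le
        _ = C * Real.exp (-((s.re - 1) / 2) * u) := by
            rw [← Real.exp_mul, mul_assoc, ← Real.exp_add]
            congr 2
            simp
            ring
    · push Not at hu
      rw [indicator_of_notMem (by simpa using hu), h.th_zero, zero_mul]
      have := Real.exp_le_exp.2 hu.le
      rw [Real.exp_zero] at this
      linarith
  · have := MeasureTheory.hasSum_integral_of_summable_integral_norm hFint hsum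
    simp_rw [hFsum] at this
    rw [← this.tsum_eq, PP]
    simp_rw [hFval]
    rw [tsum_div_const]

/-- normalized error -/
def phi (Np : P → ℕ) (σ : ℝ) (u : ℝ) : ℝ :=
  (Th Np (Real.exp u) * Real.exp (-u) - (Ici (0:ℝ)).indicator 1 u) * Real.exp (-(σ - 1) * u)

lemma Dat.phi_fourier (h : Dat Np Z δ B) {σ : ℝ} (hσ : 1 < σ) (t : ℝ) :
    𝓕 (fun u => (phi Np σ u : ℂ)) t = HH Np Z (σ + 2 * Real.pi * t * Complex.I) := by
  set s : ℂ := σ + 2 * Real.pi * t * Complex.I with hs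
  have hre : s.re = σ := by simp [hs]
  have hs1 : 1 < s.re := by rw [hre]; exact hσ
  obtain ⟨h1, h2⟩ := h.th_laplace hs1
  have hneg : (-(s - 1)).re < 0 := by simp [hre]; linarith
  have h3 : Integrable ((Ici (0:ℝ)).indicator (fun u : ℝ => Complex.exp (-(s - 1) * u))) := by
    rw [integrable_indicator_iff measurableSet_Ici, integrableOn_Ici_iff_integrableOn_Ioi]
    exact integrableOn_exp_mul_complex_Ioi hneg _
  have hs10 : s - 1 ≠ 0 := by
    intro h0; rw [h0] at hneg; simp at hneg
  have h4 : ∫ u, (Ici (0:ℝ)).indicator (fun u : ℝ => Complex.exp (-(s - 1) * u)) u = 1 / (s - 1) := by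
    rw [integral_indicator measurableSet_Ici, integral_Ici_eq_integral_Ioi,
      integral_exp_mul_complex_Ioi hneg, Complex.ofReal_zero, mul_zero, Complex.exp_zero, neg_div_neg_eq]
  rw [h.HH_eq hs1, ← h2, ← h4, ← integral_sub h1 h3, Real.fourier_real_eq_integral_exp_smul]
  congr 1
  ext u
  have e1 : Complex.exp (-s * u) = Complex.exp (↑(-2 * Real.pi * u * t) * Complex.I) * (Complex.exp (-u) * Complex.exp (-(σ - 1) * u)) := by
    rw [← Complex.exp_add, ← Complex.exp_add]
    congr 1
    rw [hs]; push_cast; ring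
  have e2 : Complex.exp (-(s - 1) * u) = Complex.exp (↑(-2 * Real.pi * u * t) * Complex.I) * Complex.exp (-(σ - 1) * u) := by
    rw [← Complex.exp_add]
    congr 1
    rw [hs]; push_cast; ring
  by_cases hu : u ∈ Ici (0:ℝ)
  · simp only [phi, indicator_of_mem hu, smul_eq_mul, Pi.one_apply]
    rw [e1, e2]
    push_cast
    ring
  · simp only [phi, indicator_of_notMem hu, smul_eq_mul]
    rw [e1]
    push_cast
    ring

lemma Dat.phi_measurable (h : Dat Np Z δ B) (σ : ℝ) : Measurable (phi Np σ) := by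
  have h1 : Measurable (fun u : ℝ => Th Np (Real.exp u)) := (h.th_mono.comp Real.exp_monotone).measurable
  unfold phi
  refine Measurable.mul (Measurable.sub (h1.mul (by fun_prop)) ?_) (by fun_prop)
  exact measurable_one.indicator measurableSet_Ici

lemma Dat.phi_integrable (h : Dat Np Z δ B) {σ : ℝ} (hσ : 1 < σ) (n : ℕ) :
    Integrable (fun u : ℝ => u ^ n • (phi Np σ u : ℂ)) := by
  obtain ⟨C, hC, hCb⟩ := h.th_le (σ := (1 + σ) / 2) (by linarith)
  set κ := (σ - 1) / 2 with hκ
  have hκ0 : 0 < κ := by rw [hκ]; linarith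
  set D := n.factorial * (2 / κ) ^ n * (C + 1) with hD
  have hI : Integrable ((Ici (0:ℝ)).indicator (fun u : ℝ => D * Real.exp (-(κ / 2) * u))) := by
    rw [integrable_indicator_iff measurableSet_Ici, integrableOn_Ici_iff_integrableOn_Ioi]
    exact (integrableOn_exp_mul_Ioi (by linarith) _).const_mul _
  have hmeas : AEStronglyMeasurable (fun u : ℝ => u ^ n • (phi Np σ u : ℂ)) volume := by
    exact ((measurable_id.pow_const n).smul
      (Complex.measurable_ofReal.comp (h.phi_measurable σ))).aestronglyMeasurable
  refine hI.mono' hmeas (Eventually.of_forall fun u => ?_)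
  by_cases hu : u ∈ Ici (0:ℝ)
  · have hu0 : 0 ≤ u := hu
    rw [indicator_of_mem hu, norm_smul, norm_pow, Real.norm_of_nonneg hu0, Complex.norm_real, Real.norm_eq_abs]
    have e1 : |phi Np σ u| ≤ (C + 1) * Real.exp (-κ * u) := by
      have f1 : 0 ≤ Th Np (Real.exp u) * Real.exp (-u) := mul_nonneg (h.th_nonneg _) (Real.exp_pos _).le
      have f2 : Th Np (Real.exp u) * Real.exp (-u) ≤ C * Real.exp (κ * u) := by
        calc _ ≤ (C * (Real.exp u) ^ ((1 + σ) / 2)) * Real.exp (-u) := by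
              gcongr; exact hCb _ (Real.exp_pos u).le
          _ = _ := by
              rw [← Real.exp_mul, mul_assoc, ← Real.exp_add]
              congr 2
              rw [hκ]; ring
      have f3 : 1 ≤ Real.exp (κ * u) := Real.one_le_exp (by positivity)
      have f4 : |Th Np (Real.exp u) * Real.exp (-u) - 1| ≤ (C + 1) * Real.exp (κ * u) := by
        rw [abs_le]
        constructor <;> nlinarith
      rw [phi, indicator_of_mem hu, Pi.one_apply, abs_mul, abs_of_pos (Real.exp_pos _)]
      calc _ ≤ (C + 1) * Real.exp (κ * u) * Real.exp (-(σ - 1) * u) := by gcongr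
        _ = _ := by
            rw [mul_assoc, ← Real.exp_add]
            congr 2
            rw [hκ]; ring
    have e2 : u ^ n ≤ n.factorial * (2 / κ) ^ n * Real.exp (κ / 2 * u) := by
      have := Real.pow_div_factorial_le_exp (κ / 2 * u) (by positivity) n
      rw [div_le_iff₀ (by positivity), mul_pow] at this
      have h5 : u ^ n = (2 / κ) ^ n * ((κ / 2) ^ n * u ^ n) := by
        have h6 : 2 / κ * (κ / 2) = 1 := by field_simp
        rw [← mul_assoc, ← mul_pow, h6, one_pow, one_mul]
      rw [h5]
      calc _ ≤ (2 / κ) ^ n * (Real.exp (κ / 2 * u) * n.factorial) := by gcongr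
        _ = _ := by ring
    calc u ^ n * |phi Np σ u| ≤ (n.factorial * (2 / κ) ^ n * Real.exp (κ / 2 * u)) * ((C + 1) * Real.exp (-κ * u)) := by
          gcongr
      _ = D * (Real.exp (κ / 2 * u) * Real.exp (-κ * u)) := by rw [hD]; ring
      _ = _ := by
          rw [← Real.exp_add]
          congr 2
          ring
  · rw [indicator_of_notMem hu]
    have hu0 : u < 0 := by simpa using hu
    rw [phi, indicator_of_notMem hu, h.th_zero]
    · simp
    · have := Real.exp_le_exp.2 hu0.le
      rw [Real.exp_zero] at this
      linarith
end PIT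
end An7

section An8
namespace PIT
open MeasureTheory Set
open scoped FourierTransform

variable {P : Type} {Np : P → ℕ} {Z : ℂ → ℂ} {δ B : ℝ}

lemma exists_test : ∃ (w : ℝ → ℝ) (κ : ℝ → ℂ), Integrable κ ∧ (∀ u, 𝓕 κ u = (w u : ℂ)) ∧
    (∀ u, 0 ≤ w u) ∧ ∫ u, w u = 1 ∧ (∀ u, w u ≠ 0 → 0 < u ∧ u < 1) ∧ Continuous w ∧ Integrable w := by
  let b : ContDiffBump (1/2 : ℝ) := ⟨1/8, 1/2, by norm_num, by norm_num⟩
  let w : ℝ → ℝ := b.normed volume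
  have hcs : HasCompactSupport (fun u => (w u : ℂ)) :=
    (b.hasCompactSupport_normed (μ := volume)).comp_left (g := fun x : ℝ => (x : ℂ)) (by simp)
  have hcd : ContDiff ℝ (⊤ : ℕ∞) (fun u => (w u : ℂ)) :=
    Complex.ofRealCLM.contDiff.comp b.contDiff_normed
  let W : SchwartzMap ℝ ℂ := hcs.toSchwartzMap hcd
  let Q : SchwartzMap ℝ ℂ := 𝓕⁻ W
  refine ⟨w, Q, Q.integrable, fun u => ?_, fun u => b.nonneg_normed u, b.integral_normed, fun u hu => ?_,
    b.continuous_normed, b.integrable_normed⟩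
  · have e : 𝓕 Q = W := FourierTransform.fourier_fourierInv_eq W
    rw [← SchwartzMap.fourier_coe, e]
    rfl
  · have : u ∈ Function.support (b.normed volume) := hu
    rw [b.support_normed_eq, Metric.mem_ball, Real.dist_eq, abs_lt] at this
    have hr : b.rOut = 1/2 := rfl
    rw [hr] at this
    constructor <;> linarith [this.1, this.2]

lemma fourier_scale (κ : ℝ → ℂ) (hκ : Integrable κ) {ε : ℝ} (hε : 0 < ε) (V : ℝ) :
    Integrable (fun t : ℝ => Complex.exp (2 * Real.pi * t * V * Complex.I) * κ (ε * t)) ∧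
    ∫ t : ℝ, ‖Complex.exp (2 * Real.pi * t * V * Complex.I) * κ (ε * t)‖ = (∫ t, ‖κ t‖) / ε ∧
    ∀ u, 𝓕 (fun t : ℝ => Complex.exp (2 * Real.pi * t * V * Complex.I) * κ (ε * t)) u = (1 / ε : ℝ) * 𝓕 κ ((u - V) / ε) := by
  have hn : ∀ t : ℝ, ‖Complex.exp (2 * Real.pi * t * V * Complex.I)‖ = 1 := by
    intro t
    have := Complex.norm_exp_ofReal_mul_I (2 * Real.pi * t * V)
    push_cast at this
    exact this
  refine ⟨?_, ?_, ?_⟩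
  · refine (hκ.comp_mul_left' hε.ne').bdd_mul (c := 1) ?_ ?_
    · exact (by fun_prop : Continuous fun t : ℝ => Complex.exp (2 * Real.pi * t * V * Complex.I)).aestronglyMeasurable
    · exact Eventually.of_forall fun t => (hn t).le
  · simp_rw [norm_mul, hn, one_mul]
    rw [Measure.integral_comp_mul_left (fun t => ‖κ t‖), abs_of_pos (inv_pos.2 hε), smul_eq_mul]
    ring
  · intro u
    rw [Real.fourier_real_eq_integral_exp_smul, Real.fourier_real_eq_integral_exp_smul]
    have := Measure.integral_comp_mul_left (fun t : ℝ => Complex.exp (↑(-2 * Real.pi * t * ((u - V) / ε)) * Complex.I) • κ t) ε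
    rw [abs_of_pos (inv_pos.2 hε)] at this
    rw [one_div, ← Complex.real_smul, ← this]
    congr 1
    ext t
    rw [smul_eq_mul, smul_eq_mul, ← mul_assoc, ← Complex.exp_add]
    congr 2
    have : (ε : ℂ) ≠ 0 := by exact_mod_cast hε.ne'
    push_cast
    field_simp
    ring

lemma Dat.phi_pair (h : Dat Np Z δ B) : ∃ (w : ℝ → ℝ) (θ C : ℝ), 0 < θ ∧ 0 < C ∧
    (∀ u, 0 ≤ w u) ∧ ∫ u, w u = 1 ∧ (∀ u, w u ≠ 0 → 0 < u ∧ u < 1) ∧ Continuous w ∧ Integrable w ∧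
    ∀ σ, 1 < σ → σ ≤ 1 + θ → ∀ V ε : ℝ, 0 < ε →
      |∫ u, u ^ 2 * phi Np σ u * (1 / ε * w ((u - V) / ε))| ≤ C / ε := by
  obtain ⟨w, κ, hκ, hF, hw0, hw1, hws, hwc, hwi⟩ := exists_test
  obtain ⟨θ, M, hθ, hM, hd, hb⟩ := h.HH_bound
  refine ⟨w, θ, M * (∫ t, ‖κ t‖) + 1, hθ, ?_, hw0, hw1, hws, hwc, hwi, ?_⟩
  · have : 0 ≤ ∫ t, ‖κ t‖ := integral_nonneg fun t => norm_nonneg _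
    positivity
  intro σ h1 h2 V ε hε
  obtain ⟨k1, k2, k3⟩ := fourier_scale κ hκ hε V
  set k := fun t : ℝ => Complex.exp (2 * Real.pi * t * V * Complex.I) * κ (ε * t) with hk
  set f : ℝ → ℂ := fun u => (u ^ 2 : ℝ) • (phi Np σ u : ℂ) with hf
  have hfi : Integrable f := h.phi_integrable h1 2
  have pair : ∫ t, 𝓕 f t • k t = ∫ u, f u • 𝓕 k u := by
    simpa using! (VectorFourier.integral_fourierIntegral_smul_eq_flip (L := innerₗ ℝ)
      Real.continuous_fourierChar continuous_inner hfi k1)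
  -- the transform of f
  have hO : IsOpen {s : ℂ | 1 < s.re} := isOpen_lt continuous_const Complex.continuous_re
  have hdo : DifferentiableOn ℂ (HH Np Z) {s : ℂ | 1 < s.re} := fun s hs => (hd s hs).differentiableWithinAt
  have hdd : DifferentiableOn ℂ (deriv (HH Np Z)) {s : ℂ | 1 < s.re} := hdo.deriv hO
  set L : ℝ → ℂ := fun t => σ + 2 * Real.pi * t * Complex.I with hL
  have hLre : ∀ t, (L t).re = σ := by intro t; simp [hL]
  have hLd : ∀ t : ℝ, HasDerivAt L (2 * Real.pi * Complex.I) t := by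
    intro t
    have e : HasDerivAt (fun z : ℂ => (σ : ℂ) + 2 * Real.pi * z * Complex.I) (2 * Real.pi * Complex.I) (t : ℂ) := by
      have := (((hasDerivAt_id (t : ℂ)).const_mul (2 * Real.pi : ℂ)).mul_const Complex.I).const_add (σ : ℂ)
      simpa using this
    exact e.comp_ofReal
  have hder : ∀ G : ℂ → ℂ, DifferentiableOn ℂ G {s : ℂ | 1 < s.re} → ∀ t : ℝ,
      HasDerivAt (fun t => G (L t)) (deriv G (L t) * (2 * Real.pi * Complex.I)) t := by
    intro G hG t
    have := (hG.differentiableAt (hO.mem_nhds (show 1 < (L t).re by rw [hLre]; exact h1))).hasDerivAt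
    exact this.comp t (hLd t)
  have hfun : 𝓕 (fun u => (phi Np σ u : ℂ)) = fun t => HH Np Z (L t) := by
    ext t; exact h.phi_fourier h1 t
  have hit : iteratedDeriv 2 (fun t => HH Np Z (L t)) = fun t =>
      iteratedDeriv 2 (HH Np Z) (L t) * (2 * Real.pi * Complex.I) * (2 * Real.pi * Complex.I) := by
    ext t
    rw [iteratedDeriv_succ, iteratedDeriv_one]
    have e1 : deriv (fun t => HH Np Z (L t)) = fun t => deriv (HH Np Z) (L t) * (2 * Real.pi * Complex.I) := by
      ext t; exact (hder _ hdo t).deriv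
    rw [e1, ((hder _ hdd t).mul_const _).deriv, iteratedDeriv_succ, iteratedDeriv_one]
  have hff : ∀ t, 𝓕 f t = iteratedDeriv 2 (HH Np Z) (L t) := by
    intro t
    have e := Real.iteratedDeriv_fourier (f := fun u => (phi Np σ u : ℂ)) (N := 2) (n := 2)
      (fun n _ => h.phi_integrable h1 n) (by norm_num)
    rw [hfun, hit] at e
    have e2 := congrFun e t
    have e3 : (fun x : ℝ => (-2 * Real.pi * Complex.I * x) ^ 2 • (phi Np σ x : ℂ)) = fun x => ((2 * Real.pi * Complex.I) ^ 2 : ℂ) • f x := by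
      ext x
      simp only [hf, smul_eq_mul, Complex.real_smul]
      push_cast
      ring
    rw [e3] at e2
    have e4 : 𝓕 (fun x => ((2 * Real.pi * Complex.I) ^ 2 : ℂ) • f x) t = ((2 * Real.pi * Complex.I) ^ 2 : ℂ) • 𝓕 f t := by
      rw [Real.fourier_real_eq_integral_exp_smul, Real.fourier_real_eq_integral_exp_smul, ← integral_smul]
      congr 1
      ext x
      simp only [smul_eq_mul]
      ring
    rw [e4, smul_eq_mul] at e2
    have e5 : ((2 * Real.pi * Complex.I) : ℂ) ≠ 0 := Complex.two_pi_I_ne_zero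
    have e6 : ((2 * Real.pi * Complex.I) ^ 2 : ℂ) ≠ 0 := pow_ne_zero 2 e5
    apply mul_left_cancel₀ e6
    rw [← e2]; ring
  have hbound : ‖∫ t, 𝓕 f t • k t‖ ≤ M * ((∫ t, ‖κ t‖) / ε) := by
    rw [← k2, ← integral_const_mul]
    refine norm_integral_le_of_norm_le (k1.norm.const_mul M) (Eventually.of_forall fun t => ?_)
    rw [norm_smul, hff]
    gcongr
    exact hb _ (by rw [hLre]; exact h1) (by rw [hLre]; exact h2)
  have hreal : ∫ u, f u • 𝓕 k u = ((∫ u, u ^ 2 * phi Np σ u * (1 / ε * w ((u - V) / ε)) : ℝ) : ℂ) := by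
    rw [← integral_complex_ofReal]
    congr 1
    ext u
    rw [k3, hF]
    simp only [hf, smul_eq_mul, Complex.real_smul]
    push_cast
    ring
  rw [pair, hreal, Complex.norm_real, Real.norm_eq_abs] at hbound
  refine hbound.trans ?_
  rw [← mul_div_assoc]
  gcongr
  linarith
end PIT
end An8

section An9
namespace PIT
open MeasureTheory Set

variable {P : Type} {Np : P → ℕ} {Z : ℂ → ℂ} {δ B : ℝ}

lemma avg_lower {g v : ℝ → ℝ} {m : ℝ} (hv : Integrable v) (hv1 : ∫ u, v u = 1) (hv0 : ∀ u, 0 ≤ v u)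
    (hgv : Integrable fun u => g u * v u) (hm : ∀ u, v u ≠ 0 → m ≤ g u) : m ≤ ∫ u, g u * v u := by
  have : ∫ u, m * v u = m := by rw [integral_const_mul, hv1, mul_one]
  rw [← this]
  refine integral_mono (hv.const_mul m) hgv fun u => ?_
  by_cases h0 : v u = 0
  · simp [h0]
  · exact mul_le_mul_of_nonneg_right (hm u h0) (hv0 u)

lemma Dat.tauber (h : Dat Np Z δ B) : ∃ U₀ C : ℝ, 2 ≤ U₀ ∧ 0 < C ∧ ∀ U, U₀ ≤ U →
    Th Np (Real.exp U) * Real.exp (-U) - 1 ≤ C / U ∧ -(C / U) ≤ Th Np (Real.exp U) * Real.exp (-U) - 1 := by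
  obtain ⟨w, θ, C, hθ, hC, hw0, hw1, hws, hwc, hwi, hb⟩ := h.phi_pair
  obtain ⟨W, hW⟩ : ∃ W, ∀ u, ‖w u‖ ≤ W := by
    obtain ⟨W, hW⟩ := isCompact_Icc.exists_bound_of_continuousOn (s := Icc (0:ℝ) 1) hwc.continuousOn
    refine ⟨max W 0, fun u => ?_⟩
    by_cases hu : w u = 0
    · simp [hu]
    · have := hws u hu
      exact (hW u ⟨this.1.le, this.2.le⟩).trans (le_max_left _ _)
  have E2 : Real.exp 2 > 0 := Real.exp_pos _
  have E1 : Real.exp 1 > 0 := Real.exp_pos _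
  set C₁ := C * Real.exp 2 with hC₁
  set C₂ := 4 * C * Real.exp 1 with hC₂
  have hC₁0 : 0 < C₁ := by positivity
  have hC₂0 : 0 < C₂ := by positivity
  refine ⟨max 2 (1 / θ), 2 + 3 * C₁ + 1 + C₂, le_max_left _ _, by positivity, fun U hU => ?_⟩
  have hU2 : 2 ≤ U := (le_max_left _ _).trans hU
  have hU0 : 0 < U := by linarith
  have hUθ : 1 / U ≤ θ := by
    have := (le_max_right _ _).trans hU
    rw [div_le_iff₀ hθ] at this
    rw [div_le_iff₀ hU0]; linarith
  set ε := 1 / U with hε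
  have hε0 : 0 < ε := by positivity
  have hεU : ε * U = 1 := by rw [hε]; field_simp
  have hε2 : ε ≤ 1 / 2 := by rw [hε]; gcongr
  have hCε : C / ε = C * U := by rw [hε]; field_simp
  -- kernel facts
  have kint : ∀ V, Integrable fun u => 1 / ε * w ((u - V) / ε) := by
    intro V
    exact ((hwi.comp_div hε0.ne').comp_sub_right V).const_mul _
  have kone : ∀ V, ∫ u, 1 / ε * w ((u - V) / ε) = 1 := by
    intro V
    rw [integral_const_mul, integral_sub_right_eq_self (fun u => w (u / ε)) V, Measure.integral_comp_div,
      hw1, abs_of_pos hε0, smul_eq_mul]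
    field_simp
  have knn : ∀ V u, 0 ≤ 1 / ε * w ((u - V) / ε) := fun V u => mul_nonneg (by positivity) (hw0 _)
  have ksupp : ∀ V u, 1 / ε * w ((u - V) / ε) ≠ 0 → V < u ∧ u < V + ε := by
    intro V u hu
    have h1 := hws _ (right_ne_zero_of_mul hu)
    rw [div_lt_one hε0] at h1
    have h2 : 0 < u - V := by
      by_contra h3
      push Not at h3
      have := div_nonpos_of_nonpos_of_nonneg h3 hε0.le
      linarith [h1.1]
    constructor <;> linarith [h1.2]
  have hfi : Integrable fun u => u ^ 2 * phi Np (1 + ε) u := by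
    have := (h.phi_integrable (σ := 1 + ε) (by linarith) 2).re
    refine this.congr (Eventually.of_forall fun u => ?_)
    simp [← Complex.ofReal_pow]
  have gint : ∀ V, Integrable fun u => u ^ 2 * phi Np (1 + ε) u * (1 / ε * w ((u - V) / ε)) := by
    intro V
    refine hfi.mul_bdd (c := 1 / ε * W) ?_ ?_
    · exact (kint V).aestronglyMeasurable
    · refine Eventually.of_forall fun u => ?_
      rw [norm_mul, Real.norm_of_nonneg (by positivity : 0 ≤ 1 / ε)]
      gcongr
      exact hW _
  set T := Th Np (Real.exp U) with hT
  have hT0 : 0 ≤ T := h.th_nonneg _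
  have phiv : ∀ u, 0 ≤ u → phi Np (1 + ε) u = (Th Np (Real.exp u) * Real.exp (-u) - 1) * Real.exp (-ε * u) := by
    intro u hu
    rw [phi, indicator_of_mem (show u ∈ Ici 0 from hu), Pi.one_apply]
    congr 3
    ring
  have up : T * Real.exp (-U - ε) - 1 ≤ C₁ / U := by
    by_cases hD : T * Real.exp (-U - ε) - 1 ≤ 0
    · exact hD.trans (by positivity)
    push Not at hD
    set D := T * Real.exp (-U - ε) - 1 with hDdef
    have key : U ^ 2 * (D * Real.exp (-2)) ≤ ∫ u, u ^ 2 * phi Np (1 + ε) u * (1 / ε * w ((u - U) / ε)) := by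
      refine avg_lower (kint U) (kone U) (knn U) (gint U) fun u hu => ?_
      obtain ⟨u1, u2⟩ := ksupp U u hu
      rw [phiv u (by linarith)]
      have a1 : D ≤ Th Np (Real.exp u) * Real.exp (-u) - 1 := by
        rw [hDdef]
        have b1 : T ≤ Th Np (Real.exp u) := h.th_mono (Real.exp_le_exp.2 u1.le)
        have b2 : Real.exp (-U - ε) ≤ Real.exp (-u) := Real.exp_le_exp.2 (by linarith)
        have := mul_le_mul b1 b2 (Real.exp_pos _).le (h.th_nonneg _)
        linarith
      have a2 : Real.exp (-2) ≤ Real.exp (-ε * u) := Real.exp_le_exp.2 (by nlinarith)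
      have a3 : U ^ 2 ≤ u ^ 2 := by gcongr
      have a4 : D * Real.exp (-2) ≤ (Th Np (Real.exp u) * Real.exp (-u) - 1) * Real.exp (-ε * u) :=
        mul_le_mul a1 a2 (Real.exp_pos _).le (by linarith)
      exact mul_le_mul a3 a4 (by positivity) (by positivity)
    have := key.trans ((le_abs_self _).trans (hb (1 + ε) (by linarith) (by linarith) U ε hε0))
    rw [hCε, Real.exp_neg] at this
    rw [le_div_iff₀ hU0, hC₁]
    have e : U ^ 2 * (D * (Real.exp 2)⁻¹) = (D * U / Real.exp 2) * U := by field_simp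
    rw [e] at this
    have := le_of_mul_le_mul_right this hU0
    rwa [div_le_iff₀ E2] at this
  have lo : 1 - T * Real.exp (-U + ε) ≤ C₂ / U := by
    by_cases hD : 1 - T * Real.exp (-U + ε) ≤ 0
    · exact hD.trans (by positivity)
    push Not at hD
    set D := 1 - T * Real.exp (-U + ε) with hDdef
    have key : (U / 2) ^ 2 * (D * Real.exp (-1)) ≤ ∫ u, (-(u ^ 2 * phi Np (1 + ε) u)) * (1 / ε * w ((u - (U - ε)) / ε)) := by
      refine avg_lower (kint _) (kone _) (knn _) ?_ fun u hu => ?_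
      · simp_rw [neg_mul]
        exact (gint (U - ε)).neg
      obtain ⟨u1, u2⟩ := ksupp _ u hu
      have hu0 : U / 2 ≤ u := by linarith
      rw [phiv u (by linarith)]
      have a1 : D ≤ 1 - Th Np (Real.exp u) * Real.exp (-u) := by
        rw [hDdef]
        have b1 : Th Np (Real.exp u) ≤ T := h.th_mono (Real.exp_le_exp.2 (by linarith))
        have b2 : Real.exp (-u) ≤ Real.exp (-U + ε) := Real.exp_le_exp.2 (by linarith)
        have := mul_le_mul b1 b2 (Real.exp_pos _).le hT0
        linarith
      have a2 : Real.exp (-1) ≤ Real.exp (-ε * u) := Real.exp_le_exp.2 (by nlinarith)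
      have a3 : (U / 2) ^ 2 ≤ u ^ 2 := by gcongr
      have a4 : D * Real.exp (-1) ≤ (1 - Th Np (Real.exp u) * Real.exp (-u)) * Real.exp (-ε * u) :=
        mul_le_mul a1 a2 (Real.exp_pos _).le (by linarith)
      have := mul_le_mul a3 a4 (by positivity) (by positivity)
      linarith
    simp_rw [neg_mul] at key
    rw [integral_neg] at key
    have := key.trans ((neg_le_abs _).trans (hb (1 + ε) (by linarith) (by linarith) (U - ε) ε hε0))
    rw [hCε, Real.exp_neg] at this
    rw [le_div_iff₀ hU0, hC₂]
    have e : (U / 2) ^ 2 * (D * (Real.exp 1)⁻¹) = (D * U / (4 * Real.exp 1)) * U := by field_simp; ring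
    rw [e] at this
    have := le_of_mul_le_mul_right this hU0
    rw [div_le_iff₀ (by positivity)] at this
    linarith
  set R := T * Real.exp (-U) with hR
  have hR0 : 0 ≤ R := mul_nonneg hT0 (Real.exp_pos _).le
  have r1 : T * Real.exp (-U - ε) = R * Real.exp (-ε) := by rw [hR, sub_eq_add_neg, Real.exp_add]; ring
  have r2 : T * Real.exp (-U + ε) = R * Real.exp ε := by rw [hR, Real.exp_add]; ring
  rw [r1] at up
  rw [r2] at lo
  have e1 : 1 - ε ≤ Real.exp (-ε) := by linarith [Real.add_one_le_exp (-ε)]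
  have e2 : Real.exp ε ≤ 1 + 2 * ε := by
    have : Real.exp ε * Real.exp (-ε) = 1 := by rw [← Real.exp_add]; simp
    have p := Real.exp_pos ε
    nlinarith
  have d1 : C₁ / U = C₁ * ε := by rw [hε]; ring
  have d2 : C₂ / U = C₂ * ε := by rw [hε]; ring
  rw [d1] at up
  rw [d2] at lo
  have d3 : (2 + 3 * C₁ + 1 + C₂) / U = (2 + 3 * C₁ + 1 + C₂) * ε := by rw [hε]; ring
  rw [d3]
  constructor
  · have q : R = (R * Real.exp (-ε)) * Real.exp ε := by rw [mul_assoc, ← Real.exp_add]; simp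
    have q2 : R ≤ (1 + C₁ * ε) * (1 + 2 * ε) := by
      rw [q]
      exact mul_le_mul (by linarith) e2 (Real.exp_pos _).le (by positivity)
    nlinarith [mul_pos hC₁0 hε0, mul_pos hC₂0 hε0]
  · have q : 1 - C₂ * ε ≤ R * (1 + 2 * ε) := by
      have := mul_le_mul_of_nonneg_left e2 hR0
      linarith
    by_contra hcon
    push Not at hcon
    have : R < 1 - C₂ * ε - (2 + 3 * C₁ + 1) * ε := by linarith
    nlinarith [mul_pos hC₁0 hε0, mul_pos hC₂0 hε0]
end PIT
end An9

section An10
namespace PIT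
open MeasureTheory Set

variable {P : Type} {Np : P → ℕ} {Z : ℂ → ℂ} {δ B : ℝ}

/-- prime ideal theorem with a weak error term -/
lemma Dat.th_asymp (h : Dat Np Z δ B) : ∃ C : ℝ, 0 < C ∧ ∀ x : ℝ, 1 < x →
    |Th Np x - x| ≤ C * (x / Real.log x) := by
  obtain ⟨U₀, C, hU₀, hC, hb⟩ := h.tauber
  set D := Th Np (Real.exp U₀) + Real.exp U₀ with hD
  have hD0 : 0 < D := add_pos_of_nonneg_of_pos (h.th_nonneg _) (Real.exp_pos _)
  refine ⟨C + D, by positivity, fun x hx => ?_⟩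
  have hx0 : 0 < x := by linarith
  have hl : 0 < Real.log x := Real.log_pos hx
  have hr : 0 < x / Real.log x := by positivity
  rcases le_total U₀ (Real.log x) with hc | hc
  · obtain ⟨h1, h2⟩ := hb _ hc
    rw [Real.exp_log hx0, Real.exp_neg, Real.exp_log hx0] at h1 h2
    have e : Th Np x - x = (Th Np x * x⁻¹ - 1) * x := by field_simp
    have e2 : |Th Np x * x⁻¹ - 1| ≤ C / Real.log x := abs_le.2 ⟨by linarith, h1⟩
    rw [e, abs_mul, abs_of_pos hx0]
    calc _ ≤ C / Real.log x * x := by gcongr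
      _ = C * (x / Real.log x) := by ring
      _ ≤ _ := by nlinarith
  · have hxe : x ≤ Real.exp U₀ := by rwa [Real.log_le_iff_le_exp hx0] at hc
    have h1 : 1 ≤ x / Real.log x := by
      rw [one_le_div hl]
      linarith [Real.log_le_sub_one_of_pos hx0]
    have h2 := h.th_mono hxe
    have h3 := h.th_nonneg x
    have h4 : |Th Np x - x| ≤ D := by
      rw [abs_le]; constructor <;> linarith [h.th_nonneg (Real.exp U₀)]
    nlinarith

open Classical in
/-- strict Chebyshev function -/
def ThL (Np : P → ℕ) (x : ℝ) : ℝ := ∑' p, if (Np p : ℝ) < x then Real.log (Np p) else 0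

lemma Dat.thL_summable (h : Dat Np Z δ B) (x : ℝ) :
    Summable fun p => if (Np p : ℝ) < x then Real.log (Np p) else 0 := by
  refine Summable.of_nonneg_of_le (fun p => ?_) (fun p => ?_) (h.th_summable x)
  · split_ifs
    · exact h.log_nonneg p
    · exact le_rfl
  · by_cases h1 : (Np p : ℝ) < x
    · rw [if_pos h1, if_pos h1.le]
    · rw [if_neg h1]; exact h.th_term_nonneg p x

lemma Dat.thL_asymp (h : Dat Np Z δ B) {C : ℝ} (hC : ∀ x : ℝ, 1 < x →
    |Th Np x - x| ≤ C * (x / Real.log x)) {x : ℝ} (hx : 1 < x) : |ThL Np x - x| ≤ C * (x / Real.log x) := by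
  have hx0 : 0 < x := by linarith
  have hl : 0 < Real.log x := Real.log_pos hx
  have up : ThL Np x ≤ Th Np x := by
    refine (h.thL_summable x).tsum_le_tsum (fun p => ?_) (h.th_summable x)
    by_cases h1 : (Np p : ℝ) < x
    · rw [if_pos h1, if_pos h1.le]
    · rw [if_neg h1]; exact h.th_term_nonneg p x
  have lo : ∀ y < x, Th Np y ≤ ThL Np x := by
    intro y hy
    refine (h.th_summable y).tsum_le_tsum (fun p => ?_) (h.thL_summable x)
    by_cases h1 : (Np p : ℝ) ≤ y
    · rw [if_pos h1, if_pos (h1.trans_lt hy)]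
    · rw [if_neg h1]
      split_ifs
      · exact h.log_nonneg p
      · exact le_rfl
  have lim : x - C * (x / Real.log x) ≤ ThL Np x := by
    have hc : ContinuousAt (fun y => y - C * (y / Real.log y)) x := by
      refine continuousAt_id.sub (continuousAt_const.mul (continuousAt_id.div (Real.continuousAt_log hx0.ne') hl.ne'))
    have ht : Tendsto (fun y => y - C * (y / Real.log y)) (𝓝[<] x) (𝓝 (x - C * (x / Real.log x))) :=
      hc.tendsto.mono_left nhdsWithin_le_nhds
    refine le_of_tendsto ht ?_
    filter_upwards [Ioo_mem_nhdsLT hx] with y hy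
    have := (abs_le.1 (hC y hy.1)).1
    linarith [lo y hy.2]
  have := (abs_le.1 (hC x hx)).2
  rw [abs_le]
  constructor <;> linarith

/-- partial summation weight -/
def wt (α u : ℝ) : ℝ := Real.exp (-α * u) * (α / u + 1 / u ^ 2)

lemma wt_nonneg {α u : ℝ} (hα : 0 < α) (hu : 0 < u) : 0 ≤ wt α u := by
  unfold wt; positivity

lemma exp_div_deriv (α : ℝ) {u : ℝ} (hu : 0 < u) :
    HasDerivAt (fun u => -(Real.exp (-α * u) / u)) (wt α u) u := by
  have h1 : HasDerivAt (fun u => Real.exp (-α * u)) (Real.exp (-α * u) * (-α)) u := by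
    have := ((hasDerivAt_id u).const_mul (-α)).exp
    simpa using this
  have h2 := (h1.div (hasDerivAt_id u) hu.ne').fun_neg
  refine h2.congr_deriv ?_
  rw [wt]
  simp only [id]
  field_simp
  ring

lemma exp_div_tendsto {α : ℝ} (hα : 0 < α) :
    Tendsto (fun u : ℝ => Real.exp (-α * u) / u) atTop (𝓝 0) := by
  have h1 : Tendsto (fun u : ℝ => Real.exp (-α * u)) atTop (𝓝 0) := by
    refine Real.tendsto_exp_atBot.comp ?_
    exact tendsto_id.const_mul_atTop_of_neg (by linarith)
  have := h1.mul tendsto_inv_atTop_zero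
  simpa [div_eq_mul_inv] using this

lemma wt_integral {α a : ℝ} (hα : 0 < α) (ha : 0 < a) :
    IntegrableOn (wt α) (Ioi a) ∧ ∫ u in Ioi a, wt α u = Real.exp (-α * a) / a := by
  have hd : ∀ u ∈ Ici a, HasDerivAt (fun u => -(Real.exp (-α * u) / u)) (wt α u) u :=
    fun u hu => exp_div_deriv α (ha.trans_le hu)
  have hn : ∀ u ∈ Ioi a, 0 ≤ wt α u := fun u hu => wt_nonneg hα (ha.trans hu)
  have ht : Tendsto (fun u : ℝ => -(Real.exp (-α * u) / u)) atTop (𝓝 0) := by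
    simpa using (exp_div_tendsto hα).neg
  exact ⟨integrableOn_Ioi_deriv_of_nonneg' hd hn ht, by
    rw [integral_Ioi_of_hasDerivAt_of_nonneg' hd hn ht]; ring⟩

/-- main term integrand -/
def mt (α X u : ℝ) : ℝ := (Real.exp u - Real.exp X) * wt α u + Real.exp (-(α - 1) * u) / ((α - 1) * u ^ 2)

lemma mt_integral {α X : ℝ} (hα : 1 < α) (hX : 0 < X) :
    IntegrableOn (mt α X) (Ioi X) ∧ ∫ u in Ioi X, mt α X u = Real.exp (-(α - 1) * X) / ((α - 1) * X) := by
  have hβ : 0 < α - 1 := by linarith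
  set G : ℝ → ℝ := fun u => (Real.exp u - Real.exp X) * (-(Real.exp (-α * u) / u)) +
    (1 / (α - 1)) * (-(Real.exp (-(α - 1) * u) / u)) with hG
  have hd : ∀ u ∈ Ici X, HasDerivAt G (mt α X u) u := by
    intro u hu
    have hu0 : 0 < u := hX.trans_le hu
    have h1 := ((Real.hasDerivAt_exp u).sub_const (Real.exp X)).fun_mul (exp_div_deriv α hu0)
    have h2 := (exp_div_deriv (α - 1) hu0).const_mul (1 / (α - 1))
    refine (h1.fun_add h2).congr_deriv ?_
    have e : Real.exp (-(α - 1) * u) = Real.exp u * Real.exp (-α * u) := by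
      rw [← Real.exp_add]; congr 1; ring
    rw [mt, wt, wt, e]
    field_simp
    ring
  have hn : ∀ u ∈ Ioi X, 0 ≤ mt α X u := by
    intro u hu
    have hu0 : 0 < u := hX.trans hu
    have := wt_nonneg (show 0 < α by linarith) hu0
    have h2 : 0 ≤ Real.exp u - Real.exp X := sub_nonneg.2 (Real.exp_le_exp.2 (le_of_lt hu))
    rw [mt]
    positivity
  have ht : Tendsto G atTop (𝓝 0) := by
    have t1 := exp_div_tendsto (show 0 < α by linarith)
    have t2 := exp_div_tendsto hβ
    have := ((t1.const_mul (Real.exp X)).sub t2).sub (t2.const_mul (1 / (α - 1)))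
    simp only [mul_zero, sub_zero] at this
    refine this.congr fun u => ?_
    have e : Real.exp (-(α - 1) * u) = Real.exp u * Real.exp (-α * u) := by
      rw [← Real.exp_add]; congr 1; ring
    simp only [hG]
    rw [e]
    ring
  refine ⟨integrableOn_Ioi_deriv_of_nonneg' hd hn ht, ?_⟩
  rw [integral_Ioi_of_hasDerivAt_of_nonneg' hd hn ht, hG]
  simp only [sub_self, zero_mul]
  field_simp
  ring

open Classical in
lemma Dat.tail_eq (h : Dat Np Z δ B) {α x : ℝ} (hα : 1 < α) (hx : 1 < x) :
    ∑' p, (if x ≤ (Np p : ℝ) then (Np p : ℝ) ^ (-α) else 0) =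
      ∫ u in Ioi (Real.log x), (Th Np (Real.exp u) - ThL Np x) * wt α u := by
  haveI := h.countable
  have hx0 : 0 < x := by linarith
  have hα0 : 0 < α := by linarith
  have hlp : ∀ p, 0 < Real.log (Np p) := by
    intro p
    refine Real.log_pos ?_
    exact_mod_cast h.two_le p
  set F : P → ℝ → ℝ := fun p => if x ≤ (Np p : ℝ) then (Ici (Real.log (Np p))).indicator
    (fun u : ℝ => Real.log (Np p) * wt α u) else 0 with hF
  have hFint : ∀ p, Integrable (F p) := by
    intro p
    simp only [hF]
    split_ifs
    · rw [integrable_indicator_iff measurableSet_Ici, integrableOn_Ici_iff_integrableOn_Ioi]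
      exact (wt_integral hα0 (hlp p)).1.const_mul _
    · exact integrable_zero _ _ _
  have hFval : ∀ p, ∫ u, F p u = if x ≤ (Np p : ℝ) then (Np p : ℝ) ^ (-α) else 0 := by
    intro p
    have hp : (0:ℝ) < Np p := by exact_mod_cast h.pos p
    simp only [hF]
    split_ifs
    · rw [integral_indicator measurableSet_Ici, integral_Ici_eq_integral_Ioi, integral_const_mul,
        (wt_integral hα0 (hlp p)).2, Real.rpow_def_of_pos hp, mul_comm (-α)]
      have := (hlp p).ne'
      field_simp
    · simp
  have hFnn : ∀ p u, 0 ≤ F p u := by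
    intro p u
    simp only [hF]
    split_ifs
    · refine indicator_nonneg (fun v hv => ?_) u
      exact mul_nonneg (hlp p).le (wt_nonneg hα0 ((hlp p).trans_le hv))
    · simp
  have hsum : Summable fun p => ∫ u, ‖F p u‖ := by
    simp_rw [Real.norm_of_nonneg (hFnn _ _), hFval]
    refine Summable.of_nonneg_of_le (fun p => ?_) (fun p => ?_) (h.summ α hα)
    · split_ifs <;> positivity
    · split_ifs
      · exact le_rfl
      · positivity
  have hS := MeasureTheory.hasSum_integral_of_summable_integral_norm hFint hsum
  simp_rw [hFval] at hS
  rw [hS.tsum_eq, ← integral_Ici_eq_integral_Ioi, ← integral_indicator measurableSet_Ici]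
  congr 1
  ext u
  by_cases hu : u ∈ Ici (Real.log x)
  · rw [indicator_of_mem hu, Th, ThL, ← (h.th_summable _).tsum_sub (h.thL_summable x), ← tsum_mul_right]
    refine tsum_congr fun p => ?_
    have hp : (0:ℝ) < Np p := by exact_mod_cast h.pos p
    have hxu : x ≤ Real.exp u := by
      have : Real.log x ≤ u := hu
      rwa [Real.log_le_iff_le_exp hx0] at this
    simp only [hF]
    by_cases h1 : x ≤ (Np p : ℝ)
    · rw [if_pos h1, if_neg (not_lt.2 h1), indicator_apply, sub_zero]
      simp only [mem_Ici, Real.log_le_iff_le_exp hp]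
      split_ifs <;> simp
    · push Not at h1
      rw [if_neg (not_le.2 h1), if_pos h1, if_pos (h1.le.trans hxu)]
      simp
  · rw [indicator_of_notMem hu]
    have : ∀ p, F p u = 0 := by
      intro p
      simp only [hF]
      split_ifs with h1
      · refine indicator_of_notMem (fun h2 => hu ?_) _
        exact (Real.log_le_log hx0 h1).trans h2
      · rfl
    simp [this]

open Classical in
lemma Dat.tail (h : Dat Np Z δ B) {α : ℝ} (hα : 1 < α) : ∃ C : ℝ, ∀ x : ℝ, 2 ≤ x →
    |∑' p, (if x ≤ (Np p : ℝ) then (Np p : ℝ) ^ (-α) else 0) - 1 / ((α - 1) * x ^ (α - 1) * Real.log x)|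
      ≤ C / (x ^ (α - 1) * (Real.log x) ^ 2) := by
  obtain ⟨C, hC, hb⟩ := h.th_asymp
  have hβ : 0 < α - 1 := by linarith
  have hα0 : 0 < α := by linarith
  have hl2 : 0 < Real.log 2 := Real.log_pos (by norm_num)
  set Q := 2 * C * (α + 1 / Real.log 2) + 1 / (α - 1) with hQ
  refine ⟨Q / (α - 1), fun x hx => ?_⟩
  have hx1 : 1 < x := by linarith
  have hx0 : 0 < x := by linarith
  set X := Real.log x with hX
  have hX2 : Real.log 2 ≤ X := Real.log_le_log (by norm_num) hx
  have hX0 : 0 < X := hl2.trans_le hX2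
  have hxX : x = Real.exp X := (Real.exp_log hx0).symm
  have hxβ : x ^ (α - 1) = (Real.exp (-(α - 1) * X))⁻¹ := by
    rw [← Real.exp_neg, Real.rpow_def_of_pos hx0]; congr 1; ring
  rw [h.tail_eq hα hx1, hxβ]
  have hL := h.thL_asymp hb hx1
  obtain ⟨m1, m2⟩ := mt_integral hα hX0
  have hbd : ∀ u ∈ Ioi X, ‖(Th Np (Real.exp u) - ThL Np x) * wt α u - mt α X u‖ ≤
      Q / X ^ 2 * Real.exp (-(α - 1) * u) := by
    intro u hu
    have hu1 : X < u := hu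
    have hu0 : 0 < u := hX0.trans hu
    have hw0 := wt_nonneg hα0 hu0
    have hT := hb (Real.exp u) (by simpa using hu0)
    rw [Real.log_exp] at hT
    have hexu : x ≤ Real.exp u := by rw [hxX]; exact Real.exp_le_exp.2 hu1.le
    have a1 : |Th Np (Real.exp u) - ThL Np x - (Real.exp u - Real.exp X)| ≤ 2 * C * (Real.exp u / X) := by
      have b1 : C * (Real.exp u / u) ≤ C * (Real.exp u / X) := by gcongr
      have b2 : C * (x / X) ≤ C * (Real.exp u / X) := by gcongr
      rw [← hxX]
      rw [abs_le] at hT hL ⊢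
      constructor <;> linarith [hT.1, hT.2, hL.1, hL.2]
    have a2 : wt α u ≤ Real.exp (-α * u) * ((α + 1 / Real.log 2) / X) := by
      rw [wt]
      have c1 : α / u ≤ α / X := by gcongr
      have c2 : 1 / u ^ 2 ≤ 1 / Real.log 2 / X := by
        rw [div_div]
        have : Real.log 2 * X ≤ u ^ 2 := by nlinarith
        gcongr
      have c3 : α / u + 1 / u ^ 2 ≤ (α + 1 / Real.log 2) / X := by rw [add_div]; linarith
      exact mul_le_mul_of_nonneg_left c3 (Real.exp_pos _).le
    have e : Real.exp (-(α - 1) * u) = Real.exp u * Real.exp (-α * u) := by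
      rw [← Real.exp_add]; congr 1; ring
    have a3 : Real.exp (-(α - 1) * u) / ((α - 1) * u ^ 2) ≤ Real.exp (-(α - 1) * u) / ((α - 1) * X ^ 2) := by
      gcongr
    have a30 : 0 ≤ Real.exp (-(α - 1) * u) / ((α - 1) * u ^ 2) := by positivity
    have e4 : (Th Np (Real.exp u) - ThL Np x) * wt α u - mt α X u =
        (Th Np (Real.exp u) - ThL Np x - (Real.exp u - Real.exp X)) * wt α u - Real.exp (-(α - 1) * u) / ((α - 1) * u ^ 2) := by
      rw [mt]; ring
    rw [Real.norm_eq_abs, e4]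
    refine (abs_sub _ _).trans ?_
    rw [abs_mul, abs_of_nonneg hw0, abs_of_nonneg a30]
    calc _ ≤ 2 * C * (Real.exp u / X) * (Real.exp (-α * u) * ((α + 1 / Real.log 2) / X)) +
          Real.exp (-(α - 1) * u) / ((α - 1) * X ^ 2) :=
            add_le_add (mul_le_mul a1 a2 hw0 (by positivity)) a3
      _ = _ := by
        rw [hQ, e]; field_simp
  have hgi : IntegrableOn (fun u => Q / X ^ 2 * Real.exp (-(α - 1) * u)) (Ioi X) :=
    (integrableOn_exp_mul_Ioi (by linarith) X).const_mul _
  have hmeas : Measurable (fun u => (Th Np (Real.exp u) - ThL Np x) * wt α u - mt α X u) := by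
    have h1 : Measurable (fun u : ℝ => Th Np (Real.exp u)) := (h.th_mono.comp Real.exp_monotone).measurable
    have h2 : Measurable (wt α) := by unfold wt; fun_prop
    have h3 : Measurable (mt α X) := by unfold mt; fun_prop
    fun_prop
  have hdi : IntegrableOn (fun u => (Th Np (Real.exp u) - ThL Np x) * wt α u - mt α X u) (Ioi X) :=
    Integrable.mono' hgi hmeas.aestronglyMeasurable ((ae_restrict_iff' measurableSet_Ioi).2 (Eventually.of_forall hbd))
  have hadd : ∫ u in Ioi X, (Th Np (Real.exp u) - ThL Np x) * wt α u =
      (∫ u in Ioi X, ((Th Np (Real.exp u) - ThL Np x) * wt α u - mt α X u)) + ∫ u in Ioi X, mt α X u := by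
    rw [← integral_add hdi m1]
    congr 1
    ext u
    ring
  have hfin : ‖∫ u in Ioi X, ((Th Np (Real.exp u) - ThL Np x) * wt α u - mt α X u)‖ ≤
      ∫ u in Ioi X, Q / X ^ 2 * Real.exp (-(α - 1) * u) :=
    norm_integral_le_of_norm_le hgi ((ae_restrict_iff' measurableSet_Ioi).2 (Eventually.of_forall hbd))
  rw [integral_const_mul, integral_exp_mul_Ioi (by linarith), Real.norm_eq_abs] at hfin
  rw [hadd, m2]
  have e1 : 1 / ((α - 1) * (Real.exp (-(α - 1) * X))⁻¹ * X) = Real.exp (-(α - 1) * X) / ((α - 1) * X) := by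
    field_simp
  rw [e1, add_sub_cancel_right]
  refine hfin.trans (le_of_eq ?_)
  rw [neg_div_neg_eq]
  field_simp

end PIT
end An10

/-- For `α > 1`, `Σ_{N(p) ≥ x} N(p)^{-α} = 1/((α-1) x^{α-1} log x) +
O(1/(x^{α-1} (log x)²))`. -/
theorem tail_sum_primeIdeals_norm_rpow_neg
    (K : Type) [Field K] [NumberField K]
    (α : ℝ) (hα : 1 < α) :
    ∃ C : ℝ, ∀ x : ℝ, 2 ≤ x →
      |(∑' p : {p : Ideal (NumberField.RingOfIntegers K) //
          p.IsPrime ∧ x ≤ (Ideal.absNorm p : ℝ)},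
        (Ideal.absNorm p.1 : ℝ) ^ (-α)) -
          1 / ((α - 1) * x ^ (α - 1) * Real.log x)| ≤
      C / (x ^ (α - 1) * (Real.log x) ^ 2) := by
  classical
  obtain ⟨Z, δ, B, h⟩ := PIT.exists_dat K
  obtain ⟨C, hC⟩ := h.tail hα
  refine ⟨C, fun x hx => ?_⟩
  have key : (∑' p : {p : Ideal (NumberField.RingOfIntegers K) // p.IsPrime ∧ x ≤ (Ideal.absNorm p : ℝ)},
          (Ideal.absNorm p.1 : ℝ) ^ (-α)) =
      ∑' p : {p : Ideal (NumberField.RingOfIntegers K) // Prime p},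
        (if x ≤ (Ideal.absNorm p.1 : ℝ) then (Ideal.absNorm p.1 : ℝ) ^ (-α) else 0) := by
    have e1 := tsum_subtype {p : Ideal (NumberField.RingOfIntegers K) | p.IsPrime ∧ x ≤ (Ideal.absNorm p : ℝ)}
      (fun p => (Ideal.absNorm p : ℝ) ^ (-α))
    have e2 := tsum_subtype {p : Ideal (NumberField.RingOfIntegers K) | Prime p}
      (fun p => if x ≤ (Ideal.absNorm p : ℝ) then (Ideal.absNorm p : ℝ) ^ (-α) else 0)
    refine e1.trans (Eq.trans ?_ e2.symm)
    refine tsum_congr fun p => ?_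
    simp only [Set.indicator_apply, Set.mem_setOf_eq]
    by_cases h1 : x ≤ (Ideal.absNorm p : ℝ)
    · have hp : p ≠ ⊥ := by
        rintro rfl
        rw [Ideal.absNorm_bot] at h1
        norm_num at h1
        linarith
      simp only [h1, and_true, Ideal.prime_iff_isPrime hp, if_true]
    · simp [h1]
  rw [key]
  exact hC x hx

end
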